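/- arXiv:2404.15448 — 3 statements merged into one kernel-verified Lean document; each statement's English description precedes it below -/
import Mathlib

section
/- Let μ be a complex Poisson measure on ℝ^d, let E = ∪_n B(x_n, R_n) be a union of balls with R_n → ∞, and assume that for all distinct λ, λ' ∈ E ∩ supp μ one has |μ({λ})| ≥ c > 0 and |λ−λ'| ≥ β > 0, and that |μ̂|(B(0,r)) = O(r^d) as r → ∞. Then there exist N ∈ ℕ, points λ_1,…,λ_N ∈ supp μ, and nondegenerate (invertible) linear operators T_1,…,T_N on ℝ^d such that supp μ = ∪_{j=1}^N (T_j ℤ^d + λ_j) and μ = Σ_{j=1}^N Σ_{λ ∈ T_j ℤ^d + λ_j} Q_j(λ) δ_λ, where each Q_j is a Dirichlet series Q_j(x) = Σ_{ω ∈ Ω_j} q_ω^{(j)} e^{2πi x·ω} with q_ω^{(j)} ∈ ℂ, Σ_{ω ∈ Ω_j} |q_ω^{(j)}| < ∞, and Ω_j a bounded subset of ℝ^d. -/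
open MeasureTheory Metric Filter Topology Complex SchwartzMap Bornology
open scoped RealInnerProductSpace ENNReal

noncomputable section

/-- A continuous function `g` is *Bohr almost periodic* if for every `ε > 0` its set of
`ε`-almost periods is relatively dense. -/
def IsBohrAP {V : Type*} [SeminormedAddCommGroup V] (g : V → ℂ) : Prop :=
  Continuous g ∧ ∀ ε : ℝ, 0 < ε → ∃ L : ℝ, 0 < L ∧ ∀ x : V, ∃ τ : V,
    dist τ x < L ∧ ∀ y : V, ‖g (y + τ) - g y‖ < ε

/-- A pure point complex measure on `V`, described by its (countably supported) mass function. -/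
structure PPM (V : Type*) where
  mass : V → ℂ
  countable : (Function.support mass).Countable

namespace PPM

variable {V : Type*}

/-- The total variation of a pure point measure, evaluated on a set. -/
def var (μ : PPM V) (A : Set V) : ℝ≥0∞ := ∑' x : A, (‖μ.mass x‖₊ : ℝ≥0∞)

/-- Pairing of a pure point measure with a test function: `∫ φ dμ = Σ_x μ{x}·φ(x)`. -/
def pair (μ : PPM V) (φ : V → ℂ) : ℂ := ∑' x, μ.mass x * φ x

/-- Convolution `(μ ⋆ ψ)(t) = ∫ ψ(t - x) dμ(x)`. -/
def conv [SubtractionMonoid V] (μ : PPM V) (ψ : V → ℂ) (t : V) : ℂ :=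
  ∑' x, μ.mass x * ψ (t - x)

/-- A pure point measure is non-negative if each mass is a non-negative real number. -/
def Nonneg (μ : PPM V) : Prop := ∀ x, μ.mass x = (‖μ.mass x‖ : ℂ)

end PPM

/-- Euclidean space `ℝ^d`. -/
abbrev Ed (d : ℕ) := EuclideanSpace ℝ (Fin d)

variable {d : ℕ}

/-- Local finiteness: the total variation of every ball is finite. -/
def PPM.locFinite (μ : PPM (Ed d)) : Prop := ∀ r : ℝ, μ.var (ball 0 r) < ⊤

/-- The measure is a temperate distribution: it pairs (absolutely) with every Schwartz
function. -/
def PPM.temperate (μ : PPM (Ed d)) : Prop :=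
  ∀ φ : SchwartzMap (Ed d) ℂ, Summable fun x => μ.mass x * φ x

/-- `ν` is the distributional Fourier transform of `μ`: `μ(φ̂) = ν(φ)` on test functions. -/
def IsFT (μ ν : PPM (Ed d)) : Prop :=
  ∀ φ : SchwartzMap (Ed d) ℂ, HasCompactSupport φ →
    μ.pair ⇑(FourierTransform.fourierCLE ℂ (SchwartzMap (Ed d) ℂ) φ) = ν.pair ⇑φ

/-- A Poisson measure: a pure point measure which is a temperate distribution and whose
distributional Fourier transform is a pure point measure. -/
def IsPoisson (μ : PPM (Ed d)) : Prop :=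
  μ.locFinite ∧ μ.temperate ∧ ∃ ν : PPM (Ed d), ν.locFinite ∧ IsFT μ ν


/-- The shifted lattice `T ℤ^d + l`, where `T` is an invertible linear operator on `ℝ^d`. -/
def latt {d : ℕ} (T : Ed d ≃ₗ[ℝ] Ed d) (l : Ed d) : Set (Ed d) :=
  {x : Ed d | ∃ m : Fin d → ℤ, x = T ((WithLp.equiv 2 (Fin d → ℝ)).symm fun i => (m i : ℝ)) + l}

/-- The value at `x` of the Dirichlet series `Σ_ω q_ω e^{2πi x·ω}`. -/
def dser {d : ℕ} (q : ℕ → ℂ) (ω : ℕ → Ed d) (x : Ed d) : ℂ :=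
  ∑' i : ℕ, q i * Complex.exp (((2 * Real.pi * ⟪x, ω i⟫ : ℝ) : ℂ) * Complex.I)

section PartA

open AddMonoidAlgebra

abbrev TP (V : Type*) [AddCommGroup V] := AddMonoidAlgebra ℂ V

variable {V : Type*} [AddCommGroup V] {X : Type*} {e : X → Multiplicative V →* ℂ}

def evC (e : X → Multiplicative V →* ℂ) (x : X) : TP V →ₐ[ℂ] ℂ := AddMonoidAlgebra.lift ℂ ℂ V (e x)

def mo (t : V) : TP V := AddMonoidAlgebra.single t 1

def Lf (n : V → ℂ) : TP V →ₗ[ℂ] ℂ :=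
  (Finsupp.linearCombination ℂ n) ∘ₗ (AddMonoidAlgebra.coeffLinearEquiv ℂ).toLinearMap

lemma Lf_single (n : V → ℂ) (t : V) (a : ℂ) : Lf n (AddMonoidAlgebra.single t a) = a * n t := by
  simp [Lf]

lemma Lf_mo (n : V → ℂ) (t : V) : Lf n (mo t) = n t := by
  simp [mo, Lf_single]

lemma single_eq (t : V) (a : ℂ) : (AddMonoidAlgebra.single t a : TP V) = a • mo t := by
  simp [mo]

lemma evC_mo (x : X) (t : V) : evC e x (mo t) = e x (Multiplicative.ofAdd t) := by
  simp [evC, mo]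

lemma mo_mul (t u : V) : (mo t * mo u : TP V) = mo (t + u) := by
  simp [mo, AddMonoidAlgebra.single_mul_single]

lemma tp_induction {p : TP V → Prop} (P : TP V) (h0 : p 0) (ha : ∀ P Q, p P → p Q → p (P + Q))
    (hs : ∀ (t : V) (a : ℂ), p (a • mo t)) : p P := by
  refine AddMonoidAlgebra.induction_linear P h0 ha ?_
  intro t a
  rw [single_eq]; exact hs t a

lemma Lf_zero_fun (P : TP V) : Lf (0 : V → ℂ) P = 0 := by
  induction P using tp_induction with
  | h0 => simp
  | ha P Q h1 h2 => simp [h1, h2]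
  | hs t a => simp [Lf_mo]

lemma Lf_sub_fun (n n' : V → ℂ) (P : TP V) : Lf (n - n') P = Lf n P - Lf n' P := by
  induction P using tp_induction with
  | h0 => simp
  | ha P Q h1 h2 => simp only [map_add, h1, h2]; ring
  | hs t a => simp [Lf_mo, mul_sub]

def BB (e : X → Multiplicative V →* ℂ) (n : V → ℂ) (C : ℝ) : Prop :=
  0 ≤ C ∧ ∀ P : TP V, (∀ x, ‖evC e x P‖ ≤ 1) → (Lf n P).re ≤ C

lemma BB.norm {n : V → ℂ} {C K : ℝ} (h : BB e n C) (hK : 0 < K) {P : TP V}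
    (hP : ∀ x, ‖evC e x P‖ ≤ K) : ‖Lf n P‖ ≤ C * K := by
  by_cases hz : Lf n P = 0
  · rw [hz]; simp; exact mul_nonneg h.1 hK.le
  have hzn : 0 < ‖Lf n P‖ := norm_pos_iff.2 hz
  have h1 := h.2 (((starRingEnd ℂ) (Lf n P) / (‖Lf n P‖ * K : ℝ)) • P) (by
    intro x
    rw [map_smul, smul_eq_mul, norm_mul, norm_div, RCLike.norm_conj, Complex.norm_real,
      Real.norm_of_nonneg (by positivity), div_mul_eq_mul_div, div_le_one (by positivity)]
    exact mul_le_mul_of_nonneg_left (hP x) (norm_nonneg _))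
  rw [map_smul, smul_eq_mul, div_mul_eq_mul_div, mul_comm, Complex.mul_conj,
    Complex.normSq_eq_norm_sq, ← Complex.ofReal_div, Complex.ofReal_re,
    div_le_iff₀ (by positivity)] at h1
  have : ‖Lf n P‖ * ‖Lf n P‖ ≤ ‖Lf n P‖ * (C * K) := by nlinarith
  exact le_of_mul_le_mul_left this hzn

lemma norm_evC_mo (he : ∀ x t, ‖e x t‖ = 1) (x : X) (t : V) : ‖evC e x (mo t)‖ = 1 := by
  rw [evC_mo, he]

lemma BB.bound (he : ∀ x t, ‖e x t‖ = 1) {n : V → ℂ} {C : ℝ} (h : BB e n C) (t : V) :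
    ‖n t‖ ≤ C := by
  have := h.norm one_pos (P := mo t) (fun x => (norm_evC_mo he x t).le)
  simpa [Lf_mo] using this

lemma BB.sub {n n' : V → ℂ} {C C' : ℝ} (h : BB e n C) (h' : BB e n' C') :
    BB e (n - n') (C + C') := by
  refine ⟨add_nonneg h.1 h'.1, fun P hP => ?_⟩
  rw [Lf_sub_fun]
  have h1 := h.2 P hP
  have h2 := h'.2 (-P) (by simpa using hP)
  simp at h2 ⊢
  linarith

def nn (e : X → Multiplicative V →* ℂ) (n : V → ℂ) : ℝ := sInf {C | BB e n C}

lemma nn_nonneg (n : V → ℂ) : 0 ≤ nn e n := Real.sInf_nonneg (fun _ h => h.1)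

lemma BB_bddBelow (n : V → ℂ) : BddBelow {C | BB e n C} := ⟨0, fun _ h => h.1⟩

lemma nn_le {n : V → ℂ} {C : ℝ} (h : BB e n C) : nn e n ≤ C := csInf_le (BB_bddBelow n) h

lemma BB.nn {n : V → ℂ} {C : ℝ} (h : BB e n C) : BB e n (nn e n) := by
  refine ⟨nn_nonneg n, fun P hP => ?_⟩
  exact le_csInf ⟨C, h⟩ (fun b hb => hb.2 P hP)

lemma norming {n : V → ℂ} {δ : ℝ} (hδ : 0 < δ) :
    ∃ P : TP V, (∀ x, ‖evC e x P‖ ≤ 1) ∧ _root_.nn e n - δ < (Lf n P).re := by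
  by_contra! hcon
  by_cases hp : 0 ≤ _root_.nn e n - δ
  · have := nn_le (e := e) (n := n) (C := _root_.nn e n - δ) ⟨hp, hcon⟩
    linarith
  · have := hcon 0 (by simp)
    simp at this
    linarith

/-- ultrafilter limit -/
def ul (f : ℕ → ℂ) : ℂ := limUnder (hyperfilter ℕ : Filter ℕ) f

lemma ul_tendsto (f : ℕ → ℂ) (C : ℝ) (h : ∀ k, ‖f k‖ ≤ C) :
    Tendsto f (hyperfilter ℕ : Filter ℕ) (𝓝 (ul f)) := by
  have hc : IsCompact (closedBall (0 : ℂ) C) := isCompact_closedBall _ _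
  obtain ⟨x, -, hx⟩ := hc.ultrafilter_le_nhds ((hyperfilter ℕ).map f) (by
    simp only [le_principal_iff, Ultrafilter.mem_coe, Ultrafilter.mem_map]
    refine Filter.univ_mem' (fun k => ?_)
    simpa using h k)
  exact tendsto_nhds_limUnder ⟨x, hx⟩

def Tsh (n : V → ℂ) (s : ℕ → V) (t : V) : ℂ := ul fun k => n (s k + t)

def Esh (n : V → ℂ) (s : ℕ → V) : V → ℂ := Tsh (Tsh n (fun k => -s k)) s

lemma Tsh_tendsto {n : V → ℂ} {C : ℝ} (h : ∀ t, ‖n t‖ ≤ C) (s : ℕ → V) (t : V) :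
    Tendsto (fun k => n (s k + t)) (hyperfilter ℕ : Filter ℕ) (𝓝 (Tsh n s t)) :=
  ul_tendsto _ C (fun _ => h _)

lemma Tsh_bound {n : V → ℂ} {C : ℝ} (h : ∀ t, ‖n t‖ ≤ C) (s : ℕ → V) (t : V) :
    ‖Tsh n s t‖ ≤ C :=
  le_of_tendsto (Tsh_tendsto h s t).norm (Eventually.of_forall fun _ => h _)

lemma Lf_Tsh_tendsto {n : V → ℂ} {C : ℝ} (h : ∀ t, ‖n t‖ ≤ C) (s : ℕ → V) (P : TP V) :
    Tendsto (fun k => Lf n (mo (s k) * P)) (hyperfilter ℕ : Filter ℕ) (𝓝 (Lf (Tsh n s) P)) := by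
  induction P using tp_induction with
  | h0 => simp
  | ha P Q h1 h2 => simp only [mul_add, map_add]; exact h1.add h2
  | hs t a =>
    simp only [mul_smul_comm, mo_mul, map_smul, Lf_mo, smul_eq_mul]
    exact (Tsh_tendsto h s t).const_mul a

lemma BB.Tsh (he : ∀ x t, ‖e x t‖ = 1) {n : V → ℂ} {C : ℝ} (h : BB e n C) (s : ℕ → V) :
    BB e (Tsh n s) C := by
  refine ⟨h.1, fun P hP => ?_⟩
  refine le_of_tendsto ((Complex.continuous_re.tendsto _).comp
    (Lf_Tsh_tendsto (h.bound he) s P)) (Eventually.of_forall fun k => ?_)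
  refine h.2 _ (fun x => ?_)
  rw [map_mul, norm_mul, norm_evC_mo he, one_mul]; exact hP x

lemma BB.Esh (he : ∀ x t, ‖e x t‖ = 1) {n : V → ℂ} {C : ℝ} (h : BB e n C) (s : ℕ → V) :
    BB e (Esh n s) C := (h.Tsh he _).Tsh he _

lemma Esh_ev {n : V → ℂ} {C : ℝ} (h : ∀ t, ‖n t‖ ≤ C) (s : ℕ → V) (A : TP V) {δ : ℝ}
    (hδ : 0 < δ) : ∀ᶠ j in (hyperfilter ℕ : Filter ℕ), ∀ᶠ k in (hyperfilter ℕ : Filter ℕ),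
      ‖Lf n (mo (s j - s k) * A) - Lf (Esh n s) A‖ < δ := by
  have h1 := Lf_Tsh_tendsto (Tsh_bound h (fun k => -s k)) s A
  filter_upwards [Metric.tendsto_nhds.1 h1 (δ/2) (half_pos hδ)] with j hj
  have h2 := Lf_Tsh_tendsto h (fun k => -s k) (mo (s j) * A)
  filter_upwards [Metric.tendsto_nhds.1 h2 (δ/2) (half_pos hδ)] with k hk
  rw [← mul_assoc, mo_mul, show -s k + s j = s j - s k by abel] at hk
  rw [dist_eq_norm] at hj hk
  calc _ = ‖(Lf n (mo (s j - s k) * A) - Lf (Tsh n (fun k => -s k)) (mo (s j) * A)) +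
      (Lf (Tsh n (fun k => -s k)) (mo (s j) * A) - Lf (Esh n s) A)‖ := by congr 1; ring
    _ ≤ _ := norm_add_le _ _
    _ < δ := by unfold Esh; linarith

lemma select {F : Filter ℕ} [NeBot F] {p : ℕ → Prop} (hp : ∀ᶠ j in F, p j) {r : ℕ → ℕ → Prop}
    (hr : ∀ᶠ j in F, ∀ᶠ k in F, r j k) :
    ∃ i : ℕ → ℕ, (∀ j, p (i j)) ∧ ∀ j k, j < k → r (i j) (i k) := by
  obtain ⟨f, hf1, hf2⟩ := exists_seq_of_forall_finset_exists
    (fun j => p j ∧ ∀ᶠ k in F, r j k) r (by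
      intro s hs
      have h1 : ∀ᶠ k in F, ∀ x ∈ s, r x k := by
        rw [Filter.eventually_all_finset]
        exact fun x hx => (hs x hx).2
      obtain ⟨y, hy⟩ := ((hp.and hr).and h1).exists
      exact ⟨y, hy.1, hy.2⟩)
  exact ⟨f, fun j => (hf1 j).1, hf2⟩

end PartA

lemma hd_ofReal (x : ℝ) : HasDerivAt (fun x : ℝ => (x:ℂ)) 1 x := by
  simpa using (hasDerivAt_id x).ofReal_comp

lemma hilb_int0 : ∫ x in (0:ℝ)..(2 * Real.pi), ((x:ℂ) - Real.pi) = 0 := by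
  have : ∀ x ∈ Set.uIcc (0:ℝ) (2*Real.pi), HasDerivAt (fun x : ℝ => ((x:ℂ) - Real.pi)^2/2) ((x:ℂ) - Real.pi) x := by
    intro x _
    have h := (((hd_ofReal x).sub_const (Real.pi:ℂ)).pow 2).div_const 2
    refine h.congr_deriv ?_
    simp
  rw [intervalIntegral.integral_eq_sub_of_hasDerivAt this]
  · push_cast; ring
  · apply Continuous.intervalIntegrable; fun_prop

lemma hilb_int (m : ℤ) (hm : m ≠ 0) :
    ∫ x in (0:ℝ)..(2 * Real.pi), ((x:ℂ) - Real.pi) * Complex.exp ((m * x : ℝ) * I) = 2 * Real.pi / (m * I) := by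
  have hmc : (m : ℂ) ≠ 0 := by exact_mod_cast hm
  have : ∀ x ∈ Set.uIcc (0:ℝ) (2*Real.pi), HasDerivAt (fun x : ℝ => (((x:ℂ) - Real.pi)/(m * I) + 1 / (m:ℂ)^2) * Complex.exp ((m * x : ℝ) * I))
       (((x:ℂ) - Real.pi) * Complex.exp ((m * x : ℝ) * I)) x := by
    intro x _
    have h1 : HasDerivAt (fun x : ℝ => (((x:ℂ) - Real.pi)/(m * I) + 1 / (m:ℂ)^2)) (1 / (m * I)) x :=
      ((((hd_ofReal x).sub_const (Real.pi:ℂ))).div_const _).add_const _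
    have h2 : HasDerivAt (fun x : ℝ => ((m * x : ℝ) : ℂ) * I) (m * I) x := by
      have := ((hd_ofReal x).const_mul (m:ℂ)).mul_const I
      refine (this.congr_deriv (by simp)).congr_of_eventuallyEq (Eventually.of_forall fun y => ?_)
      simp
    have h := h1.mul h2.cexp
    refine h.congr_deriv ?_
    field_simp
    ring_nf
    simp only [I_sq]
    ring
  rw [intervalIntegral.integral_eq_sub_of_hasDerivAt this]
  · have : Complex.exp (((m * (2 * Real.pi) : ℝ) : ℂ) * I) = 1 := by
      rw [← Complex.exp_int_mul_two_pi_mul_I m]; congr 1; push_cast; ring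
    rw [this]
    simp
    field_simp
    ring
  · apply Continuous.intervalIntegrable; fun_prop

lemma hilb (z : ℕ → ℂ) (hz : ∀ k, ‖z k‖ = 1) (N : ℕ) :
    ‖∑ j ∈ Finset.range N, ∑ k ∈ Finset.range N, ((k:ℂ) - j)⁻¹ * (z k * (starRingEnd ℂ) (z j))‖
      ≤ Real.pi * N := by
  set S := ∑ j ∈ Finset.range N, ∑ k ∈ Finset.range N, ((k:ℂ) - j)⁻¹ * (z k * (starRingEnd ℂ) (z j))
  set F : ℝ → ℂ := fun x => ∑ k ∈ Finset.range N, z k * Complex.exp ((k * x : ℝ) * I) with hF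
  have hexp : ∀ x : ℝ, F x * (starRingEnd ℂ) (F x) = ∑ j ∈ Finset.range N, ∑ k ∈ Finset.range N,
      (z k * (starRingEnd ℂ) (z j)) * Complex.exp (((((k:ℤ) - (j:ℤ) : ℤ) : ℝ) * x : ℝ) * I) := by
    intro x
    rw [hF, map_sum, Finset.sum_mul_sum, Finset.sum_comm]
    refine Finset.sum_congr rfl fun j _ => Finset.sum_congr rfl fun k _ => ?_
    rw [map_mul, ← Complex.exp_conj, map_mul, Complex.conj_ofReal, Complex.conj_I]
    rw [mul_mul_mul_comm, ← Complex.exp_add]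
    congr 2; push_cast; ring
  have hFc : Continuous F := by fun_prop
  have hI1 : ∫ x in (0:ℝ)..(2 * Real.pi), ((x:ℂ) - Real.pi) * (F x * (starRingEnd ℂ) (F x))
      = 2 * Real.pi / I * S := by
    simp_rw [hexp, Finset.mul_sum]
    rw [intervalIntegral.integral_finsetSum]
    · rw [Finset.mul_sum]
      refine Finset.sum_congr rfl fun j _ => ?_
      rw [intervalIntegral.integral_finsetSum, Finset.mul_sum]
      · refine Finset.sum_congr rfl fun k _ => ?_
        have : ∀ x : ℝ, ((x:ℂ) - Real.pi) * ((z k * (starRingEnd ℂ) (z j)) * Complex.exp (((((k:ℤ) - (j:ℤ) : ℤ) : ℝ) * x : ℝ) * I)) = (z k * (starRingEnd ℂ) (z j)) * (((x:ℂ) - Real.pi) * Complex.exp (((((k:ℤ) - (j:ℤ) : ℤ) : ℝ) * x : ℝ) * I)) := by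
          intro x; ring
        simp_rw [this]
        rw [intervalIntegral.integral_const_mul]
        by_cases hkj : k = j
        · subst hkj
          simp [hilb_int0]
        · rw [hilb_int _ (by omega)]
          push_cast
          rw [div_mul_eq_div_div_swap, div_eq_mul_inv _ ((k:ℂ) - j)]
          ring
      · intro k _; apply Continuous.intervalIntegrable; fun_prop
    · intro k _; apply Continuous.intervalIntegrable; fun_prop
  have hI2 : ∫ x in (0:ℝ)..(2 * Real.pi), (F x * (starRingEnd ℂ) (F x)) = 2 * Real.pi * N := by
    simp_rw [hexp]
    rw [intervalIntegral.integral_finsetSum]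
    · have : ∀ j ∈ Finset.range N, (∫ x in (0:ℝ)..(2 * Real.pi), ∑ k ∈ Finset.range N,
        (z k * (starRingEnd ℂ) (z j)) * Complex.exp (((((k:ℤ) - (j:ℤ) : ℤ) : ℝ) * x : ℝ) * I)) = 2 * Real.pi := by
        intro j hj
        rw [intervalIntegral.integral_finsetSum]
        · rw [Finset.sum_eq_single_of_mem j hj]
          · simp [Complex.mul_conj, Complex.normSq_eq_norm_sq, hz]
          · intro k _ hkj
            rw [intervalIntegral.integral_const_mul]
            set m : ℤ := (k:ℤ) - j with hm
            have hmc : (m:ℂ) ≠ 0 := by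
              have : m ≠ 0 := by omega
              exact_mod_cast this
            have h3 : ∀ x : ℝ, Complex.exp (((m:ℝ) * x : ℝ) * I) = Complex.exp ((m * I) * x) := by
              intro x; congr 1; push_cast; ring
            simp_rw [h3]
            rw [integral_exp_mul_complex (by simp [hmc])]
            have : Complex.exp (m * I * ((2 * Real.pi : ℝ) : ℂ)) = 1 := by
              rw [← Complex.exp_int_mul_two_pi_mul_I m]; congr 1; push_cast; ring
            rw [this]; simp
        · intro k _; apply Continuous.intervalIntegrable; fun_prop
      rw [Finset.sum_congr rfl this]; simp; ring
    · intro k _; apply Continuous.intervalIntegrable; fun_prop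
  have hI3 : ∫ x in (0:ℝ)..(2 * Real.pi), ‖F x‖^2 = 2 * Real.pi * N := by
    have : ((∫ x in (0:ℝ)..(2 * Real.pi), ‖F x‖^2 : ℝ) : ℂ) = ((2 * Real.pi * N : ℝ) : ℂ) := by
      rw [← intervalIntegral.integral_ofReal]
      push_cast
      rw [← hI2]
      simp_rw [Complex.mul_conj, Complex.normSq_eq_norm_sq]
      push_cast; rfl
    exact_mod_cast this
  have h4 : ‖2 * Real.pi / I * S‖ ≤ ∫ x in (0:ℝ)..(2 * Real.pi), Real.pi * ‖F x‖^2 := by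
    rw [← hI1]
    refine intervalIntegral.norm_integral_le_of_norm_le (by positivity) ?_ ?_
    · refine Eventually.of_forall fun x hx => ?_
      rw [norm_mul, Complex.mul_conj, Complex.normSq_eq_norm_sq, Complex.norm_real, Real.norm_of_nonneg (sq_nonneg ‖F x‖)]
      gcongr
      rw [← Complex.ofReal_sub, Complex.norm_real, Real.norm_eq_abs, abs_le]
      constructor <;> linarith [hx.1, hx.2]
    · apply Continuous.intervalIntegrable; fun_prop
  rw [intervalIntegral.integral_const_mul, hI3, norm_mul, norm_div, Complex.norm_I, div_one, norm_mul,
    Complex.norm_real, Real.norm_of_nonneg Real.pi_pos.le] at h4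
  simp at h4
  have := Real.pi_pos
  have h5 : (2 * Real.pi) * ‖S‖ ≤ (2 * Real.pi) * (Real.pi * N) := by linarith
  exact le_of_mul_le_mul_left h5 (by positivity)

section PartA3
variable {V : Type*} [AddCommGroup V] {X : Type*} {e : X → Multiplicative V →* ℂ}

lemma evC_neg (he : ∀ x t, ‖e x t‖ = 1) (x : X) (t : V) :
    evC e x (mo (-t)) = (starRingEnd ℂ) (evC e x (mo t)) := by
  have h1 : evC e x (mo (-t)) * evC e x (mo t) = 1 := by
    rw [← map_mul, mo_mul, neg_add_cancel, evC_mo]; simp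
  have h2 : (starRingEnd ℂ) (evC e x (mo t)) * evC e x (mo t) = 1 := by
    rw [mul_comm, Complex.mul_conj, Complex.normSq_eq_norm_sq, norm_evC_mo he]; simp
  have h3 : evC e x (mo t) ≠ 0 := right_ne_zero_of_mul_eq_one h1
  exact mul_right_cancel₀ h3 (h1.trans h2.symm)

lemma harm_lower (M : ℕ) : (M : ℝ) * ∑ i ∈ Finset.range M, (1 : ℝ) / (i + 1) ≤
    ∑ j ∈ Finset.range (2 * M), ∑ k ∈ Finset.range (2 * M), |((k:ℝ) - j)⁻¹| := by
  calc _ = ∑ j ∈ Finset.range M, ∑ i ∈ Finset.range M, (1 : ℝ) / (i + 1) := by simp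
    _ ≤ ∑ j ∈ Finset.range M, ∑ k ∈ Finset.range (2 * M), |((k:ℝ) - j)⁻¹| := by
      refine Finset.sum_le_sum fun j hj => ?_
      have hj := Finset.mem_range.1 hj
      calc _ = ∑ k ∈ Finset.Ico (j+1) (j + 1 + M), |((k:ℝ) - j)⁻¹| := by
            rw [Finset.sum_Ico_eq_sum_range, Nat.add_sub_cancel_left]
            refine Finset.sum_congr rfl fun i _ => ?_
            push_cast
            rw [show (j:ℝ) + 1 + i - j = i + 1 by ring, abs_of_pos (by positivity), one_div]
        _ ≤ _ := by
            refine Finset.sum_le_sum_of_subset_of_nonneg ?_ (fun _ _ _ => abs_nonneg _)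
            intro k hk
            simp at hk ⊢; omega
    _ ≤ _ := by
      refine Finset.sum_le_sum_of_subset_of_nonneg ?_ (fun _ _ _ => by positivity)
      intro k hk
      simp at hk ⊢; omega

lemma Esh_comm (he : ∀ x t, ‖e x t‖ = 1) {n : V → ℂ} {C : ℝ} (h : BB e n C) (s : ℕ → V) :
    Esh n (fun k => - s k) = Esh n s := by
  funext t
  set a := Esh n s t with ha
  set b := Esh n (fun k => - s k) t with hb
  by_contra hab
  set ε := ‖b - a‖ / 4 with hε
  have hba : 0 < ‖b - a‖ := norm_pos_iff.2 (sub_ne_zero.2 hab)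
  have hεp : 0 < ε := by positivity
  have e1 := Esh_ev (h.bound he) s (mo t) hεp
  have e2 := Esh_ev (h.bound he) (fun k => - s k) (mo t) hεp
  obtain ⟨i, -, hi⟩ := select (F := (hyperfilter ℕ : Filter ℕ)) (p := fun _ => True) (by simp)
    (r := fun j k => ‖n (s j - s k + t) - a‖ < ε ∧ ‖n (s k - s j + t) - b‖ < ε) (by
      filter_upwards [e1, e2] with j h1 h2
      filter_upwards [h1, h2] with k h3 h4
      simp only [mo_mul, Lf_mo] at h3 h4
      exact ⟨h3, by rwa [show -s j - -s k = s k - s j by abel] at h4⟩)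
  set g : ℕ → ℕ → ℂ := fun j k => n (s (i k) - s (i j) + t) with hg
  have hg1 : ∀ j k, j < k → ‖g j k - b‖ < ε := fun j k hjk => (hi j k hjk).2
  have hg2 : ∀ j k, j < k → ‖g k j - a‖ < ε := fun j k hjk => (hi j k hjk).1
  -- main bound
  have key : ∀ N : ℕ, 0 < N → (∑ j ∈ Finset.range N, ∑ k ∈ Finset.range N, |((k:ℝ) - j)⁻¹|) * (2 * ε)
      ≤ 2 * (C * (Real.pi * N)) := by
    intro N hN
    set G : TP V := ∑ j ∈ Finset.range N, ∑ k ∈ Finset.range N,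
      ((k:ℂ) - j)⁻¹ • (mo (s (i k)) * mo (-s (i j)) * mo t) with hG
    have hGe : ∀ x, ‖evC e x G‖ ≤ Real.pi * N := by
      intro x
      have : evC e x G = (∑ j ∈ Finset.range N, ∑ k ∈ Finset.range N,
        ((k:ℂ) - j)⁻¹ * (evC e x (mo (s (i k))) * (starRingEnd ℂ) (evC e x (mo (s (i j)))))) * evC e x (mo t) := by
        rw [hG]
        simp only [map_sum, map_smul, map_mul, evC_neg he, smul_eq_mul, Finset.sum_mul]
        refine Finset.sum_congr rfl fun j _ => Finset.sum_congr rfl fun k _ => ?_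
        ring
      rw [this, norm_mul, norm_evC_mo he, mul_one]
      exact hilb (fun k => evC e x (mo (s (i k)))) (fun k => norm_evC_mo he _ _) N
    have hb1 := h.norm (by positivity) hGe
    have hLG : Lf n G = ∑ j ∈ Finset.range N, ∑ k ∈ Finset.range N, ((k:ℂ) - j)⁻¹ * g j k := by
      rw [hG]
      simp only [map_sum, map_smul, mo_mul, Lf_mo, smul_eq_mul, hg, sub_eq_add_neg]
    have hLG2 : Lf n G = ∑ j ∈ Finset.range N, ∑ k ∈ Finset.range N, ((j:ℂ) - k)⁻¹ * g k j := by
      rw [hLG, Finset.sum_comm]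
    have hdiff : ‖2 * Lf n G - ((∑ j ∈ Finset.range N, ∑ k ∈ Finset.range N, |((k:ℝ) - j)⁻¹| : ℝ) : ℂ) * (b - a)‖
        ≤ (∑ j ∈ Finset.range N, ∑ k ∈ Finset.range N, |((k:ℝ) - j)⁻¹|) * (2 * ε) := by
      rw [two_mul]
      nth_rewrite 1 [hLG]
      rw [hLG2]
      push_cast
      simp only [Finset.sum_mul]
      rw [← Finset.sum_add_distrib, ← Finset.sum_sub_distrib]
      refine (norm_sum_le _ _).trans (Finset.sum_le_sum fun j _ => ?_)
      rw [← Finset.sum_add_distrib, ← Finset.sum_sub_distrib]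
      refine (norm_sum_le _ _).trans (Finset.sum_le_sum fun k _ => ?_)
      rcases lt_trichotomy j k with hjk | hjk | hjk
      · have hjk' : (0:ℝ) < k - j := by simpa using hjk
        have : ((k:ℂ) - j)⁻¹ * g j k + ((j:ℂ) - k)⁻¹ * g k j - (|((k:ℝ) - j)⁻¹| : ℝ) * (b - a) =
          ((k:ℂ) - j)⁻¹ * ((g j k - b) - (g k j - a)) := by
          rw [abs_of_pos (by positivity), ← neg_sub (k:ℂ) j, inv_neg]; push_cast; ring
        rw [this, norm_mul]
        have h5 : ‖((k:ℂ) - j)⁻¹‖ = |((k:ℝ) - j)⁻¹| := by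
          rw [← Real.norm_eq_abs, ← Complex.norm_real]; push_cast; rfl
        rw [h5]
        gcongr
        refine (norm_sub_le _ _).trans ?_
        linarith [hg1 j k hjk, hg2 j k hjk]
      · subst hjk; simp
      · have hjk' : (k:ℝ) - j < 0 := by simpa using hjk
        have : ((k:ℂ) - j)⁻¹ * g j k + ((j:ℂ) - k)⁻¹ * g k j - (|((k:ℝ) - j)⁻¹| : ℝ) * (b - a) =
          ((k:ℂ) - j)⁻¹ * ((g j k - a) - (g k j - b)) := by
          rw [abs_of_neg (inv_lt_zero.2 hjk'), ← neg_sub (k:ℂ) j, inv_neg]; push_cast; ring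
        rw [this, norm_mul]
        have h5 : ‖((k:ℂ) - j)⁻¹‖ = |((k:ℝ) - j)⁻¹| := by
          rw [← Real.norm_eq_abs, ← Complex.norm_real]; push_cast; rfl
        rw [h5]
        gcongr
        refine (norm_sub_le _ _).trans ?_
        linarith [hg1 k j hjk, hg2 k j hjk]
    set S := ∑ j ∈ Finset.range N, ∑ k ∈ Finset.range N, |((k:ℝ) - j)⁻¹| with hS
    have hSn : 0 ≤ S := by positivity
    have h6 : ‖(S : ℂ) * (b - a)‖ = S * (4 * ε) := by
      rw [norm_mul, Complex.norm_real, Real.norm_of_nonneg hSn, hε]; ring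
    have h7 : ‖(S : ℂ) * (b - a)‖ ≤ ‖2 * Lf n G‖ + ‖2 * Lf n G - (S : ℂ) * (b - a)‖ := by
      have := norm_sub_le (2 * Lf n G) (2 * Lf n G - (S : ℂ) * (b - a))
      simpa using this
    have h8 : ‖2 * Lf n G‖ ≤ 2 * (C * (Real.pi * N)) := by
      rw [norm_mul]; simp; exact hb1
    rw [h6] at h7
    linarith
  have key2 : ∀ M : ℕ, 0 < M → (∑ i ∈ Finset.range M, (1 : ℝ) / (i + 1)) ≤ 2 * C * Real.pi / ε := by
    intro M hM
    have h1 := key (2 * M) (by omega)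
    have h2 := harm_lower M
    have hM' : (0:ℝ) < M := by exact_mod_cast hM
    rw [le_div_iff₀ hεp]
    have h3 := mul_le_mul_of_nonneg_right h2 (by positivity : 0 ≤ 2 * ε)
    have h4 := h3.trans h1
    push_cast at h4
    refine le_of_mul_le_mul_left ?_ hM'
    nlinarith
  have := Real.tendsto_sum_range_one_div_nat_succ_atTop
  obtain ⟨M, hM0, hM⟩ := ((eventually_gt_atTop 0).and (this.eventually_gt_atTop (2 * C * Real.pi / ε))).exists
  exact absurd (key2 M hM0) (not_le.2 hM)

lemma avg_close (g : ℕ → ℕ → ℂ) (a : ℂ) (η D : ℝ) (hη : 0 ≤ η) (N : ℕ) (hN : 0 < N)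
    (h1 : ∀ j k, j ≠ k → ‖g j k - a‖ ≤ η) (h2 : ∀ j, ‖g j j - a‖ ≤ D) :
    ‖((N:ℂ)⁻¹ * (N:ℂ)⁻¹) * (∑ j ∈ Finset.range N, ∑ k ∈ Finset.range N, g j k) - a‖ ≤ η + D / N := by
  have hN' : (0:ℝ) < N := by exact_mod_cast hN
  have hNc : (N:ℂ) ≠ 0 := by exact_mod_cast hN.ne'
  have h3 : ((N:ℂ)⁻¹ * (N:ℂ)⁻¹) * (∑ j ∈ Finset.range N, ∑ k ∈ Finset.range N, g j k) - a =
    ((N:ℂ)⁻¹ * (N:ℂ)⁻¹) * (∑ j ∈ Finset.range N, ∑ k ∈ Finset.range N, (g j k - a)) := by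
    simp only [Finset.sum_sub_distrib, Finset.sum_const, Finset.card_range, nsmul_eq_mul]
    field_simp
  have h4 : ‖∑ j ∈ Finset.range N, ∑ k ∈ Finset.range N, (g j k - a)‖ ≤ N * (N * η + D) := by
    calc _ ≤ ∑ j ∈ Finset.range N, (N * η + D) := by
          refine (norm_sum_le _ _).trans (Finset.sum_le_sum fun j hj => ?_)
          calc _ ≤ ∑ k ∈ Finset.range N, (η + if k = j then D else 0) := by
                refine (norm_sum_le _ _).trans (Finset.sum_le_sum fun k _ => ?_)
                split_ifs with hk
                · subst hk; linarith [h2 k]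
                · linarith [h1 j k (Ne.symm hk)]
            _ = _ := by
                rw [Finset.sum_add_distrib, Finset.sum_ite_eq' , if_pos hj]; simp
      _ = _ := by simp; ring
  rw [h3, norm_mul, norm_mul, norm_inv, Complex.norm_natCast]
  calc _ ≤ (N:ℝ)⁻¹ * (N:ℝ)⁻¹ * (N * (N * η + D)) := by gcongr
    _ = _ := by field_simp

lemma lemU (he : ∀ x t, ‖e x t‖ = 1) {n : V → ℂ} {C : ℝ} (h : BB e n C) (s : ℕ → V)
    (P Q R : TP V) {δ : ℝ} (hδ : 0 < δ) :
    ∃ u u' : TP V, (∀ x, evC e x u' = (starRingEnd ℂ) (evC e x u)) ∧ (∀ x, ‖evC e x u‖ ≤ 1) ∧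
      ‖Lf n (u * u' * P) - Lf (Esh n s) P‖ < δ ∧ ‖Lf n (u * u' * Q) - Lf (Esh n s) Q‖ < δ ∧
      ‖Lf n (u * R) - Lf (Tsh n s) R‖ < δ := by
  have hδ2 := half_pos hδ
  have e1 := fun A => Esh_ev (h.bound he) s A hδ2
  have e2 := fun A => Esh_ev (h.bound he) (fun k => - s k) A hδ2
  simp only [Esh_comm he h] at e2
  have e3 := Metric.tendsto_nhds.1 (Lf_Tsh_tendsto (h.bound he) s R) _ hδ2
  obtain ⟨i, hi1, hi2⟩ := select e3
    (r := fun j k => (‖Lf n (mo (s j - s k) * P) - Lf (Esh n s) P‖ < δ / 2 ∧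
      ‖Lf n (mo (s j - s k) * Q) - Lf (Esh n s) Q‖ < δ / 2) ∧
      (‖Lf n (mo (s k - s j) * P) - Lf (Esh n s) P‖ < δ / 2 ∧
      ‖Lf n (mo (s k - s j) * Q) - Lf (Esh n s) Q‖ < δ / 2)) (by
      filter_upwards [e1 P, e1 Q, e2 P, e2 Q] with j h1 h2 h3 h4
      filter_upwards [h1, h2, h3, h4] with k h1 h2 h3 h4
      rw [show -s j - -s k = s k - s j by abel] at h3 h4
      exact ⟨⟨h1, h2⟩, h3, h4⟩)
  set D := ‖Lf n P - Lf (Esh n s) P‖ + ‖Lf n Q - Lf (Esh n s) Q‖ with hD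
  obtain ⟨N, hN⟩ := exists_nat_gt (2 * D / δ)
  have hD0 : 0 ≤ D := by positivity
  have hN' : (0:ℝ) < N := lt_of_le_of_lt (by positivity) hN
  have hN0 : 0 < N := by exact_mod_cast hN'
  have hDN : D / N < δ / 2 := by
    rw [div_lt_iff₀ hδ] at hN
    rw [div_lt_iff₀ hN']; linarith
  set u : TP V := (N:ℂ)⁻¹ • ∑ j ∈ Finset.range N, mo (s (i j)) with hu
  set u' : TP V := (N:ℂ)⁻¹ • ∑ j ∈ Finset.range N, mo (-s (i j)) with hu'
  have huu : ∀ A, Lf n (u * u' * A) = ((N:ℂ)⁻¹ * (N:ℂ)⁻¹) *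
      ∑ j ∈ Finset.range N, ∑ k ∈ Finset.range N, Lf n (mo (s (i j) - s (i k)) * A) := by
    intro A
    rw [hu, hu', smul_mul_smul_comm, smul_mul_assoc, map_smul, smul_eq_mul, Finset.sum_mul_sum,
      Finset.sum_mul, map_sum]
    congr 1
    refine Finset.sum_congr rfl fun j _ => ?_
    rw [Finset.sum_mul, map_sum]
    simp only [mo_mul, sub_eq_add_neg]
  refine ⟨u, u', ?_, ?_, ?_, ?_, ?_⟩
  · intro x
    rw [hu, hu']
    simp only [map_smul, map_sum, evC_neg he, smul_eq_mul, map_mul]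
    simp
  · intro x
    rw [hu, map_smul, map_sum, norm_smul, norm_inv, Complex.norm_natCast]
    calc _ ≤ (N:ℝ)⁻¹ * ∑ j ∈ Finset.range N, 1 := by
          gcongr
          refine (norm_sum_le _ _).trans (Finset.sum_le_sum fun j _ => (norm_evC_mo he _ _).le)
      _ = 1 := by simp; field_simp
  · rw [huu]
    refine (avg_close _ _ (δ/2) D hδ2.le N hN0 ?_ ?_).trans_lt (by linarith)
    · intro j k hjk
      rcases lt_or_gt_of_ne hjk with hlt | hlt
      · exact (hi2 j k hlt).1.1.le
      · exact (hi2 k j hlt).2.1.le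
    · intro j
      have : (mo (0:V) : TP V) = 1 := rfl
      rw [sub_self, this, one_mul, hD]
      linarith [norm_nonneg (Lf n Q - Lf (Esh n s) Q)]
  · rw [huu]
    refine (avg_close _ _ (δ/2) D hδ2.le N hN0 ?_ ?_).trans_lt (by linarith)
    · intro j k hjk
      rcases lt_or_gt_of_ne hjk with hlt | hlt
      · exact (hi2 j k hlt).1.2.le
      · exact (hi2 k j hlt).2.2.le
    · intro j
      have : (mo (0:V) : TP V) = 1 := rfl
      rw [sub_self, this, one_mul, hD]
      linarith [norm_nonneg (Lf n P - Lf (Esh n s) P)]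
  · have h1 : Lf n (u * R) - Lf (Tsh n s) R = (N:ℂ)⁻¹ * ∑ j ∈ Finset.range N,
        (Lf n (mo (s (i j)) * R) - Lf (Tsh n s) R) := by
      rw [hu, smul_mul_assoc, map_smul, Finset.sum_mul, map_sum, smul_eq_mul]
      have hNc : (N:ℂ) ≠ 0 := by exact_mod_cast hN0.ne'
      simp only [Finset.sum_sub_distrib, Finset.sum_const, Finset.card_range, nsmul_eq_mul]
      field_simp
    rw [h1, norm_mul, norm_inv, Complex.norm_natCast]
    calc _ ≤ (N:ℝ)⁻¹ * ∑ j ∈ Finset.range N, δ / 2 := by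
          gcongr
          refine (norm_sum_le _ _).trans (Finset.sum_le_sum fun j _ => ?_)
          have := hi1 j
          rw [dist_eq_norm] at this; exact this.le
      _ = δ / 2 := by simp; field_simp
      _ < δ := by linarith

lemma re_ge {z w : ℂ} {δ : ℝ} (h : ‖z - w‖ < δ) : w.re - δ < z.re := by
  have := (abs_le.1 (Complex.abs_re_le_norm (z - w))).1
  simp at this; linarith

lemma re_le {z w : ℂ} {δ : ℝ} (h : ‖z - w‖ < δ) : z.re < w.re + δ := by
  have := (abs_le.1 (Complex.abs_re_le_norm (z - w))).2
  simp at this; linarith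

lemma F3 (he : ∀ x t, ‖e x t‖ = 1) {n : V → ℂ} {C : ℝ} (h : BB e n C) (s : ℕ → V) :
    nn e (Esh n s) + nn e (n - Esh n s) ≤ nn e n := by
  refine le_of_forall_pos_le_add fun ε hε => ?_
  obtain ⟨P, hP1, hP2⟩ := norming (e := e) (n := Esh n s) (δ := ε/4) (by positivity)
  obtain ⟨Q, hQ1, hQ2⟩ := norming (e := e) (n := n - Esh n s) (δ := ε/4) (by positivity)
  obtain ⟨u, u', h1, h2, h3, h4, -⟩ := lemU he h s P Q 0 (δ := ε/4) (by positivity)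
  have h5 := h.nn.2 (u * u' * P + (Q - u * u' * Q)) (by
    intro x
    have : evC e x (u * u' * P + (Q - u * u' * Q)) = ((‖evC e x u‖^2 : ℝ) : ℂ) * evC e x P +
      ((1 - ‖evC e x u‖^2 : ℝ) : ℂ) * evC e x Q := by
      simp only [map_add, map_sub, map_mul, h1, Complex.mul_conj, Complex.normSq_eq_norm_sq]
      push_cast; ring
    have h6 : ‖evC e x u‖^2 ≤ 1 := by
      have := h2 x; have := norm_nonneg (evC e x u); nlinarith
    rw [this]
    refine (norm_add_le _ _).trans ?_
    rw [norm_mul, norm_mul, Complex.norm_real, Complex.norm_real, Real.norm_of_nonneg (by positivity),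
      Real.norm_of_nonneg (by linarith)]
    nlinarith [hP1 x, hQ1 x, norm_nonneg (evC e x P), norm_nonneg (evC e x Q), sq_nonneg ‖evC e x u‖])
  rw [Lf_sub_fun] at hQ2
  simp only [map_add, map_sub, Complex.add_re, Complex.sub_re] at h5 hQ2
  have := re_ge h3
  have := re_le h4
  linarith

lemma F4 (he : ∀ x t, ‖e x t‖ = 1) {n : V → ℂ} {C : ℝ} (h : BB e n C) (s : ℕ → V)
    (h0 : Esh n s = 0) : Tsh n s = 0 := by
  by_contra hT
  obtain ⟨t, ht⟩ := Function.ne_iff.1 hT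
  simp only [Pi.zero_apply] at ht
  set ρ := ‖Tsh n s t‖ with hρ
  have hρ0 : 0 < ρ := norm_pos_iff.2 ht
  set R : TP V := ((starRingEnd ℂ) (Tsh n s t) / ρ) • mo t with hR
  have hRL : Lf (Tsh n s) R = ρ := by
    rw [hR, map_smul, Lf_mo, smul_eq_mul, div_mul_eq_mul_div, mul_comm, Complex.mul_conj,
      Complex.normSq_eq_norm_sq, ← hρ]
    have : (ρ:ℂ) ≠ 0 := by exact_mod_cast hρ0.ne'
    push_cast; field_simp
  have hR1 : ∀ x, ‖evC e x R‖ = 1 := by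
    intro x
    rw [hR, map_smul, norm_smul, norm_evC_mo he, norm_div, RCLike.norm_conj, Complex.norm_real,
      Real.norm_of_nonneg hρ0.le, ← hρ]; field_simp
  set η := ρ / (nn e n + 1) with hη
  have hnn := nn_nonneg (e := e) n
  have hη0 : 0 < η := by positivity
  have hηn : η * nn e n ≤ ρ := by
    rw [hη, div_mul_eq_mul_div, div_le_iff₀ (by positivity)]; nlinarith
  set δ := η * ρ / (4 * (η + 2)) with hδ
  have hδ0 : 0 < δ := by positivity
  have hδ1 : δ * (η + 2) = η * ρ / 4 := by rw [hδ]; field_simp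
  obtain ⟨Q, hQ1, hQ2⟩ := norming (e := e) (n := n) (δ := δ) hδ0
  obtain ⟨u, u', h1, h2, -, h4, h5⟩ := lemU he h s 0 Q R hδ0
  rw [h0, Lf_zero_fun] at h4
  rw [hRL] at h5
  have h6 := h.nn.norm (P := Q - u * u' * Q + (η:ℂ) • (u * R)) (K := 1 + η^2/4) (by positivity) (by
    intro x
    have : evC e x (Q - u * u' * Q + (η:ℂ) • (u * R)) =
      ((1 - ‖evC e x u‖^2 : ℝ) : ℂ) * evC e x Q + (η:ℂ) * (evC e x u * evC e x R) := by
      simp only [map_add, map_sub, map_mul, map_smul, h1, Complex.mul_conj, Complex.normSq_eq_norm_sq, smul_eq_mul]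
      push_cast; ring
    have h6 : ‖evC e x u‖^2 ≤ 1 := by
      have := h2 x; have := norm_nonneg (evC e x u); nlinarith
    rw [this]
    refine (norm_add_le _ _).trans ?_
    rw [norm_mul, norm_mul, norm_mul, hR1, Complex.norm_real, Complex.norm_real, Real.norm_of_nonneg hη0.le,
      Real.norm_of_nonneg (by linarith)]
    nlinarith [hQ1 x, norm_nonneg (evC e x Q), sq_nonneg (‖evC e x u‖ - η/2)])
  have h7 := (Complex.re_le_norm _).trans h6
  simp only [map_add, map_sub, map_smul, Complex.add_re, Complex.sub_re, smul_eq_mul, Complex.re_ofReal_mul] at h7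
  have h8 := re_ge h5
  have h9 := re_le h4
  simp at h8 h9
  have h10 : η * (ρ - δ) ≤ η * (Lf n (u * R)).re := by gcongr
  have h11 : nn e n * (1 + η^2/4) ≤ nn e n + η * ρ / 4 := by nlinarith
  nlinarith

lemma F2 (he : ∀ x t, ‖e x t‖ = 1) {n : V → ℂ} {C : ℝ} (h : BB e n C) (s : ℕ → V)
    (hnn : nn e (Tsh n s) = nn e n) {ε : ℝ} (hε : 0 < ε) :
    ∃ j k, j < k ∧ ∀ t, ‖n (s j + t) - n (s k + t)‖ ≤ ε := by
  have hn0 := nn_nonneg (e := e) n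
  set η := ε / (2 * (nn e n + 1)) with hη
  have hη0 : 0 < η := by positivity
  have hηn : η * nn e n ≤ ε / 2 := by
    rw [hη, div_mul_eq_mul_div, div_le_iff₀ (by positivity)]; nlinarith
  set δ := η * ε / 8 with hδ
  have hδ0 : 0 < δ := by positivity
  obtain ⟨P, hP1, hP2⟩ := norming (e := e) (n := Tsh n s) (δ := δ) hδ0
  rw [hnn] at hP2
  have hev := Metric.tendsto_nhds.1 (Lf_Tsh_tendsto (h.bound he) s P) _ hδ0
  obtain ⟨j, hj⟩ := hev.exists
  have hgt : ∀ᶠ k in (hyperfilter ℕ : Filter ℕ), j < k := by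
    have := hyperfilter_le_cofinite (α := ℕ)
    rw [Nat.cofinite_eq_atTop] at this
    exact this (eventually_gt_atTop j)
  obtain ⟨k, hk, hjk⟩ := (hev.and hgt).exists
  refine ⟨j, k, hjk, fun t => ?_⟩
  rw [dist_eq_norm] at hj hk
  by_cases hz : n (s j + t) - n (s k + t) = 0
  · rw [hz]; simpa using hε.le
  set z := n (s j + t) - n (s k + t) with hzdef
  have hzn : 0 < ‖z‖ := norm_pos_iff.2 hz
  set ζ : ℂ := (starRingEnd ℂ) z / ‖z‖ with hζ
  have hζ1 : ‖ζ‖ = 1 := by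
    rw [hζ, norm_div, RCLike.norm_conj, Complex.norm_real, Real.norm_of_nonneg hzn.le]; field_simp
  have hζ2 : ζ * z = ‖z‖ := by
    rw [hζ, div_mul_eq_mul_div, mul_comm, Complex.mul_conj, Complex.normSq_eq_norm_sq]
    have : (‖z‖:ℂ) ≠ 0 := by exact_mod_cast hzn.ne'
    push_cast; field_simp
  have h6 := h.nn.norm (P := (1/2:ℂ) • (mo (s j) * P + mo (s k) * P) +
      ((η/2 : ℝ) * ζ : ℂ) • (mo (s j) * mo t - mo (s k) * mo t)) (K := 1 + η^2/2) (by positivity) (by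
    intro x
    set a := evC e x (mo (s j)) with ha
    set b := evC e x (mo (s k)) with hb
    have ha1 : ‖a‖ = 1 := norm_evC_mo he _ _
    have hb1 : ‖b‖ = 1 := norm_evC_mo he _ _
    have hpar := parallelogram_law_with_norm ℝ a b
    rw [ha1, hb1] at hpar
    have : evC e x ((1/2:ℂ) • (mo (s j) * P + mo (s k) * P) +
      ((η/2 : ℝ) * ζ : ℂ) • (mo (s j) * mo t - mo (s k) * mo t)) =
      (1/2:ℂ) * ((a + b) * evC e x P) + ((η/2 : ℝ) * ζ : ℂ) * ((a - b) * evC e x (mo t)) := by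
      simp only [map_add, map_sub, map_mul, map_smul, smul_eq_mul, ← ha, ← hb]; ring
    rw [this]
    refine (norm_add_le _ _).trans ?_
    rw [norm_mul, norm_mul, norm_mul, norm_mul, norm_mul, norm_evC_mo he, hζ1, Complex.norm_real,
      Real.norm_of_nonneg (by positivity)]
    have h12 : ‖(1/2:ℂ)‖ = 1/2 := by simp
    simp only [h12]
    have h13 : ‖a + b‖ * ‖evC e x P‖ ≤ ‖a + b‖ :=
      mul_le_of_le_one_right (norm_nonneg _) (hP1 x)
    have hA := norm_nonneg (a + b)
    have hB := norm_nonneg (a - b)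
    set A := ‖a + b‖
    set B := ‖a - b‖
    have h14 : (A / 2 + η * (B / 2))^2 ≤ (1 + η^2/2)^2 := by
      nlinarith [sq_nonneg (η * (A/2) - B/2), sq_nonneg (η^2)]
    have h15 := abs_le_of_sq_le_sq' h14 (by positivity)
    linarith [h15.2])
  have h7 := (Complex.re_le_norm _).trans h6
  have h8 : ((η/2 : ℝ) * ζ : ℂ) * (n (s j + t) - n (s k + t)) = ((η/2 * ‖z‖ : ℝ) : ℂ) := by
    rw [mul_assoc, ← hzdef, hζ2]; push_cast; ring
  simp only [map_add, map_sub, map_smul, smul_eq_mul, mo_mul, Lf_mo, h8] at h7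
  rw [Complex.add_re, Complex.ofReal_re, show (1/2:ℂ) = ((1/2:ℝ):ℂ) by push_cast; rfl, Complex.re_ofReal_mul, Complex.add_re] at h7
  have h9 := re_ge hj
  have h10 := re_ge hk
  have h11 : nn e n * (1 + η^2/2) ≤ nn e n + η * ε / 4 := by nlinarith
  have h12 : η * ‖z‖ ≤ η * ε := by nlinarith
  exact le_of_mul_le_mul_left h12 hη0

end PartA3

section PartA4
variable {V : Type*} [AddCommGroup V] {X : Type*} {e : X → Multiplicative V →* ℂ}

def SK (K : ℕ) : Set (ℂ × ℂ) := ⋃ k ∈ Finset.Icc (-(K:ℤ)) K, {p | p.1 = k * p.2}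

lemma SK_closed (K : ℕ) : IsClosed (SK K) := by
  refine isClosed_biUnion_finset fun k _ => ?_
  exact isClosed_eq (by fun_prop) (by fun_prop)

lemma mem_SK {K : ℕ} {a b : ℂ} : (a, b) ∈ SK K ↔ ∃ k : ℤ, |k| ≤ K ∧ a = k * b := by
  simp [SK, abs_le, and_assoc]

lemma SK_Tsh {n m : V → ℂ} {C C' : ℝ} (hn : ∀ t, ‖n t‖ ≤ C) (hm : ∀ t, ‖m t‖ ≤ C') {K : ℕ}
    (h : ∀ t, (n t, m t) ∈ SK K) (s : ℕ → V) (t : V) : (Tsh n s t, Tsh m s t) ∈ SK K :=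
  (SK_closed K).mem_of_tendsto ((Tsh_tendsto hn s t).prodMk_nhds (Tsh_tendsto hm s t))
    (Eventually.of_forall fun _ => h _)

def Mcl (e : X → Multiplicative V →* ℂ) (m n : V → ℂ) : Prop :=
  (∃ C, BB e n C) ∧ ∀ t, ∃ k : ℤ, n t = k * m t

lemma Mcl_Esh (he : ∀ x t, ‖e x t‖ = 1) {m : V → ℂ} {C : ℝ} (hC : BB e m C) {c : ℝ} (hc : 0 < c)
    (hm : ∀ t, m t = 0 ∨ c ≤ ‖m t‖) (HAP : ∀ s t, Esh m s t = 0 ∨ Esh m s t = m t)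
    {n : V → ℂ} (hn : Mcl e m n) (s : ℕ → V) : Mcl e m (Esh n s) := by
  obtain ⟨⟨C', hC'⟩, hk⟩ := hn
  refine ⟨⟨C', hC'.Esh he s⟩, ?_⟩
  obtain ⟨K, hK⟩ := exists_nat_ge (C' / c)
  have h1 : ∀ t, (n t, m t) ∈ SK K := by
    intro t
    rw [mem_SK]
    rcases hm t with h0 | h0
    · obtain ⟨k, hk⟩ := hk t
      exact ⟨0, by simp, by rw [hk, h0]; simp⟩
    · obtain ⟨k, hk⟩ := hk t
      refine ⟨k, ?_, hk⟩
      have h2 := hC'.bound he t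
      rw [hk, norm_mul, Complex.norm_intCast] at h2
      have h3 : |(k:ℝ)| * c ≤ C' := (mul_le_mul_of_nonneg_left h0 (abs_nonneg _)).trans h2
      have h4 : |(k:ℝ)| ≤ K := ((le_div_iff₀ hc).2 h3).trans hK
      exact_mod_cast h4
  have h2 := SK_Tsh (hC'.bound he) (hC.bound he) h1 (fun k => - s k)
  have h3 := SK_Tsh (Tsh_bound (hC'.bound he) _) (Tsh_bound (hC.bound he) _) h2 s
  intro t
  obtain ⟨k, -, hk⟩ := mem_SK.1 (h3 t)
  rcases HAP s t with h | h
  · refine ⟨0, ?_⟩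
    have : Esh n s t = k * Esh m s t := hk
    rw [this, h]; simp
  · refine ⟨k, ?_⟩
    have : Esh n s t = k * Esh m s t := hk
    rw [this, h]

lemma Mcl_lower {m : V → ℂ} {c : ℝ}
    (hm : ∀ t, m t = 0 ∨ c ≤ ‖m t‖)
    {n : V → ℂ} (hn : Mcl e m n) (t : V) : n t = 0 ∨ c ≤ ‖n t‖ := by
  obtain ⟨k, hk⟩ := hn.2 t
  by_cases hk0 : k = 0
  · left; rw [hk, hk0]; simp
  rcases hm t with h | h
  · left; rw [hk, h]; simp
  · right
    rw [hk, norm_mul, Complex.norm_intCast]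
    have : (1:ℝ) ≤ |(k:ℝ)| := by exact_mod_cast Int.one_le_abs hk0
    nlinarith [norm_nonneg (m t)]

lemma Mcl_nn (he : ∀ x t, ‖e x t‖ = 1) {m : V → ℂ} {c : ℝ}
    (hm : ∀ t, m t = 0 ∨ c ≤ ‖m t‖)
    {n : V → ℂ} (hn : Mcl e m n) (h0 : n ≠ 0) : c ≤ nn e n := by
  obtain ⟨t, ht⟩ := Function.ne_iff.1 h0
  obtain ⟨C, hC⟩ := hn.1
  rcases Mcl_lower hm hn t with h | h
  · exact absurd h ht
  · exact h.trans (hC.nn.bound he t)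

lemma Mcl_sub {m n n' : V → ℂ} (hn : Mcl e m n) (hn' : Mcl e m n') : Mcl e m (n - n') := by
  obtain ⟨⟨C, hC⟩, h1⟩ := hn
  obtain ⟨⟨C', hC'⟩, h2⟩ := hn'
  refine ⟨⟨_, hC.sub hC'⟩, fun t => ?_⟩
  obtain ⟨k, hk⟩ := h1 t
  obtain ⟨k', hk'⟩ := h2 t
  exact ⟨k - k', by simp [hk, hk', sub_mul]⟩

lemma Mcl_decomp (he : ∀ x t, ‖e x t‖ = 1) {m : V → ℂ} {C : ℝ} (hC : BB e m C) {c : ℝ} (hc : 0 < c)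
    (hm : ∀ t, m t = 0 ∨ c ≤ ‖m t‖) (HAP : ∀ s t, Esh m s t = 0 ∨ Esh m s t = m t) (N : ℕ) :
    ∀ n : V → ℂ, Mcl e m n → nn e n < (N + 1) * c → ∃ l : List (V → ℂ), l.sum = n ∧
      ∀ f ∈ l, Mcl e m f ∧ ∀ s, Esh f s = 0 ∨ Esh f s = f := by
  induction N with
  | zero =>
    intro n hn hlt
    have : n = 0 := by
      by_contra h
      have := Mcl_nn he hm hn h
      simp at hlt; linarith
    exact ⟨[], by simp [this], by simp⟩
  | succ N ih =>
    intro n hn hlt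
    by_cases hind : ∀ s, Esh n s = 0 ∨ Esh n s = n
    · exact ⟨[n], by simp, by simpa using ⟨hn, hind⟩⟩
    push Not at hind
    obtain ⟨s, h1, h2⟩ := hind
    have hE := Mcl_Esh he hC hc hm HAP hn s
    have hS := Mcl_sub hn hE
    have h3 := Mcl_nn he hm hE h1
    have h4 := Mcl_nn he hm hS (sub_ne_zero.2 (Ne.symm h2))
    obtain ⟨C', hC'⟩ := hn.1
    have h5 := F3 he hC' s
    push_cast at hlt
    obtain ⟨l1, h11, h12⟩ := ih _ hE (by linarith)
    obtain ⟨l2, h21, h22⟩ := ih _ hS (by linarith)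
    refine ⟨l1 ++ l2, by rw [List.sum_append, h11, h21]; abel, ?_⟩
    intro f hf
    rcases List.mem_append.1 hf with h | h
    · exact h12 f h
    · exact h22 f h

theorem partA (he : ∀ x t, ‖e x t‖ = 1) {m : V → ℂ} {C : ℝ} (hC : BB e m C) {c : ℝ} (hc : 0 < c)
    (hm : ∀ t, m t = 0 ∨ c ≤ ‖m t‖) (HAP : ∀ s t, Esh m s t = 0 ∨ Esh m s t = m t) :
    ∃ l : List (V → ℂ), l.sum = m ∧ ∀ f ∈ l, (∀ t, m t = 0 → f t = 0) ∧
      ∀ s : ℕ → V, (∀ k, f (s k) ≠ 0) → ∃ j k, j < k ∧ ∀ t, f (t + (s k - s j)) = 0 ↔ f t = 0 := by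
  obtain ⟨N, hN⟩ := exists_nat_gt (nn e m / c)
  rw [div_lt_iff₀ hc] at hN
  obtain ⟨l, h1, h2⟩ := Mcl_decomp he hC hc hm HAP N m ⟨⟨C, hC⟩, fun t => ⟨1, by simp⟩⟩ (by nlinarith)
  refine ⟨l, h1, fun f hf => ?_⟩
  obtain ⟨hM, hI⟩ := h2 f hf
  refine ⟨fun t ht => ?_, fun s hs => ?_⟩
  · obtain ⟨k, hk⟩ := hM.2 t
    rw [hk, ht]; simp
  obtain ⟨C', hC'⟩ := hM.1
  have hT : Tsh f s 0 ≠ 0 := by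
    have h3 := (Tsh_tendsto (hC'.bound he) s 0).norm
    have : c ≤ ‖Tsh f s 0‖ := by
      refine ge_of_tendsto h3 (Eventually.of_forall fun k => ?_)
      rw [add_zero]
      exact (Mcl_lower hm hM (s k)).resolve_left (hs k)
    exact norm_pos_iff.1 (hc.trans_le this)
  have hE : Esh f s = f := by
    refine (hI s).resolve_left fun h => hT ?_
    rw [F4 he hC' s h]; rfl
  have hle1 : nn e (Tsh f (fun k => - s k)) ≤ nn e f := nn_le (hC'.nn.Tsh he _)
  have hle2 : nn e f ≤ nn e (Tsh f (fun k => - s k)) := by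
    conv_lhs => rw [← hE]
    exact nn_le (BB.Tsh he ((hC'.Tsh he _).nn) _)
  obtain ⟨j, k, hjk, h⟩ := F2 he hC' _ (le_antisymm hle1 hle2) (half_pos hc)
  refine ⟨j, k, hjk, fun t => ?_⟩
  have h4 := h (t + s k)
  rw [show -s j + (t + s k) = t + (s k - s j) by abel, show -s k + (t + s k) = t by abel] at h4
  constructor
  · intro h0
    rw [h0, zero_sub, norm_neg] at h4
    refine (Mcl_lower hm hM t).resolve_right fun h5 => ?_
    linarith
  · intro h0
    rw [h0, sub_zero] at h4
    refine (Mcl_lower hm hM _).resolve_right fun h5 => ?_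
    linarith

end PartA4

section PartB1
variable {d : ℕ}

lemma var_eq (μ : PPM (Ed d)) (A : Set (Ed d)) :
    μ.var A = ∑' x, A.indicator (fun x => (‖μ.mass x‖₊ : ℝ≥0∞)) x :=
  tsum_subtype A (fun x => (‖μ.mass x‖₊ : ℝ≥0∞))

lemma var_mono (μ : PPM (Ed d)) {A B : Set (Ed d)} (h : A ⊆ B) : μ.var A ≤ μ.var B := by
  rw [var_eq, var_eq]
  exact ENNReal.tsum_le_tsum fun x => Set.indicator_le_indicator_of_subset h (fun _ => zero_le) x

/-- growth for all r ≥ 1 from eventual growth -/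
lemma growth_one (μ : PPM (Ed d)) (hlf : μ.locFinite) (M : ℕ) (C r₀ : ℝ)
    (h : ∀ r, r₀ ≤ r → μ.var (ball 0 r) ≤ ENNReal.ofReal (C * r ^ M)) :
    ∃ C' : ℝ, 0 ≤ C' ∧ ∀ r, 1 ≤ r → μ.var (ball 0 r) ≤ ENNReal.ofReal (C' * r ^ M) := by
  refine ⟨|C| + (μ.var (ball 0 r₀)).toReal, by positivity, fun r hr => ?_⟩
  have h1 : (1:ℝ) ≤ r ^ M := one_le_pow₀ hr
  by_cases hrr : r₀ ≤ r
  · refine (h r hrr).trans (ENNReal.ofReal_le_ofReal ?_)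
    gcongr
    linarith [le_abs_self C, ENNReal.toReal_nonneg (a := μ.var (ball 0 r₀))]
  · push Not at hrr
    refine (var_mono μ (ball_subset_ball hrr.le)).trans ?_
    rw [← ENNReal.ofReal_toReal (hlf r₀).ne]
    refine ENNReal.ofReal_le_ofReal ?_
    set v := (μ.var (ball 0 r₀)).toReal with hv
    have : 0 ≤ v := ENNReal.toReal_nonneg
    rw [ENNReal.toReal_ofReal this]
    nlinarith [abs_nonneg C]

lemma weight_le (M : ℕ) (ρ : ℝ) (hρ : 0 ≤ ρ) : ∃ k : ℕ, ρ < 2 ^ k ∧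
    ((1 + ρ) ^ (M + 1))⁻¹ ≤ 2 ^ (M + 1) * ((2:ℝ) ^ (k * (M + 1)))⁻¹ := by
  have hex : ∃ k : ℕ, ρ < 2 ^ k := pow_unbounded_of_one_lt ρ one_lt_two
  refine ⟨Nat.find hex, Nat.find_spec hex, ?_⟩
  set k := Nat.find hex with hk
  have h1 : (2:ℝ) ^ k ≤ 2 * (1 + ρ) := by
    rcases Nat.eq_zero_or_pos k with h0 | h0
    · rw [h0]; simp; linarith
    · have := Nat.find_min hex (m := k - 1) (by omega)
      push Not at this
      have h2 : (2:ℝ) ^ k = 2 * 2 ^ (k - 1) := by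
        rw [← pow_succ']; congr 1; omega
      rw [h2]; linarith
  rw [pow_mul, ← div_eq_mul_inv, le_div_iff₀ (by positivity), inv_mul_le_iff₀ (by positivity), ← mul_pow]
  gcongr
  linarith

lemma wsum (μ : PPM (Ed d)) (M : ℕ) (C : ℝ) (hC : 0 ≤ C)
    (h : ∀ r, 1 ≤ r → μ.var (ball 0 r) ≤ ENNReal.ofReal (C * r ^ M)) (ε : ℝ) (hε : 0 < ε)
    (hε1 : ε ≤ 1) :
    ∑' x, (‖μ.mass x‖₊ : ℝ≥0∞) * ENNReal.ofReal (((1 + ε * ‖x‖) ^ (M + 1))⁻¹) ≤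
      ENNReal.ofReal (2 ^ (M + 2) * C * (ε ^ M)⁻¹) := by
  calc _ ≤ ∑' x, ∑' k : ℕ, ENNReal.ofReal (2 ^ (M + 1) * ((2:ℝ) ^ (k * (M + 1)))⁻¹) *
        (ball (0 : Ed d) (2 ^ k / ε)).indicator (fun x => (‖μ.mass x‖₊ : ℝ≥0∞)) x := by
        refine ENNReal.tsum_le_tsum fun x => ?_
        obtain ⟨k, hk1, hk2⟩ := weight_le M (ε * ‖x‖) (by positivity)
        refine le_trans ?_ (ENNReal.le_tsum k)
        have : x ∈ ball (0 : Ed d) (2 ^ k / ε) := by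
          rw [mem_ball_zero_iff, lt_div_iff₀ hε]; linarith
        rw [Set.indicator_of_mem this, mul_comm]
        gcongr
    _ = ∑' k : ℕ, ENNReal.ofReal (2 ^ (M + 1) * ((2:ℝ) ^ (k * (M + 1)))⁻¹) * μ.var (ball 0 (2 ^ k / ε)) := by
        rw [ENNReal.tsum_comm]
        refine tsum_congr fun k => ?_
        rw [ENNReal.tsum_mul_left, var_eq]
    _ ≤ ∑' k : ℕ, ENNReal.ofReal ((2 ^ (M + 1) * C * (ε ^ M)⁻¹) * (1/2) ^ k) := by
        refine ENNReal.tsum_le_tsum fun k => ?_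
        have h1 : (1:ℝ) ≤ 2 ^ k / ε := by
          rw [le_div_iff₀ hε, one_mul]; exact hε1.trans (one_le_pow₀ one_le_two)
        refine (mul_le_mul_right (h _ h1) _).trans ?_
        rw [← ENNReal.ofReal_mul (by positivity)]
        refine ENNReal.ofReal_le_ofReal (le_of_eq ?_)
        rw [pow_mul, pow_succ (2 ^ k : ℝ) M, div_pow, one_div, inv_pow]
        field_simp
    _ = _ := by
        have hs := (hasSum_geometric_two).mul_left (2 ^ (M + 1) * C * (ε ^ M)⁻¹)
        rw [← ENNReal.ofReal_tsum_of_nonneg (fun k => by positivity) hs.summable, hs.tsum_eq]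
        congr 1; ring

lemma wsum_real (μ : PPM (Ed d)) (M : ℕ) (C : ℝ) (hC : 0 ≤ C)
    (h : ∀ r, 1 ≤ r → μ.var (ball 0 r) ≤ ENNReal.ofReal (C * r ^ M)) (ε : ℝ) (hε : 0 < ε)
    (hε1 : ε ≤ 1) :
    Summable (fun x => ‖μ.mass x‖ * ((1 + ε * ‖x‖) ^ (M + 1))⁻¹) ∧
    ∑' x, ‖μ.mass x‖ * ((1 + ε * ‖x‖) ^ (M + 1))⁻¹ ≤ 2 ^ (M + 2) * C * (ε ^ M)⁻¹ := by
  have h1 := wsum μ M C hC h ε hε hε1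
  have h2 : ∀ x, (‖μ.mass x‖₊ : ℝ≥0∞) * ENNReal.ofReal (((1 + ε * ‖x‖) ^ (M + 1))⁻¹) =
      ENNReal.ofReal (‖μ.mass x‖ * ((1 + ε * ‖x‖) ^ (M + 1))⁻¹) := by
    intro x
    rw [ENNReal.ofReal_mul (norm_nonneg _), ofReal_norm]; rfl
  simp_rw [h2] at h1
  have h3 : Summable (fun x => ‖μ.mass x‖ * ((1 + ε * ‖x‖) ^ (M + 1))⁻¹) := by
    have := ENNReal.summable_toReal (h1.trans_lt ENNReal.ofReal_lt_top).ne
    refine this.congr fun x => ?_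
    rw [ENNReal.toReal_ofReal (by positivity)]
  refine ⟨h3, ?_⟩
  rw [← ENNReal.ofReal_tsum_of_nonneg (fun x => by positivity) h3] at h1
  exact (ENNReal.ofReal_le_ofReal_iff (by positivity)).1 h1

end PartB1

section PartB2
variable {d : ℕ}
open scoped ContDiff

def bmp (d : ℕ) : ContDiffBump (0 : Ed d) := ⟨1/2, 1, by norm_num, by norm_num⟩

/-- the basic bump -/
def psi (x : Ed d) : ℂ := ((bmp d x : ℝ) : ℂ)

lemma psi_contDiff : ContDiff ℝ ∞ (psi (d := d)) :=
  Complex.ofRealCLM.contDiff.comp (bmp d).contDiff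

lemma psi_one {x : Ed d} (h : ‖x‖ ≤ 1/2) : psi x = 1 := by
  rw [psi, (bmp d).one_of_mem_closedBall (by simpa [bmp] using h)]; simp

lemma psi_zero {x : Ed d} (h : 1 ≤ ‖x‖) : psi x = 0 := by
  rw [psi, (bmp d).zero_of_le_dist (by simpa [bmp] using h)]; simp

lemma psi_neg (x : Ed d) : psi (-x) = psi x := by
  rw [psi, (bmp d).neg]; rfl

lemma psi_norm_le (x : Ed d) : ‖psi x‖ ≤ 1 := by
  rw [psi, Complex.norm_real, Real.norm_of_nonneg (bmp d).nonneg]; exact (bmp d).le_one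

def psc (r : ℝ) (x : Ed d) : ℂ := psi (r⁻¹ • x)

lemma psc_contDiff (r : ℝ) : ContDiff ℝ ∞ (psc (d := d) r) :=
  psi_contDiff.comp (contDiff_const_smul _)

lemma psc_one {r : ℝ} (hr : 0 < r) {x : Ed d} (h : ‖x‖ ≤ r / 2) : psc r x = 1 := by
  refine psi_one ?_
  rw [norm_smul, norm_inv, Real.norm_of_nonneg hr.le, inv_mul_le_iff₀ hr]; linarith

lemma psc_zero {r : ℝ} (hr : 0 < r) {x : Ed d} (h : r ≤ ‖x‖) : psc r x = 0 := by
  refine psi_zero ?_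
  rw [norm_smul, norm_inv, Real.norm_of_nonneg hr.le, le_inv_mul_iff₀ hr]; linarith

lemma psc_compact {r : ℝ} (hr : 0 < r) : HasCompactSupport (psc (d := d) r) := by
  refine HasCompactSupport.of_support_subset_isCompact (isCompact_closedBall 0 r) ?_
  intro x hx
  rw [mem_closedBall_zero_iff]
  by_contra h
  exact hx (psc_zero hr (not_le.1 h).le)

lemma psi_compact : HasCompactSupport (psi (d := d)) := by
  have := psc_compact (d := d) one_pos
  have h : psc (d := d) 1 = psi := by funext x; simp [psc]
  rwa [h] at this

lemma psi_deriv_bound (n : ℕ) : ∃ K, 0 ≤ K ∧ ∀ x : Ed d, ‖iteratedFDeriv ℝ n psi x‖ ≤ K := by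
  set Φ := psi_compact.toSchwartzMap psi_contDiff (E := Ed d)
  refine ⟨SchwartzMap.seminorm ℝ 0 n Φ, apply_nonneg _ _, fun x => ?_⟩
  have := SchwartzMap.le_seminorm ℝ 0 n Φ x
  rw [pow_zero, one_mul] at this
  exact this

lemma psc_deriv_bound (n : ℕ) : ∃ K, 0 ≤ K ∧ ∀ r : ℝ, 1 ≤ r → ∀ x : Ed d,
    ‖iteratedFDeriv ℝ n (psc r) x‖ ≤ K := by
  obtain ⟨K, hK, h⟩ := psi_deriv_bound (d := d) n
  refine ⟨K, hK, fun r hr x => ?_⟩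
  have h1 : psc (d := d) r = psi ∘ (r⁻¹ • ContinuousLinearMap.id ℝ (Ed d)) := by
    funext x; simp [psc]
  rw [h1, ContinuousLinearMap.iteratedFDeriv_comp_right _ psi_contDiff _ (by exact_mod_cast le_top)]
  refine (ContinuousMultilinearMap.norm_compContinuousLinearMap_le _ _).trans ?_
  have h2 : ‖r⁻¹ • ContinuousLinearMap.id ℝ (Ed d)‖ ≤ 1 := by
    rw [norm_smul, norm_inv, Real.norm_of_nonneg (by linarith)]
    have := ContinuousLinearMap.norm_id_le (𝕜 := ℝ) (E := Ed d)
    have h3 : r⁻¹ ≤ 1 := inv_le_one_of_one_le₀ hr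
    have : 0 ≤ r⁻¹ := by positivity
    nlinarith [norm_nonneg (ContinuousLinearMap.id ℝ (Ed d))]
  calc _ ≤ K * ∏ i : Fin n, (1:ℝ) := by
        gcongr
        · exact h _
    _ = K := by simp

/-- the cut-off as Schwartz function -/
def psS (r : ℝ) (hr : 0 < r) : SchwartzMap (Ed d) ℂ := (psc_compact hr).toSchwartzMap (psc_contDiff r)

lemma psS_apply (r : ℝ) (hr : 0 < r) (x : Ed d) : psS r hr x = psc r x := rfl

lemma psS_seminorm (p n : ℕ) : ∃ K, 0 ≤ K ∧ ∀ r : ℝ, (hr : 1 ≤ r) →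
    SchwartzMap.seminorm ℝ p n (psS (d := d) r (by linarith)) ≤ r ^ p * K := by
  obtain ⟨K, hK, h⟩ := psc_deriv_bound (d := d) n
  refine ⟨K, hK, fun r hr => ?_⟩
  refine SchwartzMap.seminorm_le_bound ℝ p n _ (by positivity) fun x => ?_
  have hc : ⇑(psS (d := d) r (by linarith)) = psc r := rfl
  rw [hc]
  by_cases hx : ‖x‖ ≤ r
  · gcongr
    exact h r hr x
  · push Not at hx
    have : x ∉ tsupport (psc (d := d) r) := by
      intro hmem
      have : tsupport (psc (d := d) r) ⊆ closedBall 0 r := by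
        refine closure_minimal ?_ isClosed_closedBall
        intro y hy
        rw [mem_closedBall_zero_iff]
        by_contra h
        exact hy (psc_zero (by linarith) (not_le.1 h).le)
      have := this hmem
      rw [mem_closedBall_zero_iff] at this
      linarith
    have h0 : iteratedFDeriv ℝ n (psc r) x = 0 := by
      by_contra hne
      exact this (support_iteratedFDeriv_subset n hne)
    rw [h0]; simp; positivity

lemma schwartz_tsum (g : ℕ → SchwartzMap (Ed d) ℂ)
    (h : ∀ p n, Summable fun j => SchwartzMap.seminorm ℝ p n (g j)) :
    ∃ Φ : SchwartzMap (Ed d) ℂ, ∀ x, Φ x = ∑' j, g j x := by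
  have hb : ∀ (k : ℕ) (i : ℕ) (x : Ed d), (k : ℕ∞) ≤ ⊤ → ‖iteratedFDeriv ℝ k (g i) x‖ ≤
      SchwartzMap.seminorm ℝ 0 k (g i) := fun k i x _ =>
    SchwartzMap.norm_iteratedFDeriv_le_seminorm ℝ (g i) k x
  have hs : ∀ k : ℕ, (k : ℕ∞) ≤ ⊤ → Summable (fun i => SchwartzMap.seminorm ℝ 0 k (g i)) := fun k _ => h 0 k
  have hc : ∀ i, ContDiff ℝ (⊤ : ℕ∞) (g i) := fun i => (g i).smooth'
  refine ⟨⟨fun x => ∑' j, g j x, contDiff_tsum hc hs hb, ?_⟩, fun x => rfl⟩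
  intro p n
  refine ⟨∑' j, SchwartzMap.seminorm ℝ p n (g j), fun x => ?_⟩
  rw [iteratedFDeriv_tsum_apply hc hs hb le_top x]
  have hsn : Summable fun j => ‖iteratedFDeriv ℝ n (g j) x‖ :=
    (h 0 n).of_nonneg_of_le (fun _ => norm_nonneg _) (fun j => hb n j x le_top)
  calc _ ≤ ‖x‖ ^ p * ∑' j, ‖iteratedFDeriv ℝ n (g j) x‖ := by
        gcongr; exact norm_tsum_le_tsum_norm hsn
    _ = ∑' j, ‖x‖ ^ p * ‖iteratedFDeriv ℝ n (g j) x‖ := by rw [tsum_mul_left]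
    _ ≤ _ := (hsn.mul_left _).tsum_le_tsum (fun j => SchwartzMap.le_seminorm ℝ p n (g j) x) (h p n)

lemma temper_growth (μ : PPM (Ed d)) (hlf : μ.locFinite) (ht : μ.temperate) :
    ∃ j : ℕ, ∀ k : ℕ, j ≤ k → μ.var (ball 0 (2 ^ k)) ≤ ENNReal.ofReal (j * 2 ^ (k * j)) := by
  by_contra! hcon
  choose k hk1 hk2 using hcon
  have hr : ∀ j, (1:ℝ) ≤ 2 * 2 ^ k j := fun j => by
    have : (1:ℝ) ≤ 2 ^ k j := one_le_pow₀ one_le_two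
    linarith
  set cc : ℕ → ℝ := fun j => ((2:ℝ) ^ (k j * j))⁻¹ with hcc
  set g : ℕ → SchwartzMap (Ed d) ℂ := fun j => cc j • psS (2 * 2 ^ k j) (by linarith [hr j]) with hg
  obtain ⟨Φ, hΦ⟩ := schwartz_tsum g (by
    intro p n
    obtain ⟨K, hK, h⟩ := psS_seminorm (d := d) p n
    have hle : ∀ j, SchwartzMap.seminorm ℝ p n (g j) ≤ cc j * ((2 * 2 ^ k j) ^ p * K) := by
      intro j
      rw [hg]
      simp only [map_smul_eq_mul]
      rw [Real.norm_of_nonneg (by positivity)]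
      gcongr
      exact h _ (hr j)
    rw [← summable_nat_add_iff (p + 1)]
    have hgeo : Summable fun j : ℕ => (2 ^ p * K) * (1/2:ℝ) ^ j := summable_geometric_two.mul_left _
    refine hgeo.of_nonneg_of_le (fun j => apply_nonneg _ _) fun j => (hle _).trans ?_
    simp only [hcc]
    set J := j + (p + 1) with hJ
    have hJk := hk1 J
    have h1 : (2:ℝ) ^ (k J * p) * 2 ^ j ≤ 2 ^ (k J * J) := by
      rw [← pow_add]
      refine pow_le_pow_right₀ one_le_two ?_
      have : k J * J = k J * p + k J * (j + 1) := by rw [hJ]; ring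
      rw [this]
      nlinarith
    rw [mul_pow, ← pow_mul, inv_mul_le_iff₀ (by positivity), one_div, inv_pow]
    have h2 : (0:ℝ) < 2 ^ j := by positivity
    calc (2:ℝ) ^ p * 2 ^ (k J * p) * K = 2 ^ p * K * (2 ^ j)⁻¹ * (2 ^ (k J * p) * 2 ^ j) := by
          field_simp
      _ ≤ 2 ^ p * K * (2 ^ j)⁻¹ * 2 ^ (k J * J) := by gcongr
      _ = _ := by ring)
  have hgx : ∀ j x, g j x = ((cc j * bmp d ((2 * 2 ^ k j : ℝ)⁻¹ • x) : ℝ) : ℂ) := by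
    intro j x
    simp [hg, psS_apply, psc, psi]
  have hsum : ∀ x, Summable fun j => cc j * bmp d ((2 * 2 ^ k j : ℝ)⁻¹ • x) := by
    intro x
    refine Summable.of_nonneg_of_le (fun j => mul_nonneg (by positivity) (bmp d).nonneg) (fun j => ?_)
      (summable_geometric_two.mul_left 2)
    have h1 : cc j ≤ 2 * (1/2) ^ j := by
      simp only [hcc, one_div, inv_pow]
      have : (2:ℝ) ^ j ≤ 2 ^ (k j * j) * 2 := by
        rw [← pow_succ]
        refine pow_le_pow_right₀ one_le_two ?_
        have := hk1 j
        rcases Nat.eq_zero_or_pos j with h0 | h0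
        · omega
        · have := Nat.le_mul_of_pos_left j (show 0 < k j by omega)
          omega
      rw [inv_le_comm₀ (by positivity) (by positivity), mul_inv, inv_inv]
      linarith
    calc _ ≤ cc j * 1 := by
          gcongr
          exact (bmp d).le_one
      _ ≤ _ := by linarith
  have hnorm : ∀ x j, cc j * bmp d ((2 * 2 ^ k j : ℝ)⁻¹ • x) ≤ ‖Φ x‖ := by
    intro x j
    rw [hΦ]
    simp_rw [hgx]
    rw [← Complex.ofReal_tsum, Complex.norm_real]
    refine le_trans ?_ (le_abs_self _)
    exact (hsum x).le_tsum j (fun i _ => mul_nonneg (by positivity) (bmp d).nonneg)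
  have hS := (ht Φ).norm
  simp only [norm_mul] at hS
  set S := ∑' x, ‖μ.mass x‖ * ‖Φ x‖ with hSd
  have hbig : ∀ j : ℕ, (j:ℝ) ≤ S := by
    intro j
    have h1 : μ.var (ball 0 (2 ^ k j)) * ENNReal.ofReal (cc j) ≤ ENNReal.ofReal S := by
      rw [hSd, ENNReal.ofReal_tsum_of_nonneg (fun x => by positivity) hS, var_eq, ← ENNReal.tsum_mul_right]
      refine ENNReal.tsum_le_tsum fun x => ?_
      by_cases hx : x ∈ ball (0 : Ed d) (2 ^ k j)
      · rw [Set.indicator_of_mem hx, ENNReal.ofReal_mul (norm_nonneg _)]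
        have h2 : cc j ≤ ‖Φ x‖ := by
          have := hnorm x j
          rwa [(bmp d).one_of_mem_closedBall, mul_one] at this
          rw [mem_closedBall_zero_iff, norm_smul, norm_inv, Real.norm_of_nonneg (by positivity)]
          rw [mem_ball_zero_iff] at hx
          simp only [bmp]
          rw [inv_mul_le_iff₀ (by positivity)]; linarith
        rw [ofReal_norm]
        exact mul_le_mul' le_rfl (ENNReal.ofReal_le_ofReal h2)
      · rw [Set.indicator_of_notMem hx]; simp
    have h3 : ENNReal.ofReal j ≤ ENNReal.ofReal S := by
      refine le_trans ?_ h1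
      have h4 : ENNReal.ofReal (j:ℝ) = ENNReal.ofReal (j * 2 ^ (k j * j)) * ENNReal.ofReal (cc j) := by
        rw [← ENNReal.ofReal_mul (by positivity)]
        congr 1
        simp only [hcc]; field_simp
      rw [h4]
      exact mul_le_mul' (hk2 j).le le_rfl
    exact (ENNReal.ofReal_le_ofReal_iff (tsum_nonneg fun x => by positivity)).1 h3
  obtain ⟨j, hj⟩ := exists_nat_gt S
  exact absurd (hbig j) (not_le.2 hj)

lemma temper_growth' (μ : PPM (Ed d)) (hlf : μ.locFinite) (ht : μ.temperate) :
    ∃ (M : ℕ) (C : ℝ), 0 ≤ C ∧ ∀ r, 1 ≤ r → μ.var (ball 0 r) ≤ ENNReal.ofReal (C * r ^ M) := by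
  obtain ⟨j, hj⟩ := temper_growth μ hlf ht
  refine ⟨j, growth_one μ hlf j (j * 2 ^ j) (2 ^ j) fun r hr => ?_⟩
  have hex : ∃ k : ℕ, r < 2 ^ k := pow_unbounded_of_one_lt r one_lt_two
  set k := Nat.find hex with hk
  have h1 : r < 2 ^ k := Nat.find_spec hex
  have hjk : j < k := by
    by_contra h
    push Not at h
    have : (2:ℝ) ^ k ≤ 2 ^ j := pow_le_pow_right₀ one_le_two h
    linarith
  have h2 : (2:ℝ) ^ k ≤ 2 * r := by
    have := Nat.find_min hex (m := k - 1) (by omega)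
    push Not at this
    have h2 : (2:ℝ) ^ k = 2 * 2 ^ (k - 1) := by
      rw [← pow_succ']; congr 1; omega
    rw [h2]; linarith
  refine (var_mono μ (ball_subset_ball h1.le)).trans ((hj k hjk.le).trans (ENNReal.ofReal_le_ofReal ?_))
  rw [pow_mul, mul_assoc, ← mul_pow]
  gcongr

end PartB2

section PartB3
variable {d : ℕ}
open scoped ContDiff FourierTransform

lemma pair_continuous (μ : PPM (Ed d)) (k : ℕ)
    (h : Summable fun x => ‖μ.mass x‖ * ((1 + ‖x‖) ^ k)⁻¹) :
    Continuous fun φ : SchwartzMap (Ed d) ℂ => μ.pair φ := by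
  set p := (Finset.Iic (k, 0)).sup (schwartzSeminormFamily ℂ (Ed d) ℂ) with hp
  have hb : ∀ (φ : SchwartzMap (Ed d) ℂ) x, ‖μ.mass x * φ x‖ ≤ (2 ^ k * p φ) * (‖μ.mass x‖ * ((1 + ‖x‖) ^ k)⁻¹) := by
    intro φ x
    have h1 := SchwartzMap.one_add_le_sup_seminorm_apply (𝕜 := ℂ) (m := (k, 0)) le_rfl le_rfl φ x
    rw [norm_iteratedFDeriv_zero] at h1
    have h1' : (1 + ‖x‖) ^ k * ‖φ x‖ ≤ 2 ^ k * p φ := h1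
    rw [norm_mul]
    have hpos : 0 < (1 + ‖x‖) ^ k := by positivity
    have : ‖φ x‖ ≤ (2 ^ k * p φ) * ((1 + ‖x‖) ^ k)⁻¹ := by
      rw [← div_eq_mul_inv, le_div_iff₀ hpos]; linarith
    calc _ ≤ ‖μ.mass x‖ * ((2 ^ k * p φ) * ((1 + ‖x‖) ^ k)⁻¹) := by gcongr
      _ = _ := by ring
  have hs : ∀ φ : SchwartzMap (Ed d) ℂ, Summable fun x => μ.mass x * φ x := fun φ =>
    Summable.of_norm_bounded (h.mul_left _) (hb φ)
  have hsn : ∀ φ : SchwartzMap (Ed d) ℂ, Summable fun x => ‖μ.mass x * φ x‖ := fun φ => (hs φ).norm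
  refine (SchwartzMap.mkCLMtoNormedSpace (σ := RingHom.id ℂ) (fun φ : SchwartzMap (Ed d) ℂ => μ.pair φ) ?_ ?_ ?_).continuous
  · intro f g
    simp only [PPM.pair, SchwartzMap.add_apply, mul_add]
    exact (hs f).tsum_add (hs g)
  · intro a f
    simp only [PPM.pair, SchwartzMap.smul_apply, smul_eq_mul, RingHom.id_apply]
    rw [← tsum_mul_left]
    exact tsum_congr fun x => by ring
  · refine ⟨Finset.Iic (k, 0), 2 ^ k * ∑' x, ‖μ.mass x‖ * ((1 + ‖x‖) ^ k)⁻¹, by positivity, fun φ => ?_⟩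
    refine (norm_tsum_le_tsum_norm (hsn φ)).trans ?_
    refine ((hsn φ).tsum_le_tsum (hb φ) (h.mul_left _)).trans (le_of_eq ?_)
    rw [tsum_mul_left]
    ring

/-- compactly supported truncation -/
def trunc (φ : SchwartzMap (Ed d) ℂ) (r : ℝ) (hr : 0 < r) : SchwartzMap (Ed d) ℂ :=
  ((psc_compact hr).mul_right (f' := φ)).toSchwartzMap ((psc_contDiff r).mul φ.smooth')

lemma trunc_compact (φ : SchwartzMap (Ed d) ℂ) (r : ℝ) (hr : 0 < r) : HasCompactSupport (trunc φ r hr) :=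
  (psc_compact hr).mul_right

lemma trunc_sub (φ : SchwartzMap (Ed d) ℂ) (r : ℝ) (hr : 0 < r) :
    ⇑(trunc φ r hr - φ) = fun x => (psc r x - 1) * φ x := by
  funext x
  have : trunc φ r hr x = psc r x * φ x := rfl
  rw [SchwartzMap.sub_apply, this]; ring

lemma psc_sub_deriv (n : ℕ) : ∃ K, 0 ≤ K ∧ ∀ r : ℝ, 1 ≤ r → ∀ x : Ed d,
    ‖iteratedFDeriv ℝ n (fun x => psc r x - 1) x‖ ≤ K := by
  obtain ⟨K, hK, h⟩ := psc_deriv_bound (d := d) n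
  refine ⟨K + 1, by positivity, fun r hr x => ?_⟩
  rcases Nat.eq_zero_or_pos n with h0 | h0
  · subst h0
    have := h r hr x
    rw [norm_iteratedFDeriv_zero] at this ⊢
    refine (norm_sub_le _ _).trans ?_
    simpa using this
  · have h2 : iteratedFDeriv ℝ n (fun x => psc r x - 1) x = iteratedFDeriv ℝ n (psc r) x := by
      have := iteratedFDeriv_sub_apply (𝕜 := ℝ) (i := n) (x := x) (f := psc (d := d) r) (g := fun _ => (1:ℂ))
        ((psc_contDiff r).of_le (by exact_mod_cast le_top)).contDiffAt contDiff_const.contDiffAt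
      rw [iteratedFDeriv_const_of_ne h0.ne'] at this
      have h3 : (fun x => psc r x - 1) = psc (d := d) r - fun _ => (1:ℂ) := rfl
      rw [h3, this]
      simp
    rw [h2]
    linarith [h r hr x]

lemma trunc_tendsto (φ : SchwartzMap (Ed d) ℂ) :
    Tendsto (fun j : ℕ => trunc φ (j + 1) (by positivity)) atTop (𝓝 φ) := by
  rw [(schwartz_withSeminorms ℝ (Ed d) ℂ).tendsto_nhds]
  rintro ⟨k, n⟩ ε hε
  choose K hK h using fun i => psc_sub_deriv (d := d) i
  set B := ∑ i ∈ Finset.range (n + 1), (n.choose i : ℝ) * K i * SchwartzMap.seminorm ℝ (k + 1) (n - i) φ with hB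
  have hB0 : 0 ≤ B := Finset.sum_nonneg fun i _ => mul_nonneg (mul_nonneg (by positivity) (hK i)) (apply_nonneg _ _)
  have key : ∀ r : ℝ, (hr : 1 ≤ r) → SchwartzMap.seminorm ℝ k n (trunc φ r (by linarith) - φ) ≤ 2 / r * B := by
    intro r hr
    refine SchwartzMap.seminorm_le_bound ℝ k n _ (by positivity) fun x => ?_
    rw [trunc_sub]
    by_cases hx : ‖x‖ < r / 2
    · have : (fun x => (psc r x - 1) * φ x) =ᶠ[𝓝 x] fun _ => (0:ℂ) := by
        have hop : ball (0 : Ed d) (r/2) ∈ 𝓝 x := isOpen_ball.mem_nhds (by simpa using hx)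
        filter_upwards [hop] with y hy
        rw [mem_ball_zero_iff] at hy
        rw [psc_one (by linarith) hy.le]; simp
      rw [(Filter.EventuallyEq.iteratedFDeriv ℝ this n).eq_of_nhds]
      have h0 : iteratedFDeriv ℝ n (fun _ : Ed d => (0:ℂ)) = 0 := iteratedFDeriv_zero_fun
      rw [h0]; simp; positivity
    · push Not at hx
      have hL := norm_iteratedFDeriv_mul_le (𝕜 := ℝ) (f := fun x => psc r x - 1) (g := φ) (N := ∞)
        ((psc_contDiff r).sub contDiff_const) φ.smooth' x (n := n) (by exact_mod_cast le_top)
      have hxk : ‖x‖ ^ k ≤ 2 / r * ‖x‖ ^ (k + 1) := by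
        rw [pow_succ]
        have : 1 ≤ 2 / r * ‖x‖ := by
          rw [div_mul_eq_mul_div, le_div_iff₀ (by linarith)]; linarith
        nlinarith [pow_nonneg (norm_nonneg x) k]
      calc _ ≤ (2 / r * ‖x‖ ^ (k + 1)) * ∑ i ∈ Finset.range (n + 1),
            (n.choose i : ℝ) * ‖iteratedFDeriv ℝ i (fun x => psc r x - 1) x‖ * ‖iteratedFDeriv ℝ (n - i) φ x‖ := by
            gcongr
        _ = 2 / r * ∑ i ∈ Finset.range (n + 1),
            (n.choose i : ℝ) * ‖iteratedFDeriv ℝ i (fun x => psc r x - 1) x‖ * (‖x‖ ^ (k + 1) * ‖iteratedFDeriv ℝ (n - i) φ x‖) := by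
            rw [mul_assoc, Finset.mul_sum]
            congr 1
            exact Finset.sum_congr rfl fun i _ => by ring
        _ ≤ 2 / r * B := by
            refine mul_le_mul_of_nonneg_left (Finset.sum_le_sum fun i _ => ?_) (by positivity)
            exact mul_le_mul (mul_le_mul_of_nonneg_left (h i r hr x) (by positivity))
              (SchwartzMap.le_seminorm ℝ (k + 1) (n - i) φ x) (by positivity)
              (mul_nonneg (by positivity) (hK i))
  obtain ⟨J, hJ⟩ := exists_nat_gt (2 * B / ε)
  filter_upwards [eventually_ge_atTop J] with j hj
  have hj' : (J:ℝ) ≤ j := by exact_mod_cast hj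
  refine (key (j + 1) (by linarith [Nat.cast_nonneg (α := ℝ) j])).trans_lt ?_
  rw [div_lt_iff₀ hε] at hJ
  have hpos : (0:ℝ) < j + 1 := by positivity
  rw [div_mul_eq_mul_div, div_lt_iff₀ hpos]
  nlinarith

lemma FT_ext (μ ν : PPM (Ed d)) (k l : ℕ)
    (h : Summable fun x => ‖μ.mass x‖ * ((1 + ‖x‖) ^ k)⁻¹)
    (h' : Summable fun x => ‖ν.mass x‖ * ((1 + ‖x‖) ^ l)⁻¹) (hF : IsFT μ ν)
    (φ : SchwartzMap (Ed d) ℂ) :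
    μ.pair ⇑(FourierTransform.fourierCLE ℂ (SchwartzMap (Ed d) ℂ) φ) = ν.pair ⇑φ := by
  have h1 := ((pair_continuous μ k h).comp
    (FourierTransform.fourierCLE ℂ (SchwartzMap (Ed d) ℂ)).continuous).tendsto φ |>.comp (trunc_tendsto φ)
  have h2 := (pair_continuous ν l h').tendsto φ |>.comp (trunc_tendsto φ)
  refine tendsto_nhds_unique h1 (h2.congr fun j => ?_)
  exact (hF _ (trunc_compact _ _ _)).symm

def ee (t γ : Ed d) : ℂ := Complex.exp (((2 * Real.pi * ⟪t, γ⟫ : ℝ) : ℂ) * Complex.I)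

lemma ee_norm (t γ : Ed d) : ‖ee t γ‖ = 1 := by
  rw [ee, Complex.norm_exp_ofReal_mul_I]

lemma ee_add (t t' γ : Ed d) : ee (t + t') γ = ee t γ * ee t' γ := by
  rw [ee, ee, ee, ← Complex.exp_add, inner_add_left]; congr 1; push_cast; ring

lemma ee_add_right (t γ γ' : Ed d) : ee t (γ + γ') = ee t γ * ee t γ' := by
  rw [ee, ee, ee, ← Complex.exp_add, inner_add_right]; congr 1; push_cast; ring

lemma ee_zero (γ : Ed d) : ee 0 γ = 1 := by simp [ee]

lemma ee_cont (γ : Ed d) : Continuous fun t => ee t γ := by unfold ee; fun_prop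

lemma inv_calc (ε : ℝ) (hε : 0 < ε) (t γ : Ed d) :
    𝓕⁻ (fun x : Ed d => psi (ε⁻¹ • (x - t))) γ = (ε ^ d : ℝ) * 𝓕⁻ (psi (d := d)) (ε • γ) * ee t γ := by
  rw [Real.fourierInv_eq', Real.fourierInv_eq']
  set F : Ed d → ℂ := fun y => Complex.exp ((2 * Real.pi * ⟪ε • y + t, γ⟫ : ℝ) * I) • psi y with hF
  have h1 : ∀ x : Ed d, Complex.exp ((2 * Real.pi * ⟪x, γ⟫ : ℝ) * I) • psi (ε⁻¹ • (x - t)) =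
      (fun z => F (ε⁻¹ • z)) (x - t) := by
    intro x
    simp only [hF]
    rw [smul_smul, mul_inv_cancel₀ hε.ne', one_smul, sub_add_cancel]
  simp_rw [h1]
  rw [integral_sub_right_eq_self (fun z => F (ε⁻¹ • z)) t]
  rw [Measure.integral_comp_inv_smul, finrank_euclideanSpace_fin, abs_of_pos (by positivity)]
  have h2 : ∀ y, F y = (Complex.exp ((2 * Real.pi * ⟪y, ε • γ⟫ : ℝ) * I) • psi y) * ee t γ := by
    intro y
    simp only [hF, ee, smul_eq_mul]
    have h3 : Complex.exp ((2 * Real.pi * ⟪ε • y + t, γ⟫ : ℝ) * I) =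
        Complex.exp ((2 * Real.pi * ⟪y, ε • γ⟫ : ℝ) * I) * Complex.exp ((2 * Real.pi * ⟪t, γ⟫ : ℝ) * I) := by
      rw [← Complex.exp_add, inner_add_left, real_inner_smul_left, real_inner_smul_right]
      congr 1; push_cast; ring
    rw [h3]; ring
  simp_rw [h2]
  rw [integral_mul_const, Complex.real_smul]
  ring

lemma B_main (μ μh : PPM (Ed d))
    (hμlf : μ.locFinite) (hμt : μ.temperate)
    (hμhlf : μh.locFinite) (hF : IsFT μ μh)
    (hgrow : ∃ C : ℝ, ∀ᶠ r : ℝ in atTop, μh.var (ball 0 r) ≤ ENNReal.ofReal (C * r ^ d)) :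
    ∃ C : ℝ, 0 ≤ C ∧ ∀ ε : ℝ, 0 < ε → ε ≤ 1 → ∃ a : Ed d → ℂ, Summable (fun γ => ‖a γ‖) ∧
      ∑' γ, ‖a γ‖ ≤ C ∧ ∀ t, ∑' x, μ.mass x * psi (ε⁻¹ • (x - t)) = ∑' γ, a γ * ee t γ := by
  obtain ⟨M, C1, hC1, h1⟩ := temper_growth' μ hμlf hμt
  have hs1 := (wsum_real μ M C1 hC1 h1 1 one_pos le_rfl).1
  obtain ⟨C0, h0⟩ := hgrow
  obtain ⟨r₀, hr₀⟩ := eventually_atTop.1 h0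
  obtain ⟨C2, hC2, h2⟩ := growth_one μh hμhlf d C0 r₀ hr₀
  have hs2 := (wsum_real μh d C2 hC2 h2 1 one_pos le_rfl).1
  simp only [one_mul] at hs1 hs2
  have hFT := FT_ext μ μh _ _ hs1 hs2 hF
  set Ψ : SchwartzMap (Ed d) ℂ := 𝓕⁻ (psi_compact.toSchwartzMap psi_contDiff) with hΨ
  have hΨ' : ∀ γ, Ψ γ = 𝓕⁻ (psi (d := d)) γ := by
    intro γ; rw [hΨ, SchwartzMap.fourierInv_coe]; rfl
  set K := 2 ^ (d + 1) * (Finset.Iic (d + 1, 0)).sup (fun m => SchwartzMap.seminorm ℂ m.1 m.2) Ψ with hK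
  have hK0 : 0 ≤ K := by positivity
  have hΨb : ∀ γ, ‖Ψ γ‖ ≤ K * ((1 + ‖γ‖) ^ (d + 1))⁻¹ := by
    intro γ
    have h1 := SchwartzMap.one_add_le_sup_seminorm_apply (𝕜 := ℂ) (m := (d + 1, 0)) le_rfl le_rfl Ψ γ
    rw [norm_iteratedFDeriv_zero] at h1
    rw [← div_eq_mul_inv, le_div_iff₀ (by positivity)]
    rw [hK]; simp only at h1; linarith
  refine ⟨K * (2 ^ (d + 2) * C2), by positivity, fun ε hε hε1 => ?_⟩
  obtain ⟨hs3, hs4⟩ := wsum_real μh d C2 hC2 h2 ε hε hε1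
  set a : Ed d → ℂ := fun γ => μh.mass γ * ((ε ^ d : ℝ) * Ψ (ε • γ)) with ha
  have hab : ∀ γ, ‖a γ‖ ≤ (K * ε ^ d) * (‖μh.mass γ‖ * ((1 + ε * ‖γ‖) ^ (d + 1))⁻¹) := by
    intro γ
    simp only [ha]
    rw [norm_mul, norm_mul, Complex.norm_real, Real.norm_of_nonneg (by positivity)]
    have := hΨb (ε • γ)
    rw [norm_smul, Real.norm_of_nonneg hε.le] at this
    calc _ ≤ ‖μh.mass γ‖ * (ε ^ d * (K * ((1 + ε * ‖γ‖) ^ (d + 1))⁻¹)) := by gcongr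
      _ = _ := by ring
  have has : Summable fun γ => ‖a γ‖ := (hs3.mul_left _).of_nonneg_of_le (fun _ => norm_nonneg _) hab
  refine ⟨a, has, ?_, fun t => ?_⟩
  · refine (has.tsum_le_tsum hab (hs3.mul_left _)).trans ?_
    rw [tsum_mul_left]
    calc _ ≤ K * ε ^ d * (2 ^ (d + 2) * C2 * (ε ^ d)⁻¹) := by gcongr
      _ = _ := by field_simp
  · have hcs : HasCompactSupport (fun x : Ed d => psi (ε⁻¹ • (x - t))) :=
      (psc_compact hε).comp_homeomorph (Homeomorph.subRight t)
    have hcd : ContDiff ℝ ∞ (fun x : Ed d => psi (ε⁻¹ • (x - t))) :=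
      (psc_contDiff ε).comp (contDiff_id.sub contDiff_const)
    set g : SchwartzMap (Ed d) ℂ := hcs.toSchwartzMap hcd with hg
    have h5 := hFT (𝓕⁻ g)
    have h6 : FourierTransform.fourierCLE ℂ (SchwartzMap (Ed d) ℂ) (𝓕⁻ g) = g := by
      rw [← FourierTransform.fourierCLE_symm_apply (R := ℂ), ContinuousLinearEquiv.apply_symm_apply]
    rw [h6] at h5
    refine h5.trans (tsum_congr fun γ => ?_)
    have h7 : (𝓕⁻ g : SchwartzMap (Ed d) ℂ) γ = (ε ^ d : ℝ) * 𝓕⁻ (psi (d := d)) (ε • γ) * ee t γ := by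
      rw [SchwartzMap.fourierInv_coe, ← inv_calc ε hε]; rfl
    rw [h7, ← hΨ', ha]
    ring

end PartB3

section PartB4
variable {d : ℕ}

def Fe (m : Ed d → ℂ) (ε : ℝ) (t : Ed d) : ℂ := ∑' x, m x * psi (ε⁻¹ • (x - t))

lemma psi_far {ε : ℝ} (hε : 0 < ε) {y : Ed d} (h : ε ≤ ‖y‖) : psi (ε⁻¹ • y) = 0 := psc_zero hε h

lemma psi_near {ε : ℝ} (hε : 0 < ε) {y : Ed d} (h : ‖y‖ ≤ ε / 2) : psi (ε⁻¹ • y) = 1 := psc_one hε h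

lemma Fe_ne {m : Ed d → ℂ} {ε : ℝ} (hε : 0 < ε) {t : Ed d} (h : Fe m ε t ≠ 0) :
    ∃ x, m x ≠ 0 ∧ ‖x - t‖ < ε := by
  by_contra! hcon
  refine h ?_
  rw [Fe]
  have : ∀ x, m x * psi (ε⁻¹ • (x - t)) = 0 := by
    intro x
    by_cases hx : m x = 0
    · rw [hx, zero_mul]
    · rw [psi_far hε (hcon x hx), mul_zero]
  simp [this]

lemma Fe_single {m : Ed d → ℂ} {ε : ℝ} (hε : 0 < ε) {t l : Ed d} (hl : ‖l - t‖ ≤ ε / 2)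
    (h : ∀ x, m x ≠ 0 → ‖x - t‖ < ε → x = l) : Fe m ε t = m l := by
  rw [Fe, tsum_eq_single l, psi_near hε hl, mul_one]
  intro x hx
  by_cases hx0 : m x = 0
  · rw [hx0, zero_mul]
  · rw [psi_far hε, mul_zero]
    by_contra! hc
    exact hx (h x hx0 hc)

lemma Fe_tendsto (μ : PPM (Ed d)) (hlf : μ.locFinite) (t : Ed d) :
    Tendsto (fun ε => Fe μ.mass ε t) (𝓝[>] 0) (𝓝 (μ.mass t)) := by
  have h1 : ∑' x, (if x = t then μ.mass t else 0) = μ.mass t := by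
    rw [tsum_ite_eq]
  have hev : ∀ᶠ ε : ℝ in 𝓝[>] 0, 0 < ε ∧ ε ≤ 1 := by
    filter_upwards [Ioc_mem_nhdsGT (zero_lt_one' ℝ)] with ε h using h
  conv => rhs; rw [← h1]
  set b : Ed d → ℝ := (ball 0 (‖t‖ + 1)).indicator (fun x => ‖μ.mass x‖) with hb
  have hbs : Summable b := by
    have h2 := hlf (‖t‖ + 1)
    rw [var_eq] at h2
    have h3 := ENNReal.summable_toReal h2.ne
    refine h3.congr fun x => ?_
    simp only [hb, Set.indicator]
    split_ifs <;> simp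
  refine tendsto_tsum_of_dominated_convergence hbs ?_ ?_
  · intro x
    by_cases hx : x = t
    · subst hx
      simp only [if_true, sub_self, smul_zero]
      rw [psi_one (by simp)]; simp
    · simp only [hx, if_false]
      have hpos : 0 < ‖x - t‖ := norm_pos_iff.2 (sub_ne_zero.2 hx)
      refine tendsto_const_nhds.congr' ?_
      filter_upwards [Ioc_mem_nhdsGT hpos] with ε hε
      rw [psi_far hε.1 hε.2, mul_zero]
  · filter_upwards [hev] with ε hε x
    by_cases hx : x ∈ ball (0 : Ed d) (‖t‖ + 1)
    · simp only [hb, Set.indicator_of_mem hx]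
      rw [norm_mul]
      exact mul_le_of_le_one_right (norm_nonneg _) (psi_norm_le _)
    · rw [psi_far hε.1, mul_zero]
      · simp [hb, Set.indicator_of_notMem hx]
      · rw [mem_ball_zero_iff] at hx
        push Not at hx
        have := norm_sub_norm_le x t
        linarith [hε.2]

def eH (γ : Ed d) : Multiplicative (Ed d) →* ℂ where
  toFun t := ee t.toAdd γ
  map_one' := ee_zero γ
  map_mul' t u := ee_add _ _ γ

lemma eH_norm (γ : Ed d) (t : Multiplicative (Ed d)) : ‖eH γ t‖ = 1 := ee_norm _ _

lemma BB_of (μ : PPM (Ed d)) (hlf : μ.locFinite) (C : ℝ) (hC : 0 ≤ C)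
    (HB : ∀ ε : ℝ, 0 < ε → ε ≤ 1 → ∃ a : Ed d → ℂ, Summable (fun γ => ‖a γ‖) ∧
      ∑' γ, ‖a γ‖ ≤ C ∧ ∀ t, Fe μ.mass ε t = ∑' γ, a γ * ee t γ) :
    BB eH μ.mass C := by
  refine ⟨hC, fun P hP => ?_⟩
  have h1 : Tendsto (fun ε => Lf (Fe μ.mass ε) P) (𝓝[>] 0) (𝓝 (Lf μ.mass P)) := by
    clear hP
    induction P using tp_induction with
    | h0 => simp
    | ha P Q h1 h2 => simp only [map_add]; exact h1.add h2
    | hs t a =>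
      simp only [map_smul, Lf_mo, smul_eq_mul]
      exact (Fe_tendsto μ hlf t).const_mul a
  have hev : ∀ᶠ ε : ℝ in 𝓝[>] 0, 0 < ε ∧ ε ≤ 1 := by
    filter_upwards [Ioc_mem_nhdsGT (zero_lt_one' ℝ)] with ε h using h
  refine le_of_tendsto ((Complex.continuous_re.tendsto _).comp h1) ?_
  filter_upwards [hev] with ε hε
  obtain ⟨a, ha, haC, h⟩ := HB ε hε.1 hε.2
  have h2 : HasSum (fun γ => a γ * evC eH γ P) (Lf (Fe μ.mass ε) P) := by
    clear hP h1
    induction P using tp_induction with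
    | h0 => simp
    | ha P Q h1 h2 => simp only [map_add, mul_add]; exact h1.add h2
    | hs t b =>
      simp only [map_smul, Lf_mo, smul_eq_mul, evC_mo, h t]
      have hs : Summable (fun γ => a γ * ee t γ) := by
        refine Summable.of_norm ?_
        simpa [norm_mul, ee_norm] using ha
      have e : (fun γ => a γ * (b * eH γ (Multiplicative.ofAdd t))) = fun γ => b * (a γ * ee t γ) := by
        funext γ
        show a γ * (b * ee t γ) = _
        ring
      rw [e]
      exact hs.hasSum.mul_left b
  refine (Complex.re_le_norm _).trans ?_
  show ‖Lf (Fe μ.mass ε) P‖ ≤ C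
  rw [← h2.tsum_eq]
  have h3 : ∀ γ, ‖a γ * evC eH γ P‖ ≤ ‖a γ‖ := fun γ => by
    rw [norm_mul]; exact mul_le_of_le_one_right (norm_nonneg _) (hP γ)
  exact (tsum_of_norm_bounded ha.hasSum h3).trans haC

lemma torusTB (S : Finset (Ed d)) (δ : ℝ) (hδ : 0 < δ) : ∃ X : Set (Ed d), X.Finite ∧
    ∀ x, ∃ y ∈ X, ∀ γ ∈ S, ‖ee x γ - ee y γ‖ < δ := by
  set Φ : Ed d → (S → ℂ) := fun x γ => ee x γ with hΦ
  have hb : TotallyBounded (Set.range Φ) := by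
    refine (isCompact_closedBall (0 : S → ℂ) 1).totallyBounded.subset ?_
    rintro _ ⟨x, rfl⟩
    rw [mem_closedBall_zero_iff, pi_norm_le_iff_of_nonneg zero_le_one]
    intro γ; exact (ee_norm _ _).le
  obtain ⟨t, ht, htf, hcov⟩ := Metric.finite_approx_of_totallyBounded hb δ hδ
  choose g hg using fun v : t => ht v.2
  have := htf.to_subtype
  refine ⟨Set.range g, Set.finite_range g, fun x => ?_⟩
  have := hcov ⟨x, rfl⟩
  simp only [Set.mem_iUnion] at this
  obtain ⟨v, hv, hx⟩ := this
  refine ⟨g ⟨v, hv⟩, ⟨_, rfl⟩, fun γ hγ => ?_⟩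
  have hgv : Φ (g ⟨v, hv⟩) = v := hg ⟨v, hv⟩
  rw [mem_ball, dist_eq_norm, ← hgv] at hx
  exact (norm_le_pi_norm (Φ x - Φ (g ⟨v, hv⟩)) ⟨γ, hγ⟩).trans_lt hx

lemma ee_sub_one (x y γ : Ed d) : ‖ee (x - y) γ - 1‖ = ‖ee x γ - ee y γ‖ := by
  have : ee x γ - ee y γ = (ee (x - y) γ - 1) * ee y γ := by
    rw [sub_mul, ← ee_add, sub_add_cancel, one_mul]
  rw [this, norm_mul, ee_norm, mul_one]

lemma weightTB (b : Ed d → ℝ) (hb0 : ∀ γ, 0 ≤ b γ) (hb : Summable b) (δ : ℝ) (hδ : 0 < δ) :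
    ∃ X : Set (Ed d), X.Finite ∧
    ∀ x, ∃ y ∈ X, ∑' γ, b γ * ‖ee (x - y) γ - 1‖ < δ := by
  set B := ∑' γ, b γ with hB
  have hB0 : 0 ≤ B := tsum_nonneg hb0
  obtain ⟨S, hS⟩ := ((tendsto_tsum_compl_atTop_zero b).eventually (gt_mem_nhds (show 0 < δ / 4 by positivity))).exists
  obtain ⟨X, hX, h⟩ := torusTB S (δ / (4 * (B + 1))) (by positivity)
  refine ⟨X, hX, fun x => ?_⟩
  obtain ⟨y, hy, hγ⟩ := h x
  refine ⟨y, hy, ?_⟩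
  have h2 : ∀ γ, ‖ee (x - y) γ - 1‖ ≤ 2 := fun γ => by
    refine (norm_sub_le _ _).trans ?_
    rw [ee_norm]; norm_num
  have hs : Summable fun γ => b γ * ‖ee (x - y) γ - 1‖ :=
    (hb.mul_right 2).of_nonneg_of_le (fun γ => mul_nonneg (hb0 γ) (norm_nonneg _))
      (fun γ => mul_le_mul_of_nonneg_left (h2 γ) (hb0 γ))
  rw [← hs.sum_add_tsum_compl (s := S)]
  have e1 : ∑ γ ∈ S, b γ * ‖ee (x - y) γ - 1‖ ≤ B * (δ / (4 * (B + 1))) := by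
    calc _ ≤ ∑ γ ∈ S, b γ * (δ / (4 * (B + 1))) := by
          refine Finset.sum_le_sum fun γ h => mul_le_mul_of_nonneg_left ?_ (hb0 γ)
          rw [ee_sub_one]; exact (hγ γ h).le
      _ = (∑ γ ∈ S, b γ) * (δ / (4 * (B + 1))) := by rw [Finset.sum_mul]
      _ ≤ _ := mul_le_mul_of_nonneg_right (hb.sum_le_tsum S (fun γ _ => hb0 γ)) (by positivity)
  have e2 : ∑' γ : ((S : Set (Ed d))ᶜ : Set (Ed d)), b γ * ‖ee (x - y) γ - 1‖ ≤ (δ / 4) * 2 := by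
    calc _ ≤ ∑' γ : ((S : Set (Ed d))ᶜ : Set (Ed d)), b γ * 2 :=
          (hs.subtype _).tsum_le_tsum (fun γ => mul_le_mul_of_nonneg_left (h2 γ) (hb0 γ)) ((hb.subtype _).mul_right 2)
      _ = (∑' γ : ((S : Set (Ed d))ᶜ : Set (Ed d)), b γ) * 2 := tsum_mul_right
      _ ≤ _ := by
        have : ∑' γ : ((S : Set (Ed d))ᶜ : Set (Ed d)), b γ < δ / 4 := hS
        linarith
  have e3 : B * (δ / (4 * (B + 1))) ≤ δ / 4 := by
    rw [mul_div_assoc', div_le_div_iff₀ (by positivity) (by positivity)]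
    nlinarith
  linarith

lemma trig_diff (a : Ed d → ℂ) (b : Ed d → ℝ) (hab : ∀ γ, ‖a γ‖ ≤ b γ) (hb : Summable b)
    (f : Ed d → ℂ) (hf : ∀ t, f t = ∑' γ, a γ * ee t γ) (s z : Ed d) :
    ‖f (z + s) - f z‖ ≤ ∑' γ, b γ * ‖ee s γ - 1‖ := by
  have hb0 : ∀ γ, 0 ≤ b γ := fun γ => (norm_nonneg _).trans (hab γ)
  have h2 : ∀ γ, ‖ee s γ - 1‖ ≤ 2 := fun γ => by
    refine (norm_sub_le _ _).trans ?_
    rw [ee_norm]; norm_num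
  have hs : Summable fun γ => b γ * ‖ee s γ - 1‖ :=
    (hb.mul_right 2).of_nonneg_of_le (fun γ => mul_nonneg (hb0 γ) (norm_nonneg _))
      (fun γ => mul_le_mul_of_nonneg_left (h2 γ) (hb0 γ))
  have hsum : ∀ t, Summable (fun γ => a γ * ee t γ) := fun t => by
    refine Summable.of_norm_bounded hb fun γ => ?_
    rw [norm_mul, ee_norm, mul_one]; exact hab γ
  rw [hf, hf, ← (hsum _).tsum_sub (hsum _)]
  refine tsum_of_norm_bounded hs.hasSum fun γ => ?_
  rw [← mul_sub, ee_add, ← mul_sub_one, norm_mul, norm_mul, ee_norm, one_mul]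
  exact mul_le_mul_of_nonneg_right (hab γ) (norm_nonneg _)

/-- simultaneous total boundedness for two scales -/
lemma Fe_TB {m : Ed d → ℂ} {C : ℝ}
    (HB : ∀ ε : ℝ, 0 < ε → ε ≤ 1 → ∃ a : Ed d → ℂ, Summable (fun γ => ‖a γ‖) ∧
      ∑' γ, ‖a γ‖ ≤ C ∧ ∀ t, Fe m ε t = ∑' γ, a γ * ee t γ)
    (ε : ℝ) (hε : 0 < ε) (hε1 : ε ≤ 1) (δ : ℝ) (hδ : 0 < δ) : ∃ X : Set (Ed d), X.Finite ∧
    ∀ x, ∃ y ∈ X, ∀ z, ‖Fe m ε (z + (x - y)) - Fe m ε z‖ < δ ∧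
      ‖Fe m (ε / 2) (z + (x - y)) - Fe m (ε / 2) z‖ < δ := by
  obtain ⟨a, ha, -, h⟩ := HB ε hε hε1
  obtain ⟨a', ha', -, h'⟩ := HB (ε / 2) (by positivity) (by linarith)
  obtain ⟨X, hX, hc⟩ := weightTB (fun γ => ‖a γ‖ + ‖a' γ‖) (fun γ => by positivity) (ha.add ha') δ hδ
  refine ⟨X, hX, fun x => ?_⟩
  obtain ⟨y, hy, hs⟩ := hc x
  refine ⟨y, hy, fun z => ⟨?_, ?_⟩⟩
  · exact (trig_diff a _ (fun γ => le_add_of_nonneg_right (norm_nonneg _)) (ha.add ha') _ h _ z).trans_lt hs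
  · exact (trig_diff a' _ (fun γ => le_add_of_nonneg_left (norm_nonneg _)) (ha.add ha') _ h' _ z).trans_lt hs

end PartB4

section PartB5
variable {d : ℕ}

lemma Fe_step {m : Ed d → ℂ} {E : Set (Ed d)} {β ε : ℝ} {t : Ed d}
    (hsep : ∀ l ∈ E ∩ Function.support m, ∀ l' ∈ E ∩ Function.support m, l ≠ l' → β ≤ ‖l - l'‖)
    (hε : 0 < ε) (hεβ : ε ≤ β / 2) (hball : ball t ε ⊆ E) (h : Fe m (ε / 2) t ≠ 0) :
    ∃ l ∈ E ∩ Function.support m, ‖l - t‖ < ε / 2 ∧ Fe m ε t = m l := by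
  obtain ⟨l, hl, hlt⟩ := Fe_ne (by positivity) h
  have hlE : l ∈ E := hball (by rw [mem_ball, dist_eq_norm]; linarith)
  refine ⟨l, ⟨hlE, hl⟩, hlt, Fe_single hε hlt.le fun x hx hxt => ?_⟩
  by_contra hne
  have h1 := hsep x ⟨hball (by rwa [mem_ball, dist_eq_norm]), hx⟩ l ⟨hlE, hl⟩ hne
  have h2 : ‖x - l‖ ≤ ‖x - t‖ + ‖l - t‖ := by
    rw [show x - l = (x - t) - (l - t) by abel]; exact norm_sub_le _ _
  linarith

lemma transfer2 (μ : PPM (Ed d)) (hlf : μ.locFinite) {C : ℝ}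
    (HB : ∀ ε : ℝ, 0 < ε → ε ≤ 1 → ∃ a : Ed d → ℂ, Summable (fun γ => ‖a γ‖) ∧
      ∑' γ, ‖a γ‖ ≤ C ∧ ∀ t, Fe μ.mass ε t = ∑' γ, a γ * ee t γ)
    (x : ℕ → Ed d) (R : ℕ → ℝ) (hR : Tendsto R atTop atTop)
    (E : Set (Ed d)) (hE : E = ⋃ n : ℕ, ball (x n) (R n))
    {β : ℝ} (hβ : 0 < β)
    (hsep : ∀ l ∈ E ∩ Function.support μ.mass, ∀ l' ∈ E ∩ Function.support μ.mass,
      l ≠ l' → β ≤ ‖l - l'‖) (u v : Ed d) (hu : μ.mass u ≠ 0) (hv : μ.mass v ≠ 0)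
    (η : ℝ) (hη : 0 < η) : ∃ p ∈ E ∩ Function.support μ.mass, ∃ q ∈ E ∩ Function.support μ.mass,
      ∃ s, ‖p - (u + s)‖ < η ∧ ‖q - (v + s)‖ < η ∧ ‖μ.mass p - μ.mass u‖ < η := by
  set m := μ.mass with hm
  have hu' := norm_pos_iff.2 hu
  have hv' := norm_pos_iff.2 hv
  set δ := min (η / 2) (min (‖m u‖ / 3) (‖m v‖ / 3)) with hδ
  have hδ0 : 0 < δ := by positivity
  have hd1 : δ ≤ η / 2 := min_le_left _ _
  have hd2 : δ ≤ ‖m u‖ / 3 := (min_le_right _ _).trans (min_le_left _ _)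
  have hd3 : δ ≤ ‖m v‖ / 3 := (min_le_right _ _).trans (min_le_right _ _)
  have hhalf : Tendsto (fun ε : ℝ => ε / 2) (𝓝[>] 0) (𝓝[>] 0) := by
    refine tendsto_nhdsWithin_iff.2 ⟨?_, ?_⟩
    · have : Tendsto (fun ε : ℝ => ε / 2) (𝓝 0) (𝓝 (0 / 2)) := (continuous_id.div_const 2).tendsto 0
      rw [zero_div] at this
      exact this.mono_left nhdsWithin_le_nhds
    · filter_upwards [self_mem_nhdsWithin] with ε hε
      exact half_pos (Set.mem_Ioi.1 hε)
  obtain ⟨ε, ⟨hε0, hε1⟩, h1, h2, h3⟩ : ∃ ε : ℝ, ε ∈ Set.Ioc 0 (min 1 (min (β / 2) η)) ∧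
      ‖Fe m ε u - m u‖ < δ ∧ ‖Fe m (ε / 2) u - m u‖ < δ ∧ ‖Fe m (ε / 2) v - m v‖ < δ := by
    have e1 := Metric.tendsto_nhds.1 (Fe_tendsto μ hlf u) δ hδ0
    have e2 := Metric.tendsto_nhds.1 ((Fe_tendsto μ hlf u).comp hhalf) δ hδ0
    have e3 := Metric.tendsto_nhds.1 ((Fe_tendsto μ hlf v).comp hhalf) δ hδ0
    have e4 : ∀ᶠ ε : ℝ in 𝓝[>] 0, ε ∈ Set.Ioc 0 (min 1 (min (β / 2) η)) :=
      Ioc_mem_nhdsGT (by positivity)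
    simp only [dist_eq_norm, Function.comp] at e1 e2 e3
    exact (e4.and (e1.and (e2.and e3))).exists
  have hε1' : ε ≤ 1 := hε1.trans (min_le_left _ _)
  have hεβ : ε ≤ β / 2 := hε1.trans ((min_le_right _ _).trans (min_le_left _ _))
  have hεη : ε ≤ η := hε1.trans ((min_le_right _ _).trans (min_le_right _ _))
  obtain ⟨X, hX, hTB⟩ := Fe_TB HB ε hε0 hε1' δ hδ0
  obtain ⟨ρ, hρ⟩ := hX.isBounded.exists_norm_le
  obtain ⟨n, hn⟩ := (hR.eventually_gt_atTop (ρ + ‖v - u‖ + 1)).exists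
  obtain ⟨y, hy, hyz⟩ := hTB (x n - u)
  set s := x n - u - y with hs
  have hy' := hρ y hy
  have hbu : ball (u + s) ε ⊆ E := by
    intro z hz
    rw [hE]
    refine Set.mem_iUnion.2 ⟨n, ?_⟩
    rw [mem_ball, dist_eq_norm] at hz ⊢
    have : z - x n = (z - (u + s)) - y := by rw [hs]; abel
    rw [this]
    have := norm_sub_le (z - (u + s)) y
    have := norm_nonneg (v - u)
    linarith
  have hbv : ball (v + s) ε ⊆ E := by
    intro z hz
    rw [hE]
    refine Set.mem_iUnion.2 ⟨n, ?_⟩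
    rw [mem_ball, dist_eq_norm] at hz ⊢
    have : z - x n = (z - (v + s)) - y + (v - u) := by rw [hs]; abel
    rw [this]
    have := norm_sub_le (z - (v + s)) y
    have := norm_add_le (z - (v + s) - y) (v - u)
    linarith
  have tri : ∀ A B D : ℂ, ‖A - B‖ < δ → ‖B - D‖ < δ → ‖A - D‖ < 2 * δ := by
    intro A B D h h'
    rw [show A - D = (A - B) + (B - D) by ring]
    have := norm_add_le (A - B) (B - D)
    linarith
  have hne : ∀ A D : ℂ, ‖A - D‖ < 2 * δ → δ ≤ ‖D‖ / 3 → A ≠ 0 := by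
    rintro A D h h' rfl
    rw [zero_sub, norm_neg] at h
    linarith
  obtain ⟨p, hp, hp1, hp2⟩ := Fe_step hsep hε0 hεβ hbu (hne _ _ (tri _ _ _ (hyz u).2 h2) hd2)
  obtain ⟨q, hq, hq1, hq2⟩ := Fe_step hsep hε0 hεβ hbv (hne _ _ (tri _ _ _ (hyz v).2 h3) hd3)
  refine ⟨p, hp, q, hq, s, by linarith, by linarith, ?_⟩
  have := tri _ _ _ (hyz u).1 h1
  rw [hp2] at this
  linarith

def Good (m : Ed d → ℂ) (δ : ℝ) (s : Ed d) : Prop :=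
  ∀ l, m l ≠ 0 → ∃ l', m l' ≠ 0 ∧ ‖l + s - l'‖ < δ ∧ ‖m l' - m l‖ < δ

lemma Good.add {m : Ed d → ℂ} {δ δ' : ℝ} {s s' : Ed d} (h : Good m δ s) (h' : Good m δ' s') :
    Good m (δ + δ') (s + s') := by
  intro l hl
  obtain ⟨l1, h1, h2, h3⟩ := h l hl
  obtain ⟨l2, h4, h5, h6⟩ := h' l1 h1
  refine ⟨l2, h4, ?_, ?_⟩
  · rw [show l + (s + s') - l2 = (l + s - l1) + (l1 + s' - l2) by abel]
    exact (norm_add_le _ _).trans_lt (add_lt_add h2 h5)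
  · rw [show m l2 - m l = (m l1 - m l) + (m l2 - m l1) by ring]
    exact (norm_add_le _ _).trans_lt (add_lt_add h3 h6)

lemma Good_TB {m : Ed d → ℂ} {C : ℝ}
    (HB : ∀ ε : ℝ, 0 < ε → ε ≤ 1 → ∃ a : Ed d → ℂ, Summable (fun γ => ‖a γ‖) ∧
      ∑' γ, ‖a γ‖ ≤ C ∧ ∀ t, Fe m ε t = ∑' γ, a γ * ee t γ)
    {β c : ℝ} (hβ : 0 < β) (hc : 0 < c) (hmass : ∀ l, m l ≠ 0 → c ≤ ‖m l‖)
    (hsep : ∀ l, m l ≠ 0 → ∀ l', m l' ≠ 0 → l ≠ l' → β ≤ ‖l - l'‖) (δ : ℝ) (hδ : 0 < δ) :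
    ∃ X : Set (Ed d), X.Finite ∧ ∀ x, ∃ y ∈ X, Good m δ (x - y) ∧ Good m δ (y - x) := by
  set ε := min 1 (min (β / 2) δ) with hε
  have hε0 : 0 < ε := by positivity
  have hε1 : ε ≤ 1 := (min_le_left _ _)
  have hεβ : ε ≤ β / 2 := ((min_le_right _ _).trans (min_le_left _ _))
  have hεδ : ε ≤ δ := ((min_le_right _ _).trans (min_le_right _ _))
  obtain ⟨X, hX, hTB⟩ := Fe_TB HB ε hε0 hε1 (min δ c) (by positivity)
  have hsep' : ∀ l ∈ Set.univ ∩ Function.support m, ∀ l' ∈ Set.univ ∩ Function.support m, l ≠ l' → β ≤ ‖l - l'‖ :=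
    fun l hl l' hl' => hsep l hl.2 l' hl'.2
  have hself : ∀ ε', 0 < ε' → ε' ≤ ε → ∀ l, m l ≠ 0 → Fe m ε' l = m l := by
    intro ε' h0 h1 l hl
    refine Fe_single h0 (by simp; linarith) fun x hx hxl => ?_
    by_contra hne
    linarith [hsep x hx l hl hne]
  have key : ∀ l s, m l ≠ 0 → ‖Fe m ε (l + s) - m l‖ < min δ c → ‖Fe m (ε / 2) (l + s) - m l‖ < min δ c →
      ∃ l', m l' ≠ 0 ∧ ‖l + s - l'‖ < δ ∧ ‖m l' - m l‖ < δ := by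
    intro l s hl h1 h2
    have hne : Fe m (ε / 2) (l + s) ≠ 0 := by
      intro h0
      rw [h0, zero_sub, norm_neg] at h2
      linarith [hmass l hl, min_le_right δ c]
    obtain ⟨l', hl', h3, h4⟩ := Fe_step hsep' hε0 hεβ (Set.subset_univ _) hne
    refine ⟨l', hl'.2, ?_, ?_⟩
    · rw [norm_sub_rev]; linarith
    · rw [← h4]; exact h1.trans_le (min_le_left _ _)
  refine ⟨X, hX, fun x => ?_⟩
  obtain ⟨y, hy, hyz⟩ := hTB x
  refine ⟨y, hy, fun l hl => ?_, fun l hl => ?_⟩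
  · obtain ⟨h1, h2⟩ := hyz l
    rw [hself ε hε0 le_rfl l hl] at h1
    rw [hself (ε / 2) (by positivity) (by linarith) l hl] at h2
    exact key l _ hl h1 h2
  · obtain ⟨h1, h2⟩ := hyz (l + (y - x))
    rw [show l + (y - x) + (x - y) = l by abel, norm_sub_rev] at h1 h2
    rw [hself ε hε0 le_rfl l hl] at h1
    rw [hself (ε / 2) (by positivity) (by linarith) l hl] at h2
    exact key l _ hl h1 h2

lemma sep_isol {m : Ed d → ℂ} {β : ℝ} (hβ : 0 < β)
    (hsep : ∀ l, m l ≠ 0 → ∀ l', m l' ≠ 0 → l ≠ l' → β ≤ ‖l - l'‖) (t : Ed d) :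
    ∃ δ, 0 < δ ∧ ∀ l, m l ≠ 0 → ‖l - t‖ < δ → l = t := by
  by_cases h : ∃ l, m l ≠ 0 ∧ ‖l - t‖ < β / 2 ∧ l ≠ t
  · obtain ⟨l, hl, hlt, hne⟩ := h
    have hpos : 0 < ‖l - t‖ := norm_pos_iff.2 (sub_ne_zero.2 hne)
    refine ⟨‖l - t‖, hpos, fun l' hl' h' => ?_⟩
    by_cases he : l = l'
    · subst he; exact absurd h' (lt_irrefl _)
    · have h1 := hsep l hl l' hl' he
      have h2 : ‖l - l'‖ ≤ ‖l - t‖ + ‖l' - t‖ := by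
        rw [show l - l' = (l - t) - (l' - t) by abel]; exact norm_sub_le _ _
      linarith
  · push Not at h
    exact ⟨β / 2, by positivity, fun l hl hlt => h l hl hlt⟩

lemma HAP_of {m : Ed d → ℂ} {β B : ℝ} (hβ : 0 < β) (hB : ∀ t, ‖m t‖ ≤ B)
    (hsep : ∀ l, m l ≠ 0 → ∀ l', m l' ≠ 0 → l ≠ l' → β ≤ ‖l - l'‖)
    (hTB : ∀ δ, 0 < δ → ∃ X : Set (Ed d), X.Finite ∧ ∀ x, ∃ y ∈ X, Good m δ (x - y) ∧ Good m δ (y - x))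
    (s : ℕ → Ed d) (t : Ed d) : Esh m s t = 0 ∨ Esh m s t = m t := by
  obtain ⟨δ₀, hδ₀, hiso⟩ := sep_isol hβ hsep t
  by_contra! hcon
  obtain ⟨h0, h1⟩ := hcon
  have p0 := norm_pos_iff.2 h0
  have p1 := norm_pos_iff.2 (sub_ne_zero.2 h1)
  set a := Esh m s t with ha
  set δ := min (δ₀ / 2) (min (‖a‖ / 2) (‖a - m t‖ / 4)) with hδ
  have hδ0 : 0 < δ := by positivity
  have hd1 : δ ≤ δ₀ / 2 := min_le_left _ _
  have hd2 : δ ≤ ‖a‖ / 2 := (min_le_right _ _).trans (min_le_left _ _)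
  have hd3 : δ ≤ ‖a - m t‖ / 4 := (min_le_right _ _).trans (min_le_right _ _)
  obtain ⟨X, hX, hc⟩ := hTB δ hδ0
  have hex : ∃ y ∈ X, ∀ᶠ k in (hyperfilter ℕ : Filter ℕ), Good m δ (s k - y) ∧ Good m δ (y - s k) := by
    have := (Ultrafilter.eventually_exists_mem_iff (f := hyperfilter ℕ) hX
      (P := fun y k => Good m δ (s k - y) ∧ Good m δ (y - s k))).1
      (Eventually.of_forall fun k => hc (s k))
    exact this
  obtain ⟨y, -, hy⟩ := hex
  have hE := Esh_ev hB s (mo t) hδ0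
  obtain ⟨j, hj1, hj2⟩ := (hy.and hE).exists
  obtain ⟨k, hk1, hk2⟩ := (hy.and hj2).exists
  rw [mo_mul, Lf_mo, Lf_mo, ← ha] at hk2
  have hg := hj1.2.add hk1.1
  by_cases hz : m (s j - s k + t) = 0
  · rw [hz, zero_sub, norm_neg] at hk2; linarith
  · obtain ⟨l, hl1, hl2, hl3⟩ := hg _ hz
    rw [show s j - s k + t + (y - s j + (s k - y)) - l = t - l by abel, norm_sub_rev] at hl2
    have := hiso l hl1 (by linarith)
    subst this
    have : ‖a - m l‖ ≤ ‖m (s j - s k + l) - a‖ + ‖m l - m (s j - s k + l)‖ := by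
      rw [show a - m l = -((m (s j - s k + l) - a) + (m l - m (s j - s k + l))) by ring, norm_neg]
      exact norm_add_le _ _
    linarith

/-- Everything about μ used afterwards. -/
lemma partB (μ μh : PPM (Ed d))
    (hμlf : μ.locFinite) (hμt : μ.temperate)
    (hμhlf : μh.locFinite) (hF : IsFT μ μh)
    (x : ℕ → Ed d) (R : ℕ → ℝ) (hR : Tendsto R atTop atTop)
    (E : Set (Ed d)) (hE : E = ⋃ n : ℕ, ball (x n) (R n))
    (c β : ℝ) (hc : 0 < c) (hβ : 0 < β)
    (hmass : ∀ l ∈ E ∩ Function.support μ.mass, c ≤ ‖μ.mass l‖)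
    (hsep : ∀ l ∈ E ∩ Function.support μ.mass, ∀ l' ∈ E ∩ Function.support μ.mass,
      l ≠ l' → β ≤ ‖l - l'‖)
    (hgrow : ∃ C : ℝ, ∀ᶠ r : ℝ in atTop,
      μh.var (ball 0 r) ≤ ENNReal.ofReal (C * r ^ d)) :
    (∀ l, μ.mass l ≠ 0 → ∀ l', μ.mass l' ≠ 0 → l ≠ l' → β ≤ ‖l - l'‖) ∧
    (∀ δ, 0 < δ → ∃ X : Set (Ed d), X.Finite ∧ ∀ x, ∃ y ∈ X, Good μ.mass δ (x - y) ∧ Good μ.mass δ (y - x)) ∧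
    (∃ l : List (Ed d → ℂ), l.sum = μ.mass ∧ ∀ f ∈ l, (∀ t, μ.mass t = 0 → f t = 0) ∧
      ∀ s : ℕ → Ed d, (∀ k, f (s k) ≠ 0) → ∃ j k, j < k ∧ ∀ t, f (t + (s k - s j)) = 0 ↔ f t = 0) ∧
    (∃ a : Ed d → ℂ, Summable (fun γ => ‖a γ‖) ∧ ∀ t, μ.mass t ≠ 0 → μ.mass t = ∑' γ, a γ * ee t γ) := by
  obtain ⟨C, hC, HB⟩ := B_main μ μh hμlf hμt hμhlf hF hgrow
  have HB' : ∀ ε : ℝ, 0 < ε → ε ≤ 1 → ∃ a : Ed d → ℂ, Summable (fun γ => ‖a γ‖) ∧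
      ∑' γ, ‖a γ‖ ≤ C ∧ ∀ t, Fe μ.mass ε t = ∑' γ, a γ * ee t γ := HB
  have hT := transfer2 μ hμlf HB' x R hR E hE hβ hsep
  have hmass' : ∀ l, μ.mass l ≠ 0 → c ≤ ‖μ.mass l‖ := by
    intro l hl
    refine le_of_forall_pos_le_add fun η hη => ?_
    obtain ⟨p, hp, q, hq, s, -, -, h⟩ := hT l l hl hl η hη
    have := hmass p hp
    have := norm_sub_norm_le (μ.mass p) (μ.mass l)
    linarith
  have hsep' : ∀ l, μ.mass l ≠ 0 → ∀ l', μ.mass l' ≠ 0 → l ≠ l' → β ≤ ‖l - l'‖ := by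
    intro l hl l' hl' hne
    have hpos : 0 < ‖l - l'‖ := norm_pos_iff.2 (sub_ne_zero.2 hne)
    refine le_of_forall_pos_le_add fun η hη => ?_
    obtain ⟨p, hp, q, hq, s, h1, h2, -⟩ := hT l l' hl hl' (min (η / 2) (‖l - l'‖ / 2)) (by positivity)
    have g1 := min_le_left (η / 2) (‖l - l'‖ / 2)
    have g2 := min_le_right (η / 2) (‖l - l'‖ / 2)
    have hpq : p ≠ q := by
      rintro rfl
      have : ‖l - l'‖ ≤ ‖p - (l' + s)‖ + ‖p - (l + s)‖ := by
        rw [show l - l' = (p - (l' + s)) - (p - (l + s)) by abel]; exact norm_sub_le _ _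
      linarith
    have h3 := hsep p hp q hq hpq
    have h4 : ‖p - q‖ ≤ ‖p - (l + s)‖ + ‖l - l'‖ + ‖q - (l' + s)‖ := by
      rw [show p - q = (p - (l + s)) + (l - l') - (q - (l' + s)) by abel]
      exact (norm_sub_le _ _).trans (by gcongr; exact norm_add_le _ _)
    linarith
  have hGTB := Good_TB HB' hβ hc hmass' hsep'
  have hBB := BB_of μ hμlf C hC HB'
  refine ⟨hsep', hGTB, ?_, ?_⟩
  · refine partA eH_norm hBB hc (fun t => ?_) (HAP_of hβ (hBB.bound eH_norm) hsep' hGTB)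
    by_cases h : μ.mass t = 0
    · exact Or.inl h
    · exact Or.inr (hmass' t h)
  · obtain ⟨a, ha, -, h⟩ := HB' (min 1 β) (by positivity) (min_le_left _ _)
    refine ⟨a, ha, fun t ht => ?_⟩
    rw [← h, Fe_single (by positivity) (l := t) (by simp; positivity)]
    intro y hy hyt
    by_contra hne
    linarith [hsep' y hy t ht hne, min_le_right 1 β]

end PartB5

section PartC1
variable {d : ℕ}

def perG (f : Ed d → ℂ) : AddSubgroup (Ed d) where
  carrier := {h | ∀ t, f (t + h) = 0 ↔ f t = 0}
  zero_mem' := fun t => by rw [add_zero]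
  add_mem' := fun {a b} ha hb t => by rw [← add_assoc, hb, ha]
  neg_mem' := fun {a} ha t => by rw [← ha (t + -a), neg_add_cancel_right]

lemma perG_finite (f : Ed d → ℂ)
    (h : ∀ s : ℕ → Ed d, (∀ k, f (s k) ≠ 0) → ∃ j k, j < k ∧ ∀ t, f (t + (s k - s j)) = 0 ↔ f t = 0) :
    ∃ A : Set (Ed d), A.Finite ∧ ∀ x, f x ≠ 0 ↔ ∃ a ∈ A, x - a ∈ perG f := by
  set π : Ed d → Ed d ⧸ perG f := fun x => (x : Ed d ⧸ perG f) with hπ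
  have hfin : (π '' {x | f x ≠ 0}).Finite := by
    by_contra hinf
    have e := Set.Infinite.natEmbedding _ hinf
    choose s hs1 hs2 using fun k => (e k).2
    obtain ⟨j, k, hjk, hp⟩ := h s hs1
    have : π (s j) = π (s k) := by
      simp only [hπ]
      rw [QuotientAddGroup.eq, neg_add_eq_sub]
      exact hp
    rw [hs2, hs2] at this
    exact hjk.ne (e.injective (Subtype.ext this))
  choose! g hg1 hg2 using fun v (hv : v ∈ π '' {x | f x ≠ 0}) => hv
  refine ⟨g '' (π '' {x | f x ≠ 0}), hfin.image _, fun x => ⟨fun hx => ?_, ?_⟩⟩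
  · refine ⟨_, ⟨_, ⟨x, hx, rfl⟩, rfl⟩, ?_⟩
    have := hg2 (π x) ⟨x, hx, rfl⟩
    simp only [hπ] at this
    rw [QuotientAddGroup.eq, neg_add_eq_sub] at this
    exact this
  · rintro ⟨_, ⟨v, hv, rfl⟩, hx⟩
    have h1 := hx (g v)
    rw [add_sub_cancel] at h1
    exact fun h0 => hg1 v hv (h1.1 h0)

lemma C_cosets (m : Ed d → ℂ) (l : List (Ed d → ℂ)) (hl : l.sum = m)
    (h : ∀ f ∈ l, (∀ t, m t = 0 → f t = 0) ∧
      ∀ s : ℕ → Ed d, (∀ k, f (s k) ≠ 0) → ∃ j k, j < k ∧ ∀ t, f (t + (s k - s j)) = 0 ↔ f t = 0) :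
    ∃ P : Set (AddSubgroup (Ed d) × Ed d), P.Finite ∧ ∀ x, m x ≠ 0 ↔ ∃ p ∈ P, x - p.2 ∈ p.1 := by
  choose! A hA1 hA2 using fun f hf => perG_finite f (h f hf).2
  have hlf : {f | f ∈ l}.Finite := List.finite_toSet l
  refine ⟨⋃ f ∈ {f | f ∈ l}, (fun a => (perG f, a)) '' A f,
    hlf.biUnion fun f hf => (hA1 f hf).image _, fun x => ⟨fun hx => ?_, ?_⟩⟩
  · have : ∃ f ∈ l, f x ≠ 0 := by
      by_contra! hcon
      apply hx
      rw [← hl]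
      clear hl h hA1 hA2 hlf
      induction l with
      | nil => rfl
      | cons f l ih =>
        rw [List.sum_cons, Pi.add_apply, hcon f (by simp), ih (fun g hg => hcon g (by simp [hg])), zero_add]
    obtain ⟨f, hf, hfx⟩ := this
    obtain ⟨a, ha, hxa⟩ := (hA2 f hf x).1 hfx
    refine ⟨(perG f, a), ?_, hxa⟩
    simp only [Set.mem_iUnion]
    exact ⟨f, hf, a, ha, rfl⟩
  · rintro ⟨p, hp, hx⟩ h0
    simp only [Set.mem_iUnion] at hp
    obtain ⟨f, hf, a, ha, rfl⟩ := hp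
    exact (hA2 f hf x).2 ⟨a, ha, hx⟩ ((h f hf).1 x h0)

lemma cocompact_of_span (H : AddSubgroup (Ed d)) (h : Submodule.span ℝ (H : Set (Ed d)) = ⊤) :
    ∃ D : ℝ, ∀ x : Ed d, ∃ g ∈ H, ‖x - g‖ ≤ D := by
  set b := Module.Basis.ofSpan h.ge with hb
  have hbH : Set.range b ⊆ H := Module.Basis.ofSpan_subset h.ge
  clear_value b
  have : Finite _ := Module.Finite.finite_basis b
  have := Fintype.ofFinite ((linearIndepOn_empty ℝ (id : Ed d → Ed d)).extend (Set.empty_subset (H : Set (Ed d))))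
  refine ⟨∑ i, ‖b i‖, fun x => ⟨ZSpan.floor b x, ?_, ?_⟩⟩
  · have h1 : Submodule.span ℤ (Set.range b) ≤ H.toIntSubmodule := Submodule.span_le.2 hbH
    exact h1 (ZSpan.floor b x).2
  · rw [← ZSpan.fract_apply]; exact ZSpan.norm_fract_le b x

lemma far_center (P : Set (Submodule ℝ (Ed d) × Ed d)) (hP : P.Finite) (hW : ∀ p ∈ P, p.1 ≠ ⊤) (r : ℝ) :
    ∃ z : Ed d, ∀ p ∈ P, ∀ w ∈ p.1, r < ‖p.2 + w - z‖ := by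
  obtain ⟨v, hv⟩ : ∃ v : Ed d, ∀ p ∈ P, v ∉ p.1 := by
    have h1 := Subspace.biUnion_ne_univ_of_top_notMem (k := ℝ) (E := Ed d)
      (s := (hP.image Prod.fst).toFinset) (by
        simp only [Set.Finite.mem_toFinset, Set.mem_image, not_exists, not_and]
        exact fun p hp h => hW p hp h)
    rw [Set.ne_univ_iff_exists_notMem] at h1
    obtain ⟨v, hv⟩ := h1
    refine ⟨v, fun p hp h => hv ?_⟩
    simp only [Set.mem_iUnion]
    exact ⟨p.1, by simpa using ⟨p.2, hp⟩, h⟩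
  have hd : ∀ p ∈ P, ∃ N : ℕ, ∀ n ≥ N, ∀ w ∈ p.1, r < ‖p.2 + w - (n:ℝ) • v‖ := by
    intro p hp
    have hcl : IsClosed (p.1 : Set (Ed d)) := p.1.closed_of_finiteDimensional
    have hpos : 0 < infDist v (p.1 : Set (Ed d)) :=
      (hcl.notMem_iff_infDist_pos ⟨0, p.1.zero_mem⟩).1 (hv p hp)
    obtain ⟨N, hN⟩ := exists_nat_gt ((‖p.2‖ + |r|) / infDist v (p.1 : Set (Ed d)))
    refine ⟨N + 1, fun n hn w hw => ?_⟩
    have hn' : (N : ℝ) + 1 ≤ n := by exact_mod_cast hn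
    have hN0 : (0:ℝ) ≤ N := N.cast_nonneg
    have hn0 : (0 : ℝ) < n := by linarith
    have h1 : infDist v (p.1 : Set (Ed d)) ≤ dist v ((n:ℝ)⁻¹ • w) :=
      infDist_le_dist_of_mem (p.1.smul_mem _ hw)
    have h2 : ‖w - (n:ℝ) • v‖ = n * dist v ((n:ℝ)⁻¹ • w) := by
      rw [dist_eq_norm, norm_sub_rev, ← Real.norm_of_nonneg hn0.le, ← norm_smul, smul_sub, smul_smul,
        Real.norm_of_nonneg hn0.le, mul_inv_cancel₀ hn0.ne', one_smul]
    have h3 : ‖w - (n:ℝ) • v‖ ≤ ‖p.2 + w - (n:ℝ) • v‖ + ‖p.2‖ := by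
      rw [show w - (n:ℝ) • v = (p.2 + w - (n:ℝ) • v) - p.2 by abel]
      exact norm_sub_le _ _
    rw [div_lt_iff₀ hpos] at hN
    have h4 : (N:ℝ) * infDist v (p.1 : Set (Ed d)) ≤ n * dist v ((n:ℝ)⁻¹ • w) := by
      apply mul_le_mul (by linarith) h1 hpos.le hn0.le
    linarith [le_abs_self r]
  choose! N hN using hd
  obtain ⟨n, hn⟩ := (hP.image N).bddAbove
  exact ⟨(n:ℝ) • v, fun p hp => hN p hp n (hn ⟨p, hp, rfl⟩)⟩

end PartC1

section PartC2
variable {d : ℕ}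

lemma C_fullrank (m : Ed d → ℂ) {β : ℝ} (hβ : 0 < β)
    (hsep : ∀ l, m l ≠ 0 → ∀ l', m l' ≠ 0 → l ≠ l' → β ≤ ‖l - l'‖)
    (hTB : ∀ δ, 0 < δ → ∃ X : Set (Ed d), X.Finite ∧ ∀ x, ∃ y ∈ X, Good m δ (x - y) ∧ Good m δ (y - x))
    (P : Set (AddSubgroup (Ed d) × Ed d)) (hP : P.Finite)
    (hm : ∀ x, m x ≠ 0 ↔ ∃ p ∈ P, x - p.2 ∈ p.1) :
    ∃ Q : Set (AddSubgroup (Ed d) × Ed d), Q.Finite ∧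
      (∀ p ∈ Q, Submodule.span ℝ (p.1 : Set (Ed d)) = ⊤) ∧ ∀ x, m x ≠ 0 ↔ ∃ p ∈ Q, x - p.2 ∈ p.1 := by
  set G := {p ∈ P | Submodule.span ℝ (p.1 : Set (Ed d)) = ⊤} with hG
  have hGf : G.Finite := hP.subset fun p hp => hp.1
  have hδk : ∀ k : ℕ, (0:ℝ) < 1 / ((k:ℝ) + 1) := fun k => by positivity
  -- choice of the almost periods
  have hτ : ∀ k : ℕ, ∃ τ : Ed d, Good m (1 / ((k:ℝ) + 1)) τ ∧ Good m (1 / ((k:ℝ) + 1)) (-τ) ∧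
      ∀ x, m x ≠ 0 → ‖x - τ‖ ≤ k → ∃ p ∈ G, x - p.2 ∈ p.1 := by
    intro k
    obtain ⟨X, hX, hc⟩ := hTB _ (hδk k)
    obtain ⟨ρ, hρ⟩ := hX.isBounded.exists_norm_le
    obtain ⟨z, hz⟩ := far_center ((fun p => (Submodule.span ℝ (p.1 : Set (Ed d)), p.2)) '' (P \ G))
      ((hP.subset Set.diff_subset).image _) (by
        rintro _ ⟨p, hp, rfl⟩ htop
        exact hp.2 ⟨hp.1, htop⟩) (k + ρ)
    obtain ⟨y, hy, h1, h2⟩ := hc z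
    refine ⟨z - y, h1, by rwa [neg_sub], fun x hx hxz => ?_⟩
    obtain ⟨p, hp, hxp⟩ := (hm x).1 hx
    by_cases hpG : p ∈ G
    · exact ⟨p, hpG, hxp⟩
    · exfalso
      have h3 := hz _ ⟨p, ⟨hp, hpG⟩, rfl⟩ (x - p.2) (Submodule.subset_span hxp)
      simp only [add_sub_cancel] at h3
      have h4 : ‖x - z‖ ≤ ‖x - (z - y)‖ + ‖y‖ := by
        rw [show x - z = (x - (z - y)) - y by abel]; exact norm_sub_le _ _
      linarith [hρ y hy]
  choose τ hτ1 hτ2 hτ3 using hτ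
  -- bounded representatives
  have hb : ∀ p ∈ G, ∃ b : Ed d, ∃ bk : ℕ → Ed d, (∀ k, bk k - (p.2 - τ k) ∈ p.1) ∧
      Tendsto bk (hyperfilter ℕ : Filter ℕ) (𝓝 b) := by
    intro p hp
    obtain ⟨D, hD⟩ := cocompact_of_span p.1 hp.2
    choose h hh1 hh2 using fun k => hD (p.2 - τ k)
    obtain ⟨b, -, hb⟩ := (isCompact_closedBall (0 : Ed d) D).ultrafilter_le_nhds
      ((hyperfilter ℕ).map fun k => p.2 - τ k - h k) (by
        simp only [le_principal_iff, Ultrafilter.mem_coe, Ultrafilter.mem_map]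
        refine Filter.univ_mem' (fun k => ?_)
        simpa using hh2 k)
    refine ⟨b, fun k => p.2 - τ k - h k, fun k => ?_, hb⟩
    rw [sub_sub_cancel_left]
    exact neg_mem (hh1 k)
  choose! b bk hbk hbt using hb
  have hinv : Tendsto (fun k : ℕ => 1 / ((k:ℝ) + 1)) (hyperfilter ℕ : Filter ℕ) (𝓝 0) :=
    (tendsto_one_div_add_atTop_nhds_zero_nat (𝕜 := ℝ)).mono_left
      (by rw [← Nat.cofinite_eq_atTop]; exact hyperfilter_le_cofinite)
  have hlarge : ∀ r : ℝ, ∀ᶠ k : ℕ in (hyperfilter ℕ : Filter ℕ), r ≤ k := fun r => by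
    have : ∀ᶠ k : ℕ in atTop, r ≤ k := tendsto_natCast_atTop_atTop.eventually_ge_atTop r
    exact this.filter_mono (by rw [← Nat.cofinite_eq_atTop]; exact hyperfilter_le_cofinite)
  have hsup : ∀ p ∈ G, ∀ x, x - b p ∈ p.1 → m x ≠ 0 := by
    intro p hp x hx
    obtain ⟨δ, hδ, hiso⟩ := sep_isol hβ hsep x
    have e1 := Metric.tendsto_nhds.1 (hbt p hp) (δ / 2) (by positivity)
    have e2 := hinv.eventually (gt_mem_nhds (show 0 < δ / 2 by positivity))
    obtain ⟨k, hk1, hk2⟩ := (e1.and e2).exists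
    have hmem : m (bk p k + (x - b p) + τ k) ≠ 0 := by
      rw [hm]
      refine ⟨p, hp.1, ?_⟩
      rw [show bk p k + (x - b p) + τ k - p.2 = (bk p k - (p.2 - τ k)) + (x - b p) by abel]
      exact add_mem (hbk p hp k) hx
    obtain ⟨l, hl1, hl2, -⟩ := hτ2 k _ hmem
    have : ‖l - x‖ < δ := by
      rw [show l - x = (bk p k - b p) - (bk p k + (x - b p) + τ k + -τ k - l) by abel]
      refine (norm_sub_le _ _).trans_lt ?_
      rw [dist_eq_norm] at hk1
      linarith
    rw [← hiso l hl1 this]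
    exact hl1
  refine ⟨(fun p => (p.1, b p)) '' G, hGf.image _, ?_, fun x => ⟨fun hx => ?_, ?_⟩⟩
  · rintro _ ⟨p, hp, rfl⟩; exact hp.2
  · obtain ⟨δ, hδ, hiso⟩ := sep_isol hβ hsep x
    have hex : ∀ k, ∃ l, m l ≠ 0 ∧ ‖x + τ k - l‖ < 1 / ((k:ℝ) + 1) := fun k => by
      obtain ⟨l, h1, h2, -⟩ := hτ1 k x hx
      exact ⟨l, h1, h2⟩
    choose l hl1 hl2 using hex
    have hev : ∀ᶠ k in (hyperfilter ℕ : Filter ℕ), ∃ p ∈ G, l k - p.2 ∈ p.1 := by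
      filter_upwards [hlarge (‖x‖ + 1)] with k hk
      refine hτ3 k (l k) (hl1 k) ?_
      have h1 : (1:ℝ) / (k + 1) ≤ 1 := by
        rw [div_le_one (by positivity)]; linarith [Nat.cast_nonneg (α := ℝ) k]
      rw [show l k - τ k = x - (x + τ k - l k) by abel]
      refine (norm_sub_le _ _).trans ?_
      linarith [hl2 k]
    obtain ⟨p, hp, hev⟩ := (Ultrafilter.eventually_exists_mem_iff (f := hyperfilter ℕ) hGf
      (P := fun p k => l k - p.2 ∈ p.1)).1 hev
    have e1 := Metric.tendsto_nhds.1 (hbt p hp) (δ / 2) (by positivity)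
    have e2 := hinv.eventually (gt_mem_nhds (show 0 < δ / 2 by positivity))
    obtain ⟨k, hk0, hk1, hk2⟩ := (hev.and (e1.and e2)).exists
    refine ⟨_, ⟨p, hp, rfl⟩, ?_⟩
    show x - b p ∈ p.1
    have hy : (l k - τ k - bk p k + b p) - b p ∈ p.1 := by
      rw [show (l k - τ k - bk p k + b p) - b p = (l k - p.2) - (bk p k - (p.2 - τ k)) by abel]
      exact sub_mem hk0 (hbk p hp k)
    have : ‖(l k - τ k - bk p k + b p) - x‖ < δ := by
      rw [show (l k - τ k - bk p k + b p) - x = -(x + τ k - l k) - (bk p k - b p) by abel]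
      refine (norm_sub_le _ _).trans_lt ?_
      rw [dist_eq_norm] at hk1
      rw [norm_neg]
      linarith [hl2 k]
    have h3 := hiso _ (hsup p hp _ hy) this
    rwa [h3] at hy
  · rintro ⟨_, ⟨p, hp, rfl⟩, hxp⟩
    exact hsup p hp x hxp

end PartC2

section PartD1
variable {d : ℕ}

lemma D_relIndex (m : Ed d → ℂ) {β : ℝ} (hβ : 0 < β)
    (hsep : ∀ l, m l ≠ 0 → ∀ l', m l' ≠ 0 → l ≠ l' → β ≤ ‖l - l'‖)
    (L M : AddSubgroup (Ed d)) (x : Ed d) (hL : ∀ l ∈ L, m (x + l) ≠ 0)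
    (hM : ∀ l ∈ M, m (x + l) ≠ 0) (hspan : Submodule.span ℝ (M : Set (Ed d)) = ⊤) :
    M.relIndex L ≠ 0 := by
  intro h0
  have hinf : Infinite (L ⧸ M.addSubgroupOf L) := by
    rw [AddSubgroup.relIndex, AddSubgroup.index, Nat.card_eq_zero] at h0
    rcases h0 with h0 | h0
    · exact absurd (⟨((0 : L) : L ⧸ M.addSubgroupOf L)⟩ : Nonempty _) (not_nonempty_iff.mpr h0)
    · exact h0
  obtain ⟨D, hD⟩ := cocompact_of_span M hspan
  let e := Infinite.natEmbedding (L ⧸ M.addSubgroupOf L)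
  let s : ℕ → L := fun i => (e i).out
  choose g hg hgD using fun i => hD (s i : Ed d)
  obtain ⟨a, -, φ, hφ, hlim⟩ := (isCompact_closedBall (0 : Ed d) D).tendsto_subseq
    (x := fun i => (s i : Ed d) - g i) (fun i => by simpa using hgD i)
  obtain ⟨N, hN⟩ := Metric.cauchySeq_iff'.1 hlim.cauchySeq β hβ
  have h1 := hN (N + 1) (Nat.le_succ N)
  set i := φ (N + 1)
  set j := φ N
  have hij : i ≠ j := (hφ (Nat.lt_succ_self N)).ne'
  simp only [Function.comp, dist_eq_norm] at h1
  have h2 : x + ((s i : Ed d) - s j) = x + (g i - g j) := by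
    by_contra hne
    have := hsep _ (hL _ (L.sub_mem (s i).2 (s j).2)) _ (hM _ (M.sub_mem (hg i) (hg j))) hne
    refine absurd h1 (not_lt.2 (this.trans (le_of_eq ?_)))
    congr 1
    change _ = ((s i : Ed d) - g i) - ((s j : Ed d) - g j)
    abel
  have h3 : (s i : Ed d) - s j ∈ M := by
    rw [add_left_cancel h2]; exact M.sub_mem (hg i) (hg j)
  apply hij
  apply e.injective
  have h4 : ((s j : L) : L ⧸ M.addSubgroupOf L) = (s i : L) := by
    rw [QuotientAddGroup.eq, AddSubgroup.mem_addSubgroupOf]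
    have : ((-s j + s i : L) : Ed d) = (s i : Ed d) - s j := by push_cast; abel
    rw [this]; exact h3
  have h5 : ∀ k, ((s k : L) : L ⧸ M.addSubgroupOf L) = e k := fun k => Quotient.out_eq' _
  rw [← h5 i, ← h5 j, h4]

open Classical in
/-- Common refinement of the lattices. -/
def refineM (Q : Set (AddSubgroup (Ed d) × Ed d)) (p : AddSubgroup (Ed d)) : AddSubgroup (Ed d) :=
  ⨅ q : {q : AddSubgroup (Ed d) × Ed d // q ∈ Q ∧ AddSubgroup.Commensurable p q.1}, q.1.1

lemma D_refine_congr (Q : Set (AddSubgroup (Ed d) × Ed d)) {p p' : AddSubgroup (Ed d)}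
    (h : AddSubgroup.Commensurable p p') : refineM Q p = refineM Q p' := by
  apply le_antisymm
  · refine le_iInf fun q => ?_
    exact iInf_le_of_le ⟨q.1, q.2.1, h.trans q.2.2⟩ le_rfl
  · refine le_iInf fun q => ?_
    exact iInf_le_of_le ⟨q.1, q.2.1, h.symm.trans q.2.2⟩ le_rfl

lemma D_refine (Q : Set (AddSubgroup (Ed d) × Ed d)) (hQ : Q.Finite)
    (hspan : ∀ p ∈ Q, Submodule.span ℝ (p.1 : Set (Ed d)) = ⊤) (p) (hp : p ∈ Q) :
    refineM Q p.1 ≤ p.1 ∧ (refineM Q p.1).relIndex p.1 ≠ 0 ∧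
      Submodule.span ℝ (refineM Q p.1 : Set (Ed d)) = ⊤ := by
  have hle : refineM Q p.1 ≤ p.1 := iInf_le_of_le ⟨p, hp, AddSubgroup.Commensurable.refl _⟩ le_rfl
  have hri : (refineM Q p.1).relIndex p.1 ≠ 0 := by
    have : Finite {q : AddSubgroup (Ed d) × Ed d // q ∈ Q ∧ AddSubgroup.Commensurable p.1 q.1} :=
      (hQ.subset (fun q hq => hq.1 : {q | q ∈ Q ∧ AddSubgroup.Commensurable p.1 q.1} ⊆ Q)).to_subtype
    exact AddSubgroup.relIndex_iInf_ne_zero fun q => q.2.2.2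
  refine ⟨hle, hri, ?_⟩
  rw [eq_top_iff, ← hspan p hp, Submodule.span_le]
  intro a ha
  obtain ⟨n, hn, -, hna⟩ := AddSubgroup.exists_nsmul_mem_of_relIndex_ne_zero hri ha
  have hn' : (n : ℝ) ≠ 0 := by exact_mod_cast hn.ne'
  have : a = (n : ℝ)⁻¹ • (n • a) := by
    rw [← Nat.cast_smul_eq_nsmul ℝ, smul_smul, inv_mul_cancel₀ hn', one_smul]
  rw [this]
  exact Submodule.smul_mem _ _ (Submodule.subset_span hna.1)

/-- Disjoint refinement. -/
lemma D_family (m : Ed d → ℂ) {β : ℝ} (hβ : 0 < β)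
    (hsep : ∀ l, m l ≠ 0 → ∀ l', m l' ≠ 0 → l ≠ l' → β ≤ ‖l - l'‖)
    (Q : Set (AddSubgroup (Ed d) × Ed d)) (hQ : Q.Finite)
    (hspan : ∀ p ∈ Q, Submodule.span ℝ (p.1 : Set (Ed d)) = ⊤)
    (hm : ∀ x, m x ≠ 0 ↔ ∃ p ∈ Q, x - p.2 ∈ p.1) :
    ∃ F : Set (Set (Ed d)), F.Finite ∧ (∀ S ∈ F, ∃ (x : Ed d) (M : AddSubgroup (Ed d)),
      Submodule.span ℝ (M : Set (Ed d)) = ⊤ ∧ S = {y | y - x ∈ M}) ∧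
      (∀ S ∈ F, ∀ S' ∈ F, ∀ y, y ∈ S → y ∈ S' → S = S') ∧
      ∀ x, m x ≠ 0 ↔ ∃ S ∈ F, x ∈ S := by
  let F : Set (Set (Ed d)) := {S | ∃ p ∈ Q, ∃ x, x - p.2 ∈ p.1 ∧ S = {y | y - x ∈ refineM Q p.1}}
  refine ⟨F, ?_, ?_, ?_, ?_⟩
  · have : F = ⋃ p ∈ Q, {S | ∃ x, x - p.2 ∈ p.1 ∧ S = {y | y - x ∈ refineM Q p.1}} := by
      ext S; simp only [F, Set.mem_setOf_eq, Set.mem_iUnion, exists_prop]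
    rw [this]
    refine hQ.biUnion fun p hp => ?_
    obtain ⟨hle, hri, -⟩ := D_refine Q hQ hspan p hp
    set M := refineM Q p.1
    have hfin : Finite (p.1 ⧸ M.addSubgroupOf p.1) := by
      have : Nat.card (p.1 ⧸ M.addSubgroupOf p.1) ≠ 0 := hri
      exact Nat.finite_of_card_ne_zero this
    refine (Set.finite_range (fun z : p.1 ⧸ M.addSubgroupOf p.1 =>
      {y : Ed d | y - (p.2 + (z.out : p.1)) ∈ M})).subset ?_
    rintro S ⟨x, hx, rfl⟩
    refine ⟨((⟨x - p.2, hx⟩ : p.1) : p.1 ⧸ M.addSubgroupOf p.1), ?_⟩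
    ext y
    simp only [Set.mem_setOf_eq]
    set z := ((⟨x - p.2, hx⟩ : p.1) : p.1 ⧸ M.addSubgroupOf p.1)
    have h1 : ((z.out : p.1) : p.1 ⧸ M.addSubgroupOf p.1) = z := Quotient.out_eq' _
    have h2 := QuotientAddGroup.eq.1 h1
    rw [AddSubgroup.mem_addSubgroupOf] at h2
    have h3 : (((-z.out + ⟨x - p.2, hx⟩ : p.1)) : Ed d) = x - (p.2 + (z.out : p.1)) := by
      push_cast; abel
    rw [h3] at h2
    have h4 : y - (p.2 + (z.out : p.1)) = (y - x) + (x - (p.2 + (z.out : p.1))) := by abel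
    rw [h4]
    exact AddSubgroup.add_mem_cancel_right M h2
  · rintro S ⟨p, hp, x, hx, rfl⟩
    exact ⟨x, _, (D_refine Q hQ hspan p hp).2.2, rfl⟩
  · rintro S ⟨p, hp, x, hx, rfl⟩ S' ⟨p', hp', x', hx', rfl⟩ y hy hy'
    simp only [Set.mem_setOf_eq] at hy hy'
    have hle := (D_refine Q hQ hspan p hp).1
    have hle' := (D_refine Q hQ hspan p' hp').1
    have hyp : ∀ l ∈ p.1, m (y + l) ≠ 0 := fun l hl => (hm _).2 ⟨p, hp, by
      have : y + l - p.2 = (y - x) + (x - p.2) + l := by abel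
      rw [this]; exact p.1.add_mem (p.1.add_mem (hle hy) hx) hl⟩
    have hyp' : ∀ l ∈ p'.1, m (y + l) ≠ 0 := fun l hl => (hm _).2 ⟨p', hp', by
      have : y + l - p'.2 = (y - x') + (x' - p'.2) + l := by abel
      rw [this]; exact p'.1.add_mem (p'.1.add_mem (hle' hy') hx') hl⟩
    have hc : AddSubgroup.Commensurable p.1 p'.1 :=
      ⟨D_relIndex m hβ hsep _ _ y hyp' hyp (hspan p hp),
        D_relIndex m hβ hsep _ _ y hyp hyp' (hspan p' hp')⟩
    have he := D_refine_congr Q hc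
    rw [← he] at hy' ⊢
    ext w
    simp only [Set.mem_setOf_eq]
    have : w - x = (w - x') + ((y - x) - (y - x')) := by abel
    rw [this]
    exact AddSubgroup.add_mem_cancel_right _ (AddSubgroup.sub_mem _ hy hy')
  · intro x
    rw [hm]
    constructor
    · rintro ⟨p, hp, hx⟩
      exact ⟨_, ⟨p, hp, x, hx, rfl⟩, by simp [AddSubgroup.zero_mem]⟩
    · rintro ⟨S, ⟨p, hp, y, hy, rfl⟩, hx⟩
      refine ⟨p, hp, ?_⟩
      have : x - p.2 = (x - y) + (y - p.2) := by abel
      rw [this]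
      exact p.1.add_mem ((D_refine Q hQ hspan p hp).1 hx) hy

end PartD1

section PartD2
variable {d : ℕ}

lemma D_lattice {β : ℝ} (hβ : 0 < β) (M : AddSubgroup (Ed d))
    (hsepM : ∀ h ∈ M, h ≠ 0 → β ≤ ‖h‖)
    (hspan : Submodule.span ℝ (M : Set (Ed d)) = ⊤) :
    ∃ T : Ed d ≃ₗ[ℝ] Ed d, ∀ x, latt T x = {y | y - x ∈ M} := by
  let L : Submodule ℤ (Ed d) := AddSubgroup.toIntSubmodule M
  have hdisc : DiscreteTopology L := by
    refine DiscreteTopology.of_forall_le_norm hβ fun x hx => ?_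
    exact hsepM x.1 x.2 (fun h => hx (Subtype.ext h))
  have hz : IsZLattice ℝ L := ⟨hspan⟩
  have hfree := ZLattice.module_free ℝ L
  have hfin := ZLattice.module_finite ℝ L
  have hr : Module.finrank ℤ L = d := by rw [ZLattice.rank ℝ L]; simp
  let b : Module.Basis (Fin d) ℤ L := Module.finBasisOfFinrankEq ℤ L hr
  let B := b.ofZLatticeBasis ℝ L
  let e := (EuclideanSpace.basisFun (Fin d) ℝ).toBasis
  let T := e.equiv B (Equiv.refl _)
  have hT : ∀ k : Fin d → ℤ, T ((WithLp.equiv 2 (Fin d → ℝ)).symm fun i => (k i : ℝ))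
      = ((∑ i, k i • b i : L) : Ed d) := by
    intro k
    have h1 : ((WithLp.equiv 2 (Fin d → ℝ)).symm fun i => (k i : ℝ)) = ∑ i, (k i : ℝ) • e i := by
      have := e.sum_repr ((WithLp.equiv 2 (Fin d → ℝ)).symm fun i => (k i : ℝ))
      rw [← this]
      refine Finset.sum_congr rfl fun i _ => ?_
      simp [e]
    rw [h1, map_sum]
    push_cast
    refine Finset.sum_congr rfl fun i _ => ?_
    rw [map_smul, Module.Basis.equiv_apply]
    simp [B, Int.cast_smul_eq_zsmul]
  refine ⟨T, fun x => ?_⟩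
  ext y
  simp only [latt, Set.mem_setOf_eq]
  constructor
  · rintro ⟨k, rfl⟩
    rw [hT, add_sub_cancel_right]
    exact (∑ i, k i • b i : L).2
  · intro hy
    refine ⟨fun i => b.repr ⟨y - x, hy⟩ i, ?_⟩
    rw [hT, b.sum_repr]
    simp

lemma D_dirichlet (T : Ed d ≃ₗ[ℝ] Ed d) (l : Ed d) (m : Ed d → ℂ) (a : Ed d → ℂ)
    (ha : Summable (fun γ => ‖a γ‖)) (hm : ∀ t ∈ latt T l, m t = ∑' γ, a γ * ee t γ) :
    ∃ (q : ℕ → ℂ) (ω : ℕ → Ed d), (Summable fun i => ‖q i‖) ∧ IsBounded (Set.range ω) ∧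
      ∀ t ∈ latt T l, m t = dser q ω t := by
  let A : Ed d →ₗ[ℝ] Ed d := LinearMap.adjoint (T : Ed d →ₗ[ℝ] Ed d)
  let S : Ed d →ₗ[ℝ] Ed d := LinearMap.adjoint (T.symm : Ed d →ₗ[ℝ] Ed d)
  have hSA : ∀ γ, S (A γ) = γ := by
    intro γ
    refine ext_inner_left ℝ fun v => ?_
    simp only [A, S]
    rw [LinearMap.adjoint_inner_right, LinearMap.adjoint_inner_right]
    simp
  let fr : Ed d → Ed d := fun v => (WithLp.equiv 2 (Fin d → ℝ)).symm fun i => Int.fract (v i)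
  let g : Ed d → Ed d := fun γ => S (fr (A γ))
  have hbd : IsBounded (Set.range g) := by
    have h1 : IsBounded (Set.range fr) := by
      rw [isBounded_iff_forall_norm_le]
      refine ⟨Real.sqrt d, ?_⟩
      rintro _ ⟨v, rfl⟩
      rw [EuclideanSpace.norm_eq]
      apply Real.sqrt_le_sqrt
      calc _ ≤ ∑ i : Fin d, (1:ℝ) := Finset.sum_le_sum fun i _ => by
              have h1 := Int.fract_nonneg (v i)
              have h2 := (Int.fract_lt_one (v i)).le
              simp only [fr, WithLp.equiv_symm_apply, Real.norm_eq_abs, sq_abs]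
              nlinarith
        _ = d := by simp
    have h2 := (LinearMap.toContinuousLinearMap S).lipschitz.isBounded_image h1
    refine h2.subset ?_
    rintro _ ⟨γ, rfl⟩
    exact ⟨fr (A γ), ⟨_, rfl⟩, rfl⟩
  have hkey : ∀ t ∈ latt T l, ∀ γ, ee t γ = ee l (γ - g γ) * ee t (g γ) := by
    rintro t ⟨k, rfl⟩ γ
    set z : Ed d := (WithLp.equiv 2 (Fin d → ℝ)).symm fun i => (k i : ℝ) with hz
    have h1 : ⟪T z, γ - g γ⟫ = ((∑ i, k i * ⌊A γ i⌋ : ℤ) : ℝ) := by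
      have : γ - g γ = S (A γ - fr (A γ)) := by rw [map_sub, hSA]
      rw [this]
      simp only [S]
      rw [LinearMap.adjoint_inner_right]
      simp only [LinearEquiv.coe_coe, LinearEquiv.symm_apply_apply]
      rw [PiLp.inner_apply]
      push_cast
      refine Finset.sum_congr rfl fun i _ => ?_
      simp [hz, fr, Int.self_sub_fract, mul_comm]
    have h2 : ee (T z) (γ - g γ) = 1 := by
      unfold ee
      rw [h1, Complex.exp_eq_one_iff]
      refine ⟨∑ i, k i * ⌊A γ i⌋, ?_⟩
      push_cast; ring
    have h3 : ee (T z + l) γ = ee (T z + l) (γ - g γ) * ee (T z + l) (g γ) := by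
      rw [← ee_add_right, sub_add_cancel]
    rw [h3, ee_add, h2, one_mul]
  have hc : (Function.support a).Countable := by
    have := ha.countable_support
    refine this.mono fun γ hγ => ?_
    simpa using hγ
  obtain ⟨e, he⟩ := Set.countable_iff_exists_injOn.1 hc
  have hinj : Function.Injective (fun γ : Function.support a => e γ.1) :=
    fun x y hxy => Subtype.ext (he x.2 y.2 hxy)
  let q : ℕ → ℂ := Function.extend (fun γ : Function.support a => e γ.1)
    (fun γ => a γ.1 * ee l (γ.1 - g γ.1)) 0
  let ω : ℕ → Ed d := Function.extend (fun γ : Function.support a => e γ.1)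
    (fun γ => g γ.1) 0
  have hq : ∀ γ : Function.support a, q (e γ.1) = a γ.1 * ee l (γ.1 - g γ.1) :=
    fun γ => hinj.extend_apply _ _ γ
  have hω : ∀ γ : Function.support a, ω (e γ.1) = g γ.1 :=
    fun γ => hinj.extend_apply _ _ γ
  have hq0 : ∀ n, n ∉ Set.range (fun γ : Function.support a => e γ.1) → q n = 0 := by
    intro n hn
    exact Function.extend_apply' _ _ _ hn
  refine ⟨q, ω, ?_, ?_, ?_⟩
  · rw [← hinj.summable_iff (fun n hn => by rw [hq0 n hn, norm_zero])]
    refine (ha.subtype (Function.support a)).congr fun γ => ?_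
    simp [Function.comp, hq, ee_norm]
  · refine (hbd.union (isBounded_singleton (x := (0 : Ed d)))).subset ?_
    rintro _ ⟨n, rfl⟩
    by_cases hn : ∃ γ : Function.support a, e γ.1 = n
    · obtain ⟨γ, rfl⟩ := hn
      left; rw [hω]; exact ⟨_, rfl⟩
    · right
      exact Function.extend_apply' _ _ _ hn
  · intro t ht
    rw [hm t ht]
    have h1 : dser q ω t = ∑' n, q n * ee t (ω n) := rfl
    rw [h1, ← hinj.tsum_eq (f := fun n => q n * ee t (ω n)), ← tsum_subtype_eq_of_support_subset
      (f := fun γ => a γ * ee t γ) (s := Function.support a)]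
    · refine tsum_congr fun γ => ?_
      rw [hq, hω, hkey t ht γ.1, mul_assoc]
    · intro γ hγ h0
      exact hγ (by simp [h0])
    · intro n hn
      by_contra h
      exact hn (by simp [hq0 n h])

end PartD2

/-- Let `μ` be a complex Poisson measure on `ℝ^d` with Fourier transform
`μh`, let `E = ∪_n B(x_n,R_n)` with `R_n → ∞`, and assume `|μ{λ}| ≥ c > 0` and
`|λ-λ'| ≥ β > 0` for all distinct `λ, λ' ∈ E ∩ supp μ`, and `|μ̂|(B(0,r)) = O(r^d)`.
Then `supp μ` is a finite union of translated lattices `T_j ℤ^d + λ_j` with `λ_j ∈ supp μ`,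
and `μ = Σ_j Σ_{λ ∈ T_j ℤ^d + λ_j} Q_j(λ) δ_λ` with `Q_j` Dirichlet series with absolutely
summable coefficients and bounded spectrum. -/
theorem statement6 {d : ℕ} (μ μh : PPM (Ed d))
    (hμlf : μ.locFinite) (hμt : μ.temperate)
    (hμhlf : μh.locFinite) (hF : IsFT μ μh)
    (x : ℕ → Ed d) (R : ℕ → ℝ) (hR : Tendsto R atTop atTop)
    (E : Set (Ed d)) (hE : E = ⋃ n : ℕ, ball (x n) (R n))
    (c β : ℝ) (hc : 0 < c) (hβ : 0 < β)
    (hmass : ∀ l ∈ E ∩ Function.support μ.mass, c ≤ ‖μ.mass l‖)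
    (hsep : ∀ l ∈ E ∩ Function.support μ.mass, ∀ l' ∈ E ∩ Function.support μ.mass,
      l ≠ l' → β ≤ ‖l - l'‖)
    (hgrow : ∃ C : ℝ, ∀ᶠ r : ℝ in atTop,
      μh.var (ball 0 r) ≤ ENNReal.ofReal (C * r ^ d)) :
    ∃ (N : ℕ) (lam : Fin N → Ed d) (T : Fin N → (Ed d ≃ₗ[ℝ] Ed d))
      (q : Fin N → ℕ → ℂ) (ω : Fin N → ℕ → Ed d),
      (∀ j, lam j ∈ Function.support μ.mass) ∧
      Function.support μ.mass = ⋃ j : Fin N, latt (T j) (lam j) ∧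
      (∀ j, Summable fun i => ‖q j i‖) ∧
      (∀ j, IsBounded (Set.range (ω j))) ∧
      (∀ y : Ed d, μ.mass y =
        ∑ j : Fin N, Set.indicator (latt (T j) (lam j)) (dser (q j) (ω j)) y) := by
  obtain ⟨hs, hTB, ⟨L, hL, hLf⟩, a, ha, hma⟩ := partB μ μh hμlf hμt hμhlf hF x R hR E hE c β hc hβ
    hmass hsep hgrow
  obtain ⟨P, hP, hmP⟩ := C_cosets μ.mass L hL hLf
  obtain ⟨Q, hQ, hQs, hmQ⟩ := C_fullrank μ.mass hβ hs hTB P hP hmP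
  obtain ⟨F, hFf, hFl, hFd, hFm⟩ := D_family μ.mass hβ hs Q hQ hQs hmQ
  have key : ∀ S ∈ F, ∃ (lam : Ed d) (T : Ed d ≃ₗ[ℝ] Ed d) (q : ℕ → ℂ) (ω : ℕ → Ed d),
      lam ∈ S ∧ S = latt T lam ∧ (Summable fun i => ‖q i‖) ∧ IsBounded (Set.range ω) ∧
      ∀ y ∈ S, μ.mass y = dser q ω y := by
    intro S hS
    obtain ⟨l, M, hspan, rfl⟩ := hFl S hS
    have hne : ∀ h ∈ M, μ.mass (l + h) ≠ 0 := fun h hh =>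
      (hFm _).2 ⟨_, hS, by simpa using hh⟩
    obtain ⟨T, hT⟩ := D_lattice hβ M (fun h hh h0 => by
      have := hs _ (hne h hh) _ (hne 0 M.zero_mem) (by simpa using h0)
      simpa using this) hspan
    obtain ⟨q, ω, hq, hω, hd⟩ := D_dirichlet T l μ.mass a ha (fun t ht =>
      hma t ((hFm _).2 ⟨_, hS, by rw [hT] at ht; exact ht⟩))
    exact ⟨l, T, q, ω, by simp, (hT l).symm, hq, hω, fun y hy => hd y (by rw [hT]; exact hy)⟩
  choose! lam T q ω h1 h2 h3 h4 h5 using key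
  have := hFf.fintype
  let e := Fintype.equivFin F
  have hlat : ∀ j, latt (T (e.symm j).1) (lam (e.symm j).1) = (e.symm j).1 :=
    fun j => (h2 _ (e.symm j).2).symm
  refine ⟨Fintype.card F, fun j => lam (e.symm j).1, fun j => T (e.symm j).1,
    fun j => q (e.symm j).1, fun j => ω (e.symm j).1, fun j => ?_, ?_, fun j => ?_, fun j => ?_,
    fun y => ?_⟩
  · exact (hFm _).2 ⟨_, (e.symm j).2, h1 _ (e.symm j).2⟩
  · ext y
    rw [Function.mem_support, hFm, Set.mem_iUnion]
    constructor
    · rintro ⟨S, hS, hy⟩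
      refine ⟨e ⟨S, hS⟩, ?_⟩
      rw [hlat]; simpa using hy
    · rintro ⟨j, hy⟩
      rw [hlat] at hy
      exact ⟨_, (e.symm j).2, hy⟩
  · exact h3 _ (e.symm j).2
  · exact h4 _ (e.symm j).2
  · simp only [hlat]
    by_cases hy : μ.mass y = 0
    · rw [hy, Finset.sum_eq_zero]
      intro j _
      apply Set.indicator_of_notMem
      intro hj
      exact (hFm y).2 ⟨_, (e.symm j).2, hj⟩ hy
    · obtain ⟨S, hS, hyS⟩ := (hFm y).1 hy
      rw [Finset.sum_eq_single (e ⟨S, hS⟩)]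
      · simp only [Equiv.symm_apply_apply]
        rw [Set.indicator_of_mem hyS, h5 S hS y hyS]
      · intro j _ hj
        apply Set.indicator_of_notMem
        intro hjy
        apply hj
        have := hFd _ (e.symm j).2 S hS y hjy hyS
        rw [← e.apply_symm_apply j]
        congr 1
        exact Subtype.ext this
      · simp

end
end

section
/- Let A = {a_n}_{n∈ℤ} ⊂ ℝ be an almost periodic set of density D, numbered so that a_n ≤ a_{n+1} for all n ∈ ℤ. Then a_n = n/D + φ(n) for all n, where φ : ℤ → ℝ is an almost periodic function on ℤ. -/
open MeasureTheory Metric Filter Topology Complex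
open scoped ENNReal

noncomputable section

/-- The counting measure `μ_A = Σ_{n∈ℤ} δ_{a_n}` of the multiset `A = {a_n}_{n∈ℤ}`,
evaluated on a set `S` (counting with multiplicity). -/
def cntZ (a : ℤ → ℝ) (S : Set ℝ) : ℝ≥0∞ :=
  ∑' n : ℤ, S.indicator (fun _ => (1 : ℝ≥0∞)) (a n)

/-- `A = {a_n}_{n∈ℤ}` is an almost periodic set: it is locally finite and the convolution of
`μ_A = Σ_n δ_{a_n}` with every `C^∞` compactly supported function is Bohr almost periodic. -/
def IsAPSeqZ (a : ℤ → ℝ) : Prop :=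
  (∀ r : ℝ, cntZ a (ball 0 r) < ⊤) ∧
    ∀ ψ : ℝ → ℂ, ContDiff ℝ (⊤ : ℕ∞) ψ → HasCompactSupport ψ →
      IsBohrAP fun t : ℝ => ∑' n : ℤ, ψ (t - a n)

/-- `A = {a_n}_{n∈ℤ}` has density `D`: `#(A ∩ (x,x+l))/l → D` as `l → ∞`, uniformly in `x`. -/
def HasDensityZ (a : ℤ → ℝ) (D : ℝ) : Prop :=
  ∀ ε : ℝ, 0 < ε → ∃ l₀ : ℝ, ∀ l : ℝ, l₀ ≤ l → ∀ x : ℝ,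
    |(cntZ a (Set.Ioo x (x + l))).toReal / l - D| < ε

/-- `φ : ℤ → ℝ` is a (Bohr) almost periodic function on `ℤ`. -/
def IsAPZfun (φ : ℤ → ℝ) : Prop :=
  ∀ ε : ℝ, 0 < ε → ∃ L : ℤ, 0 < L ∧ ∀ m : ℤ, ∃ τ : ℤ, |τ - m| ≤ L ∧
    ∀ n : ℤ, |φ (n + τ) - φ n| < ε


lemma aux_card_le (a : ℤ → ℝ) (S : Set ℝ) (s : Finset ℤ) (h : ∀ i ∈ s, a i ∈ S)
    (hfin : cntZ a S ≠ ⊤) : (s.card : ℝ) ≤ (cntZ a S).toReal := by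
  have h1 : (s.card : ℝ≥0∞) ≤ cntZ a S := by
    have h2 := ENNReal.sum_le_tsum (f := fun n : ℤ => S.indicator (fun _ => (1 : ℝ≥0∞)) (a n)) s
    refine le_trans ?_ h2
    rw [Finset.sum_congr rfl (fun i hi => Set.indicator_of_mem (h i hi) _)]
    simp
  have h3 := ENNReal.toReal_mono hfin h1
  simpa using h3

lemma aux_le_card (a : ℤ → ℝ) (S : Set ℝ) (s : Finset ℤ) (h : ∀ i, a i ∈ S → i ∈ s) :
    (cntZ a S).toReal ≤ (s.card : ℝ) := by
  have h1 : cntZ a S ≤ (s.card : ℝ≥0∞) := by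
    unfold cntZ
    rw [tsum_eq_sum (s := s)]
    · calc _ ≤ ∑ i ∈ s, (1 : ℝ≥0∞) := by
            apply Finset.sum_le_sum
            intro i _
            exact Set.indicator_le_self' (by simp) _
        _ = _ := by simp
    · intro i hi
      exact Set.indicator_of_notMem (fun h' => hi (h i h')) _
  have h3 := ENNReal.toReal_mono (by simp) h1
  simpa using h3

lemma aux_fin (a : ℤ → ℝ) (hap : ∀ r : ℝ, cntZ a (ball 0 r) < ⊤) (x y : ℝ) :
    cntZ a (Set.Ioo x y) ≠ ⊤ := by
  refine ne_of_lt (lt_of_le_of_lt ?_ (hap (|x| + |y|)))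
  unfold cntZ
  apply ENNReal.tsum_le_tsum
  intro n
  apply Set.indicator_le_indicator_of_subset _ (fun _ => zero_le)
  intro z hz
  rw [mem_ball_zero_iff, Real.norm_eq_abs, abs_lt]
  have h1 := neg_abs_le x
  have h2 := le_abs_self y
  have h3 := abs_nonneg x
  have h4 := abs_nonneg y
  constructor <;> linarith [hz.1, hz.2]

lemma aux_dens (a : ℤ → ℝ) (D : ℝ) (hD : 0 < D) (hmono : Monotone a)
    (hap : ∀ r : ℝ, cntZ a (ball 0 r) < ⊤) (hden : HasDensityZ a D) (ε : ℝ) (hε : 0 < ε) :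
    ∃ C : ℝ, 0 < C ∧ ∀ n m : ℤ, n ≤ m →
      |((m : ℝ) - n) - D * (a m - a n)| ≤ ε * (a m - a n) + C := by
  obtain ⟨l₀, hl⟩ := hden ε hε
  set L := max l₀ 1 with hLdef
  have hL0 : l₀ ≤ L := le_max_left _ _
  have hL1 : 1 ≤ L := le_max_right _ _
  refine ⟨2 * L * (D + ε), by positivity, ?_⟩
  intro n m hnm
  have hd : 0 ≤ a m - a n := sub_nonneg.2 (hmono hnm)
  have hnm' : (n : ℝ) ≤ m := by exact_mod_cast hnm
  set d := a m - a n with hddef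
  rw [abs_le]
  constructor
  · by_cases hdl : l₀ ≤ d ∧ 0 < d
    · have h1 := hl d hdl.1 (a n)
      have h2 := aux_le_card a (Set.Ioo (a n) (a n + d)) (Finset.Ico n m) (by
        intro i hi
        rw [Finset.mem_Ico]
        constructor
        · by_contra hc
          have := hmono (le_of_lt (not_le.1 hc))
          linarith [hi.1]
        · by_contra hc
          have := hmono (not_lt.1 hc)
          linarith [hi.2])
      have h3 : ((Finset.Ico n m).card : ℝ) = m - n := by
        rw [Int.card_Ico]
        have : (((m - n).toNat : ℤ) : ℝ) = m - n := by
          rw [Int.toNat_of_nonneg (by omega)]; push_cast; ring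
        exact_mod_cast this
      rw [h3] at h2
      have h4 := (abs_lt.1 h1).1
      have h5 : (D - ε) < (cntZ a (Set.Ioo (a n) (a n + d))).toReal / d := by linarith
      rw [lt_div_iff₀ hdl.2] at h5
      nlinarith
    · have hdL : d ≤ L := by
        by_contra hc
        push Not at hc
        exact hdl ⟨by linarith, by linarith⟩
      nlinarith
  · have h1 := hl (d + 2 * L) (by linarith) (a n - L)
    have h2 := aux_card_le a (Set.Ioo (a n - L) (a n - L + (d + 2 * L))) (Finset.Ico n m) (by
        intro i hi
        rw [Finset.mem_Ico] at hi
        have h5 := hmono hi.1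
        have h6 := hmono hi.2.le
        constructor <;> linarith) (aux_fin a hap _ _)
    have h3 : ((Finset.Ico n m).card : ℝ) = m - n := by
      rw [Int.card_Ico]
      have : (((m - n).toNat : ℤ) : ℝ) = m - n := by
        rw [Int.toNat_of_nonneg (by omega)]; push_cast; ring
      exact_mod_cast this
    rw [h3] at h2
    have h4 := (abs_lt.1 h1).2
    have h5 : (cntZ a (Set.Ioo (a n - L) (a n - L + (d + 2 * L)))).toReal / (d + 2 * L) < D + ε := by
      linarith
    rw [div_lt_iff₀ (by linarith)] at h5
    nlinarith

lemma aux_N (a : ℤ → ℝ) (K C : ℝ) (hK : 0 < K) (hmono : Monotone a)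
    (hb : ∀ n m : ℤ, n ≤ m → ((m : ℝ) - n) ≤ K * (a m - a n) + C) (x : ℝ) :
    ∃ N : ℤ, ∀ n : ℤ, a n ≤ x ↔ n < N := by
  have hex : ∃ n, x < a n := by
    obtain ⟨k, hk⟩ := exists_nat_gt (K * (x - a 0) + C)
    refine ⟨k, ?_⟩
    have := hb 0 k (by positivity)
    push_cast at this
    by_contra hc
    push Not at hc
    nlinarith
  have hbd : ∃ b : ℤ, ∀ z : ℤ, x < a z → b ≤ z := by
    obtain ⟨k, hk⟩ := exists_nat_gt (K * (a 0 - x) + C)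
    refine ⟨-k, ?_⟩
    intro z hz
    by_contra hc
    push Not at hc
    have h1 := hmono hc.le
    have := hb (-k) 0 (by simp)
    push_cast at this
    nlinarith
  obtain ⟨N, hN, hmin⟩ := Int.exists_least_of_bdd hbd hex
  refine ⟨N, fun n => ?_⟩
  constructor
  · intro h
    by_contra hc
    have := hmono (not_lt.1 hc)
    linarith
  · intro h
    by_contra hc
    have := hmin n (not_le.1 hc)
    omega

lemma aux_gap (a : ℤ → ℝ) (hmono : Monotone a) (M : ℕ)
    (hb : ∀ n m : ℤ, a m - a n ≤ 1 → m - n < (M : ℤ)) (δ ε : ℝ) (hδ : 0 < δ)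
    (hε1 : ε ≤ 1) (hεδ : ε = 4 * δ * (M + 1)) (x : ℝ) :
    ∃ c, x ≤ c ∧ c ≤ x + ε ∧ ∀ n, 2 * δ ≤ |a n - c| := by
  by_contra hcon
  push Not at hcon
  have h1 : ∀ j : ℕ, ∃ n : ℤ, j ≤ M → |a n - (x + (2 * j + 1) * (2 * δ))| < 2 * δ := by
    intro j
    by_cases hj : j ≤ M
    · have hj' : (j : ℝ) ≤ M := by exact_mod_cast hj
      have hj0 : (0 : ℝ) ≤ j := by positivity
      obtain ⟨n, hn⟩ := hcon (x + (2 * j + 1) * (2 * δ)) (by nlinarith) (by nlinarith)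
      exact ⟨n, fun _ => hn⟩
    · exact ⟨0, fun h => absurd h hj⟩
  choose f hf using h1
  have h2 : ∀ j : ℕ, j ≤ M → f 0 + j ≤ f j := by
    intro j
    induction j with
    | zero => intro _; simp
    | succ j ih =>
      intro hj
      have h3 := ih (by omega)
      have h4 := abs_lt.1 (hf j (by omega))
      have h5 := abs_lt.1 (hf (j + 1) hj)
      have h6 : f j < f (j + 1) := by
        by_contra hc
        have := hmono (not_lt.1 hc)
        push_cast at h5
        nlinarith
      push_cast
      omega
  have h3 := h2 M le_rfl
  have h4 := abs_lt.1 (hf 0 (by omega))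
  have h5 := abs_lt.1 (hf M le_rfl)
  have h6 := hb (f 0) (f M) (by push_cast at h4; nlinarith)
  omega

lemma aux_int (a : ℤ → ℝ) (ψ : ℝ → ℝ) (δ : ℝ) (hδ : 0 < δ) (hc : Continuous ψ)
    (hsupp : ∀ t, δ ≤ |t| → ψ t = 0) (hint : ∫ t, ψ t = 1) (c c' : ℝ) (hcc : c ≤ c')
    (hg : ∀ n, δ ≤ |a n - c|) (hg' : ∀ n, δ ≤ |a n - c'|) (i j : ℤ) (hij : i ≤ j)
    (hi : ∀ n, a n ≤ c ↔ n < i) (hj : ∀ n, a n ≤ c' ↔ n < j) :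
    ∫ t in c..c', ∑' n : ℤ, ψ (t - a n) = (j : ℝ) - i := by
  have h1 : ∀ t ∈ Set.uIcc c c', ∑' n : ℤ, ψ (t - a n) = ∑ n ∈ Finset.Ico i j, ψ (t - a n) := by
    intro t ht
    rw [Set.uIcc_of_le hcc] at ht
    apply tsum_eq_sum
    intro n hn
    apply hsupp
    rw [Finset.mem_Ico] at hn
    by_cases hni : n < i
    · have h2 := (hi n).2 hni
      have h3 := hg n
      rw [abs_of_nonpos (by linarith)] at h3
      exact le_trans (by linarith [ht.1]) (le_abs_self _)
    · have h2 : ¬ a n ≤ c' := fun h => hn ⟨not_lt.1 hni, (hj n).1 h⟩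
      push Not at h2
      have h3 := hg' n
      rw [abs_of_nonneg (by linarith)] at h3
      exact le_trans (by linarith [ht.2]) (neg_le_abs _)
  rw [intervalIntegral.integral_congr h1, intervalIntegral.integral_finsetSum]
  · have h2 : ∀ n ∈ Finset.Ico i j, ∫ t in c..c', ψ (t - a n) = 1 := by
      intro n hn
      rw [Finset.mem_Ico] at hn
      have h3 : c < a n := by
        by_contra h; have := (hi n).1 (not_lt.1 h); omega
      have h4 := (hj n).2 hn.2
      have h5 := hg n
      have h6 := hg' n
      rw [abs_of_nonneg (by linarith)] at h5
      rw [abs_of_nonpos (by linarith)] at h6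
      rw [intervalIntegral.integral_comp_sub_right (fun t => ψ t),
        intervalIntegral.integral_eq_integral_of_support_subset, hint]
      intro t ht
      have h7 : |t| < δ := by
        by_contra h
        exact ht (hsupp t (not_lt.1 h))
      rw [abs_lt] at h7
      constructor <;> linarith [h7.1, h7.2]
    rw [Finset.sum_congr rfl h2]
    simp only [Finset.sum_const, Int.card_Ico, nsmul_eq_mul, mul_one]
    have : (((j - i).toNat : ℤ) : ℝ) = j - i := by
      rw [Int.toNat_of_nonneg (by omega)]; push_cast; ring
    exact_mod_cast this
  · intro n _
    apply Continuous.intervalIntegrable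
    fun_prop

lemma aux_psi (δ : ℝ) (hδ : 0 < δ) : ∃ ψ : ℝ → ℝ, ContDiff ℝ (⊤ : ℕ∞) ψ ∧ HasCompactSupport ψ ∧
    (∀ t, 0 ≤ ψ t) ∧ (∀ t, δ ≤ |t| → ψ t = 0) ∧ (∫ t, ψ t = 1) ∧ 0 < ψ 0 := by
  let b : ContDiffBump (0 : ℝ) := ⟨δ / 2, δ, by positivity, by linarith⟩
  refine ⟨b.normed volume, b.contDiff_normed, b.hasCompactSupport_normed,
    fun t => b.nonneg_normed t, ?_, b.integral_normed, ?_⟩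
  · intro t ht
    by_contra h
    have : t ∈ Function.support (b.normed volume) := h
    rw [b.support_normed_eq, mem_ball_zero_iff, Real.norm_eq_abs] at this
    exact absurd this (not_lt.2 ht)
  · have : (0 : ℝ) ∈ Function.support (b.normed volume) := by
      rw [b.support_normed_eq]
      exact mem_ball_self hδ
    exact lt_of_le_of_ne (b.nonneg_normed _) (Ne.symm this)

lemma aux_main (a : ℤ → ℝ) (D : ℝ) (hD : 0 < D) (hmono : Monotone a)
    (hap : IsAPSeqZ a) (hden : HasDensityZ a D) (e : ℝ) (he : 0 < e) (he1 : e ≤ 1) :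
    ∃ L : ℝ, 0 < L ∧ ∀ x : ℝ, ∃ (τ : ℝ) (p : ℤ), |τ - x| < L ∧
      ∀ n : ℤ, |a (n + p) - a n - τ| ≤ 3 * e := by
  obtain ⟨C, hC, hb⟩ := aux_dens a D hD hmono hap.1 hden 1 one_pos
  have hb' : ∀ n m : ℤ, n ≤ m → ((m : ℝ) - n) ≤ (D + 1) * (a m - a n) + C := by
    intro n m h
    have := (abs_le.1 (hb n m h)).2
    linarith
  choose N hN using aux_N a (D + 1) C (by positivity) hmono hb'
  have hNmono : ∀ x y, x ≤ y → N x ≤ N y := by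
    intro x y hxy
    by_contra hc
    push Not at hc
    have h1 := (hN x (N y)).2 hc
    have h2 := (hN y (N y)).1 (by linarith)
    omega
  obtain ⟨M, hM⟩ := exists_nat_gt (D + 1 + C)
  have hbM : ∀ n m : ℤ, a m - a n ≤ 1 → m - n < (M : ℤ) := by
    intro n m h
    by_cases hnm : n ≤ m
    · have h1 := hb' n m hnm
      have : ((m - n : ℤ) : ℝ) < ((M : ℤ) : ℝ) := by
        push_cast
        nlinarith
      exact_mod_cast this
    · omega
  set δ := e / (4 * (M + 1)) with hδdef
  have hδ : 0 < δ := by positivity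
  have heδ : e = 4 * δ * (M + 1) := by rw [hδdef]; field_simp
  choose c hc1 hc2 hc3 using fun i : ℤ => aux_gap a hmono M hbM δ e hδ he1 heδ (i * e)
  obtain ⟨ψ, hψs, hψc, hψ0, hψz, hψi, hψp⟩ := aux_psi δ hδ
  have hψcont := hψs.continuous
  obtain ⟨hgc, hAP⟩ := hap.2 (fun t => (ψ t : ℂ)) (Complex.ofRealCLM.contDiff.comp hψs)
    (hψc.comp_left (g := fun t : ℝ => (t : ℂ)) (by simp))
  set g : ℝ → ℝ := fun t => ∑' n : ℤ, ψ (t - a n) with hgdef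
  have hfg : ∀ t, ∑' n : ℤ, (ψ (t - a n) : ℂ) = ((g t : ℝ) : ℂ) := by
    intro t
    rw [hgdef]; exact (Complex.ofReal_tsum _).symm
  simp only [hfg] at hgc hAP
  have hgcont : Continuous g := by
    have := Complex.continuous_re.comp hgc
    simpa [Function.comp_def] using this
  set η := min (ψ 0) (1 / (4 * e)) with hη
  have hη0 : 0 < η := by positivity
  obtain ⟨L, hL, hτ⟩ := hAP η hη0
  refine ⟨L, hL, fun x => ?_⟩
  obtain ⟨τ, hτx, hτ⟩ := hτ x
  have hτ' : ∀ y, |g (y + τ) - g y| < η := by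
    intro y
    have := hτ y
    rw [← Complex.ofReal_sub, Complex.norm_real] at this
    exact this
  -- `g` vanishes near gaps
  have hgz : ∀ y, (∀ n, δ ≤ |a n - y|) → g y = 0 := by
    intro y hy
    have : ∀ n, ψ (y - a n) = 0 := fun n => hψz _ (by rw [abs_sub_comm]; exact hy n)
    simp [hgdef, this]
  have hsum : ∀ y, Summable fun n : ℤ => ψ (y - a n) := by
    intro y
    apply summable_of_ne_finset_zero (s := Finset.Ico (N (y - δ)) (N (y + δ)))
    intro n hn
    apply hψz
    rw [Finset.mem_Ico] at hn
    by_cases h : n < N (y - δ)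
    · have := (hN (y - δ) n).2 h
      exact le_trans (by linarith) (le_abs_self _)
    · have : ¬ a n ≤ y + δ := fun h' => hn ⟨not_lt.1 h, (hN _ n).1 h'⟩
      exact le_trans (by linarith) (neg_le_abs _)
  have hga : ∀ n, ψ 0 ≤ g (a n) := by
    intro n
    have := (hsum (a n)).le_tsum n (fun j _ => hψ0 _)
    simpa using this
  have hgap2 : ∀ i n, δ ≤ |a n - (c i + τ)| := by
    intro i n
    by_contra h
    push Not at h
    have h1 : g (a n - τ) = 0 := by
      apply hgz
      intro m
      have h2 := hc3 i m
      have h3 := abs_sub_abs_le_abs_sub (a m - c i) (a n - (c i + τ))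
      have h4 : a m - c i - (a n - (c i + τ)) = a m - (a n - τ) := by ring
      rw [h4] at h3
      linarith
    have h2 := hτ' (a n - τ)
    rw [h1, sub_add_cancel, sub_zero] at h2
    have h3 := hga n
    have h4 := le_abs_self (g (a n))
    have h5 : η ≤ ψ 0 := min_le_left _ _
    linarith
  have hgap1 : ∀ i n, δ ≤ |a n - c i| := fun i n => by linarith [hc3 i n]
  have hcc : ∀ i, c i ≤ c (i + 1) := by
    intro i
    have h1 := hc2 i
    have h2 := hc1 (i + 1)
    push_cast at h2
    linarith
  have hcc2 : ∀ i, c (i + 1) - c i ≤ 2 * e := by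
    intro i
    have h1 := hc1 i
    have h2 := hc2 (i + 1)
    push_cast at h2
    linarith
  have hstep : ∀ i, N (c (i + 1) + τ) - N (c (i + 1)) = N (c i + τ) - N (c i) := by
    intro i
    have h1 := aux_int a ψ δ hδ hψcont hψz hψi (c i) (c (i + 1)) (hcc i) (hgap1 i) (hgap1 _)
      (N (c i)) (N (c (i + 1))) (hNmono _ _ (hcc i)) (hN _) (hN _)
    have h2 := aux_int a ψ δ hδ hψcont hψz hψi (c i + τ) (c (i + 1) + τ) (by linarith [hcc i])
      (hgap2 i) (hgap2 _)
      (N (c i + τ)) (N (c (i + 1) + τ)) (hNmono _ _ (by linarith [hcc i])) (hN _) (hN _)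
    change ∫ t in _.._, g t = _ at h1 h2
    rw [← intervalIntegral.integral_comp_add_right] at h2
    have h3 : ‖∫ t in (c i)..(c (i + 1)), (g (t + τ) - g t)‖ ≤ η * |c (i + 1) - c i| := by
      apply intervalIntegral.norm_integral_le_of_norm_le_const
      intro t _
      exact (hτ' t).le
    rw [intervalIntegral.integral_sub (by apply Continuous.intervalIntegrable; fun_prop)
      (hgcont.intervalIntegrable _ _), h1, h2, abs_of_nonneg (by linarith [hcc i])] at h3
    have h4 : η * (c (i + 1) - c i) < 1 := by
      calc η * (c (i + 1) - c i) ≤ (1 / (4 * e)) * (2 * e) := by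
            apply mul_le_mul (min_le_right _ _) (hcc2 i) (by linarith [hcc i]) (by positivity)
        _ = 1 / 2 := by field_simp; norm_num
        _ < 1 := by norm_num
    have h5 := lt_of_le_of_lt h3 h4
    rw [Real.norm_eq_abs] at h5
    have h6 : |(N (c (i + 1) + τ) - N (c i + τ)) - (N (c (i + 1)) - N (c i))| < 1 := by
      exact_mod_cast h5
    rw [Int.abs_lt_one_iff] at h6
    omega
  obtain ⟨p, hp⟩ : ∃ p, ∀ i, N (c i + τ) - N (c i) = p := by
    refine ⟨N (c 0 + τ) - N (c 0), fun i => ?_⟩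
    induction i using Int.induction_on with
    | zero => rfl
    | succ i ih => rw [hstep, ih]
    | pred i ih =>
      have := hstep (-(i : ℤ) - 1)
      rw [sub_add_cancel] at this
      rw [← this, ih]
  refine ⟨τ, p, by rwa [Real.dist_eq] at hτx, fun n => ?_⟩
  set i := ⌊a n / e⌋ with hi
  have hi1 : (i : ℝ) * e ≤ a n := by
    have := Int.floor_le (a n / e)
    rwa [le_div_iff₀ he] at this
  have hi2 : a n < ((i : ℝ) + 1) * e := by
    have := Int.lt_floor_add_one (a n / e)
    rwa [div_lt_iff₀ he] at this
  have k1 := hc2 (i - 1)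
  have k2 := hc1 (i + 1)
  have k1' := hc1 (i - 1)
  have k2' := hc2 (i + 1)
  push_cast at k1 k2 k1' k2'
  have k3 : N (c (i - 1)) ≤ n := by
    by_contra h
    have h1 := (hN _ n).2 (not_le.1 h)
    have h2 := hc3 (i - 1) n
    rw [abs_of_nonpos (by linarith)] at h2
    nlinarith
  have k4 : n < N (c (i + 1)) := (hN _ n).1 (by linarith)
  have k5 := hp (i - 1)
  have k6 := hp (i + 1)
  have k7 : a (n + p) ≤ c (i + 1) + τ := (hN _ _).2 (by omega)
  have k8 : c (i - 1) + τ < a (n + p) := by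
    by_contra h
    have := (hN _ _).1 (not_lt.1 h)
    omega
  rw [abs_le]
  constructor <;> linarith

lemma aux_shift (a : ℤ → ℝ) (D : ℝ) (hD : 0 < D) (hmono : Monotone a)
    (hap : IsAPSeqZ a) (hden : HasDensityZ a D) (e : ℝ) (he : 0 < e) (τ : ℝ) (p : ℤ)
    (h : ∀ n : ℤ, |a (n + p) - a n - τ| ≤ e) : |(p : ℝ) / D - τ| ≤ 2 * e := by
  have hT : 0 < |τ| + e := by positivity
  obtain ⟨C, hC, hb⟩ := aux_dens a D hD hmono hap.1 hden (D * e / (2 * (|τ| + e))) (by positivity)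
  have hs : ∀ k : ℕ, |a (k * p) - a 0 - k * τ| ≤ k * e := by
    intro k
    induction k with
    | zero => simp
    | succ k ih =>
      have h1 := h (k * p)
      have h2 : ((k + 1 : ℕ) : ℤ) * p = k * p + p := by push_cast; ring
      rw [h2]
      push_cast
      rw [abs_le] at *
      constructor <;> linarith
  have hb2 : ∀ m : ℤ, |(m : ℝ) - D * (a m - a 0)| ≤
      D * e / (2 * (|τ| + e)) * |a m - a 0| + C := by
    intro m
    rcases le_total 0 m with hm | hm
    · have := hb 0 m hm
      have h3 := hmono hm
      rw [abs_of_nonneg (sub_nonneg.2 h3)]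
      simpa using this
    · have := hb m 0 hm
      have h3 := hmono hm
      rw [abs_sub_comm (a m), abs_of_nonneg (sub_nonneg.2 h3), abs_sub_comm]
      convert this using 2
      push_cast; ring
  obtain ⟨k, hk⟩ := exists_nat_gt (2 * C / (D * e))
  have hk0 : (0 : ℝ) < k := lt_trans (by positivity) hk
  rw [div_lt_iff₀ (by positivity)] at hk
  have h1 := hs k
  have h2 := hb2 (k * p)
  have h3 : |a (k * p) - a 0| ≤ k * (|τ| + e) := by
    have h4 := abs_sub_abs_le_abs_sub (a (k * p) - a 0) (k * τ)
    rw [abs_mul, abs_of_pos hk0] at h4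
    linarith
  have h4 : D * e / (2 * (|τ| + e)) * |a (k * p) - a 0| ≤ k * (D * e) / 2 := by
    calc _ ≤ D * e / (2 * (|τ| + e)) * (k * (|τ| + e)) := by gcongr
      _ = _ := by field_simp
  have h5 : |(k : ℝ) * (p - D * τ)| ≤ k * (2 * e * D) := by
    push_cast at h2
    rw [abs_le] at h1 h2 ⊢
    constructor <;> nlinarith
  rw [abs_mul, abs_of_pos hk0] at h5
  have h6 := le_of_mul_le_mul_left h5 hk0
  have h7 : (p : ℝ) / D - τ = (p - D * τ) / D := by field_simp
  rw [h7, abs_div, abs_of_pos hD, div_le_iff₀ hD]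
  exact h6

/-- Let `A = {a_n}_{n∈ℤ} ⊂ ℝ` be an almost periodic set of density `D`,
numbered so that `a_n ≤ a_{n+1}`. Then `a_n = n/D + φ(n)` for an almost periodic function
`φ : ℤ → ℝ`. -/
theorem statement10 (a : ℤ → ℝ) (D : ℝ) (hD : 0 < D) (hmono : Monotone a)
    (hap : IsAPSeqZ a) (hden : HasDensityZ a D) :
    ∃ φ : ℤ → ℝ, IsAPZfun φ ∧ ∀ n : ℤ, a n = (n : ℝ) / D + φ n := by
  refine ⟨fun n => a n - (n : ℝ) / D, ?_, fun n => by ring⟩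
  intro ε hε
  set e := min 1 (ε / 10) with hedef
  have he : 0 < e := by positivity
  have he1 : e ≤ 1 := min_le_left _ _
  have he2 : e ≤ ε / 10 := min_le_right _ _
  obtain ⟨L, hL, hmain⟩ := aux_main a D hD hmono hap hden e he he1
  refine ⟨⌈D * (6 * e + L)⌉, Int.ceil_pos.2 (by positivity), fun m => ?_⟩
  obtain ⟨τ, p, hτ, hp⟩ := hmain ((m : ℝ) / D)
  have hs := aux_shift a D hD hmono hap hden (3 * e) (by positivity) τ p hp
  refine ⟨p, ?_, fun n => ?_⟩
  · have h1 : |(p : ℝ) - m| ≤ D * (6 * e + L) := by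
      have h2 : (p : ℝ) - m = D * ((p / D - τ) + (τ - m / D)) := by field_simp; ring
      rw [h2, abs_mul, abs_of_pos hD]
      have h3 := abs_add_le ((p : ℝ) / D - τ) (τ - m / D)
      gcongr
      linarith
    have h4 := h1.trans (Int.le_ceil _)
    exact_mod_cast h4
  · have h1 := hp n
    have h2 : a (n + p) - ((n + p : ℤ) : ℝ) / D - (a n - (n : ℝ) / D)
        = (a (n + p) - a n - τ) - ((p : ℝ) / D - τ) := by
      push_cast; ring
    have h3 := abs_sub (a (n + p) - a n - τ) ((p : ℝ) / D - τ)
    change |a (n + p) - ((n + p : ℤ) : ℝ) / D - (a n - (n : ℝ) / D)| < ε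
    rw [h2]
    rw [abs_le] at h1 hs
    rw [abs_lt]
    constructor <;> linarith

end
end

section
/- Let k > 0 and let φ : ℤ → ℝ be an almost periodic function on ℤ. Then the multiset A = {k n + φ(n) : n ∈ ℤ} is an almost periodic set of density 1/k. -/
open MeasureTheory Metric Filter Topology Complex
open scoped ENNReal

noncomputable section

theorem aux_bdd (φ : ℤ → ℝ) (hφ : IsAPZfun φ) : ∃ M : ℝ, 0 < M ∧ ∀ n, |φ n| < M := by
  obtain ⟨L, hL, h⟩ := hφ 1 one_pos
  refine ⟨(∑ j ∈ Finset.Icc (-L) L, |φ j|) + 1, by positivity, fun n => ?_⟩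
  obtain ⟨τ, h1, h2⟩ := h (-n)
  have h3 := h2 n
  have h4 : |φ (n + τ)| ≤ ∑ j ∈ Finset.Icc (-L) L, |φ j| := by
    apply Finset.single_le_sum (f := fun j => |φ j|) (fun i _ => abs_nonneg _)
    rw [abs_le] at h1
    rw [Finset.mem_Icc]
    constructor <;> linarith
  have h5 := abs_sub_abs_le_abs_sub (φ n) (φ (n + τ))
  rw [abs_sub_comm] at h5
  linarith

theorem aux_card_le_s11 (u v : ℝ) (h : u ≤ v) :
    ((Finset.Icc ⌈u⌉ ⌊v⌋).card : ℝ) ≤ v - u + 1 := by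
  rw [Int.card_Icc]
  have h1 := Int.le_ceil u
  have h2 := Int.floor_le v
  rcases le_total 0 (⌊v⌋ + 1 - ⌈u⌉) with h3 | h3
  · have h4 : (((⌊v⌋ + 1 - ⌈u⌉).toNat : ℤ) : ℝ) = ((⌊v⌋ + 1 - ⌈u⌉ : ℤ) : ℝ) := by
      rw [Int.toNat_of_nonneg h3]
    rw [Int.cast_natCast] at h4
    rw [h4]
    push_cast
    linarith
  · rw [Int.toNat_of_nonpos h3]
    push_cast
    linarith

theorem aux_le_card_s11 (u v : ℝ) :
    v - u - 1 ≤ ((Finset.Icc ⌈u⌉ ⌊v⌋).card : ℝ) := by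
  rw [Int.card_Icc]
  have h1 := Int.ceil_lt_add_one u
  have h2 := Int.lt_floor_add_one v
  have h4 : ((⌊v⌋ + 1 - ⌈u⌉ : ℤ) : ℝ) ≤ (((⌊v⌋ + 1 - ⌈u⌉).toNat : ℤ) : ℝ) := by
    exact_mod_cast Int.self_le_toNat _
  rw [Int.cast_natCast] at h4
  push_cast at h4
  linarith

theorem aux_mem (k : ℝ) (hk : 0 < k) (u v : ℝ) (n : ℤ) :
    n ∈ Finset.Icc ⌈u / k⌉ ⌊v / k⌋ ↔ u ≤ k * n ∧ k * n ≤ v := by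
  rw [Finset.mem_Icc, Int.ceil_le, Int.le_floor, div_le_iff₀ hk, le_div_iff₀ hk, mul_comm k]

open Classical in
theorem aux_cnt (k : ℝ) (hk : 0 < k) (φ : ℤ → ℝ) (M : ℝ) (hM : ∀ n, |φ n| < M) (x y : ℝ) :
    cntZ (fun n : ℤ => k * n + φ n) (Set.Ioo x y) =
      (((Finset.Icc ⌈(x - M) / k⌉ ⌊(y + M) / k⌋).filter
        (fun n : ℤ => k * n + φ n ∈ Set.Ioo x y)).card : ℝ≥0∞) := by
  unfold cntZ
  rw [tsum_eq_sum (s := (Finset.Icc ⌈(x - M) / k⌉ ⌊(y + M) / k⌋))]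
  · simp only [Set.indicator_apply]
    rw [Finset.sum_ite]
    simp
  · intro n hn
    rw [aux_mem k hk] at hn
    apply Set.indicator_of_notMem
    rintro ⟨h1, h2⟩
    have := abs_lt.1 (hM n)
    apply hn
    constructor <;> linarith

theorem aux_key (k : ℝ) (hk : 0 < k) (M : ℝ) (hM : 0 < M) (ψ : ℝ → ℂ) (hc : Continuous ψ)
    (hs : HasCompactSupport ψ) (ε : ℝ) (hε : 0 < ε) : ∃ δ : ℝ, 0 < δ ∧ ∀ (t : ℝ) (b c : ℤ → ℝ),
      (∀ n, |b n - (t - k * n)| ≤ M) → (∀ n, |c n - (t - k * n)| ≤ M) →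
      (∀ n, |b n - c n| < δ) → ‖(∑' n, ψ (b n)) - ∑' n, ψ (c n)‖ < ε := by
  obtain ⟨R, hR0, hR⟩ : ∃ R : ℝ, 0 < R ∧ ∀ x, R < |x| → ψ x = 0 := by
    obtain ⟨R, hR0, hR⟩ := hs.exists_pos_le_norm
    exact ⟨R, hR0, fun x hx => hR x hx.le⟩
  set C : ℝ := 2 * (M + R) / k + 1 with hC
  have hC0 : 0 < C := by positivity
  have hu := hs.uniformContinuous_of_continuous hc
  rw [Metric.uniformContinuous_iff] at hu
  obtain ⟨δ, hδ, h⟩ := hu (ε / (2 * C)) (by positivity)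
  refine ⟨δ, hδ, fun t b c hb hc' hbc => ?_⟩
  have key : ∀ b : ℤ → ℝ, (∀ n, |b n - (t - k * n)| ≤ M) →
      ∑' n, ψ (b n) = ∑ n ∈ Finset.Icc ⌈(t - (M + R)) / k⌉ ⌊(t + (M + R)) / k⌋, ψ (b n) := by
    intro b hb
    apply tsum_eq_sum
    intro n hn
    rw [aux_mem k hk] at hn
    apply hR
    by_contra hlt
    have h1 := abs_le.1 (not_lt.1 hlt)
    have h2 := abs_le.1 (hb n)
    apply hn
    constructor <;> linarith
  rw [key b hb, key c hc', ← Finset.sum_sub_distrib]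
  have hcard := aux_card_le_s11 ((t - (M + R)) / k) ((t + (M + R)) / k) (by gcongr; linarith)
  have e : (t + (M + R)) / k - (t - (M + R)) / k + 1 = C := by rw [hC]; ring
  rw [e] at hcard
  calc _ ≤ ∑ n ∈ Finset.Icc ⌈(t - (M + R)) / k⌉ ⌊(t + (M + R)) / k⌋, ε / (2 * C) := by
        apply norm_sum_le_of_le
        intro n _
        rw [← dist_eq_norm]
        exact (h (by rw [Real.dist_eq]; exact hbc n)).le
    _ = ((Finset.Icc ⌈(t - (M + R)) / k⌉ ⌊(t + (M + R)) / k⌋).card : ℝ) * (ε / (2 * C)) := by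
        rw [Finset.sum_const, nsmul_eq_mul]
    _ ≤ C * (ε / (2 * C)) := by gcongr
    _ = ε / 2 := by field_simp
    _ < ε := by linarith

/-- Let `k > 0` and let `φ : ℤ → ℝ` be an almost periodic function on `ℤ`.
Then the multiset `A = {k n + φ(n) : n ∈ ℤ}` is an almost periodic set of density `1/k`. -/
theorem statement11 (k : ℝ) (hk : 0 < k) (φ : ℤ → ℝ) (hφ : IsAPZfun φ) :
    IsAPSeqZ (fun n : ℤ => k * n + φ n) ∧
      HasDensityZ (fun n : ℤ => k * n + φ n) (1 / k) := by
  classical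
  obtain ⟨M, hM0, hM⟩ := aux_bdd φ hφ
  refine ⟨⟨fun r => ?_, fun ψ hψ hs => ⟨?_, fun ε hε => ?_⟩⟩, fun ε hε => ?_⟩
  · rw [Real.ball_eq_Ioo, aux_cnt k hk φ M hM]
    exact ENNReal.natCast_lt_top _
  · rw [Metric.continuous_iff]
    intro t ε hε
    obtain ⟨δ, hδ, h⟩ := aux_key k hk (M + 1) (by linarith) ψ hψ.continuous hs ε hε
    refine ⟨min δ 1, by positivity, fun s hst => ?_⟩
    rw [Real.dist_eq, lt_min_iff] at hst
    rw [dist_eq_norm]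
    apply h t
    · intro n
      have h1 := abs_lt.1 (hM n)
      have h2 := abs_lt.1 hst.2
      rw [abs_le]
      constructor <;> linarith
    · intro n
      have h1 := abs_lt.1 (hM n)
      rw [abs_le]
      constructor <;> linarith
    · intro n
      have h1 := abs_lt.1 hst.1
      rw [abs_lt]
      constructor <;> linarith
  · obtain ⟨δ, hδ, h⟩ := aux_key k hk M hM0 ψ hψ.continuous hs ε hε
    obtain ⟨L, hL, hap⟩ := hφ δ hδ
    have hL' : (0 : ℝ) < L := by exact_mod_cast hL
    refine ⟨k * (L + 1), by positivity, fun x => ?_⟩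
    obtain ⟨τ, h1, h2⟩ := hap (round (x / k))
    refine ⟨k * τ, ?_, fun y => ?_⟩
    · have h3 : |(τ : ℝ) - round (x / k)| ≤ L := by exact_mod_cast h1
      have h4 := abs_sub_round (x / k)
      have h5 : |(τ : ℝ) - x / k| < L + 1 := by
        have h3 := abs_le.1 h3
        have h4 := abs_le.1 h4
        rw [abs_lt]
        constructor <;> linarith
      have e : k * (τ : ℝ) - x = k * (τ - x / k) := by field_simp
      rw [Real.dist_eq, e, abs_mul, abs_of_pos hk]
      gcongr
    · have e : ∑' n : ℤ, ψ (y + k * τ - (k * n + φ n)) = ∑' n : ℤ, ψ (y - k * n - φ (n + τ)) := by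
        rw [← (Equiv.addRight τ).tsum_eq]
        apply tsum_congr
        intro n
        congr 1
        simp only [Equiv.coe_addRight]
        push_cast
        ring
      beta_reduce
      rw [e]
      apply h y
      · intro n
        have h1 := abs_lt.1 (hM (n + τ))
        rw [abs_le]
        constructor <;> linarith
      · intro n
        have h1 := abs_lt.1 (hM n)
        rw [abs_le]
        constructor <;> linarith
      · intro n
        have h3 := abs_lt.1 (h2 n)
        rw [abs_lt]
        constructor <;> linarith
  · refine ⟨max 1 ((2 * M / k + 2) / ε), fun l hl x => ?_⟩
    have hl1 : 1 ≤ l := (le_max_left _ _).trans hl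
    have hl2 := (le_max_right _ _).trans hl
    have hl0 : 0 < l := by linarith
    rw [div_le_iff₀ hε] at hl2
    rw [aux_cnt k hk φ M hM, ENNReal.toReal_natCast]
    set F := (Finset.Icc ⌈(x - M) / k⌉ ⌊(x + l + M) / k⌋).filter
        (fun n : ℤ => k * n + φ n ∈ Set.Ioo x (x + l)) with hF
    have up : (F.card : ℝ) ≤ l / k + 2 * M / k + 1 := by
      have h1 : (F.card : ℝ) ≤ (Finset.Icc ⌈(x - M) / k⌉ ⌊(x + l + M) / k⌋).card := by
        exact_mod_cast Finset.card_filter_le _ _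
      have h2 := aux_card_le_s11 ((x - M) / k) ((x + l + M) / k) (by gcongr; linarith)
      have e : (x + l + M) / k - (x - M) / k + 1 = l / k + 2 * M / k + 1 := by ring
      linarith
    have lo : l / k - 2 * M / k - 1 ≤ (F.card : ℝ) := by
      have h1 : ((Finset.Icc ⌈(x + M) / k⌉ ⌊(x + l - M) / k⌋).card : ℝ) ≤ F.card := by
        have : (Finset.Icc ⌈(x + M) / k⌉ ⌊(x + l - M) / k⌋) ⊆ F := by
          intro n hn
          rw [aux_mem k hk] at hn
          have h1 := abs_lt.1 (hM n)
          rw [hF, Finset.mem_filter, aux_mem k hk, Set.mem_Ioo]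
          refine ⟨⟨?_, ?_⟩, ?_, ?_⟩ <;> linarith [hn.1, hn.2]
        exact_mod_cast Finset.card_le_card this
      have h2 := aux_le_card_s11 ((x + M) / k) ((x + l - M) / k)
      have e : (x + l - M) / k - (x + M) / k - 1 = l / k - 2 * M / k - 1 := by ring
      linarith
    have e : (F.card : ℝ) / l - 1 / k = (F.card - l / k) / l := by field_simp
    rw [e, abs_div, abs_of_pos hl0, div_lt_iff₀ hl0, abs_lt]
    constructor <;> linarith

end
end
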